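/- Let α ∈ [0,d] and p ∈ [1, 2d/(2d−α)]. There exists a compact set E ⊆ ℝ^d of Hausdorff dimension α such that p_res(E) = p. -/

import Mathlib

open MeasureTheory
open scoped FourierTransform ENNReal NNReal

/-- `p_res(E)`: the supremum of the exponents `p ∈ [1,2]` for which there are a Borel measure
`μ` with `μ(E) > 0`, an exponent `q ∈ [1,∞]` and a finite constant `C` such that
`‖f̂‖_{L^q(μ)} ≤ C ‖f‖_{L^p(ℝ^d)}` for every Schwartz function `f`. -/
noncomputable def pres {d : ℕ} (E : Set (EuclideanSpace ℝ (Fin d))) : ℝ :=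
  sSup {p : ℝ | p ∈ Set.Icc (1 : ℝ) 2 ∧
    ∃ (μ : Measure (EuclideanSpace ℝ (Fin d))) (q : ℝ≥0∞) (C : ℝ≥0),
      0 < μ E ∧ 1 ≤ q ∧
      ∀ f : SchwartzMap (EuclideanSpace ℝ (Fin d)) ℂ,
        eLpNorm (𝓕 ⇑f) q μ ≤ (C : ℝ≥0∞) * eLpNorm (⇑f) (ENNReal.ofReal p) volume}

namespace PR

/-- Choosing a finite sequence by the method of conditional expectations. -/
lemma exists_seq {P H : Type*} [Fintype P] [Fintype H] (w : P → ℝ) (hw : ∀ p, 0 ≤ w p)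
    (hw1 : ∑ p, w p = 1) (φ : H → P → ℝ) (hφ : ∀ h p, 0 ≤ φ h p) (c : H → ℝ)
    (hc : ∀ h, ∑ p, w p * φ h p ≤ c h) (M : ℕ) (a : H → ℝ) (ha : ∀ h, 0 ≤ a h) :
    ∃ s : Fin M → P, ∑ h, a h * ∏ i, φ h (s i) ≤ ∑ h, a h * c h ^ M := by
  have hc0 : ∀ h, 0 ≤ c h := fun h =>
    (Finset.sum_nonneg fun p _ => mul_nonneg (hw p) (hφ h p)).trans (hc h)
  induction M generalizing a with
  | zero => exact ⟨Fin.elim0, by simp⟩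
  | succ M ih =>
    obtain ⟨p, hp⟩ : ∃ p, ∑ h, a h * φ h p * c h ^ M ≤ ∑ h, a h * c h ^ (M + 1) := by
      by_contra hcon
      push Not at hcon
      have h1 : ∑ p, w p * ∑ h, a h * φ h p * c h ^ M ≤ ∑ h, a h * c h ^ (M + 1) := by
        calc ∑ p, w p * ∑ h, a h * φ h p * c h ^ M
            = ∑ h, a h * c h ^ M * ∑ p, w p * φ h p := by
              simp_rw [Finset.mul_sum]
              rw [Finset.sum_comm]
              refine Finset.sum_congr rfl fun h _ => Finset.sum_congr rfl fun p _ => by ring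
          _ ≤ ∑ h, a h * c h ^ M * c h := by
              refine Finset.sum_le_sum fun h _ => mul_le_mul_of_nonneg_left (hc h) ?_
              exact mul_nonneg (ha h) (pow_nonneg (hc0 h) _)
          _ = _ := Finset.sum_congr rfl fun h _ => by ring
      have h2 : ∑ p, w p * (∑ h, a h * c h ^ (M + 1)) < ∑ p, w p * ∑ h, a h * φ h p * c h ^ M := by
        obtain ⟨p, hp⟩ : ∃ p, 0 < w p := by
          by_contra hh
          push Not at hh
          have : ∑ p, w p ≤ 0 := Finset.sum_nonpos fun p _ => hh p
          linarith
        refine Finset.sum_lt_sum (fun p _ => mul_le_mul_of_nonneg_left (hcon p).le (hw p))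
          ⟨p, Finset.mem_univ _, mul_lt_mul_of_pos_left (hcon p) hp⟩
      rw [← Finset.sum_mul, hw1, one_mul] at h2
      linarith
    obtain ⟨s, hs⟩ := ih (fun h => a h * φ h p) (fun h => mul_nonneg (ha h) (hφ h p))
    refine ⟨Fin.cons p s, ?_⟩
    refine le_trans (le_of_eq ?_) (hs.trans hp)
    refine Finset.sum_congr rfl fun h _ => ?_
    rw [Fin.prod_univ_succ]
    simp [mul_assoc]

/-- Four directions in the plane. -/
def dir : Fin 4 → ℂ := ![1, -1, Complex.I, -Complex.I]

lemma norm_dir (k : Fin 4) : ‖dir k‖ = 1 := by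
  fin_cases k <;> simp [dir]

lemma norm_le_of_dir (z : ℂ) (B : ℝ) (h : ∀ k, (dir k * z).re ≤ B) : ‖z‖ ≤ 2 * B := by
  have h0 := h 0
  have h1 := h 1
  have h2 := h 2
  have h3 := h 3
  simp [dir] at h0 h1 h2 h3
  have := Complex.norm_le_abs_re_add_abs_im z
  have a1 : |z.re| ≤ B := abs_le.2 ⟨by linarith, by linarith⟩
  have a2 : |z.im| ≤ B := abs_le.2 ⟨by linarith, by linarith⟩
  linarith

/-- Joint sampling lemma. -/
lemma exists_sample {P X J : Type*} [Fintype P] [Fintype X] [Fintype J]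
    (w : P → ℝ) (hw : ∀ p, 0 ≤ w p) (hw1 : ∑ p, w p = 1)
    (F : X → P → ℂ) (hF : ∀ x p, ‖F x p‖ ≤ 1) (D : J → Set P) (b : J → ℝ) (hb : ∀ j, 0 ≤ b j)
    (hb1 : ∑ j, Real.exp (- b j) ≤ 1 / 2) (M : ℕ) (θ ℓ : ℝ) (hθ : 0 < θ) (hθ1 : θ ≤ 1)
    (hℓ : 8 * (Fintype.card X : ℝ) ≤ Real.exp ℓ) (hM : 64 * ℓ ≤ M * θ ^ 2) :
    ∃ s : Fin M → P,
      (∀ x, ‖(∑ i, F x (s i)) - M * ∑ p, (w p : ℂ) * F x p‖ ≤ M * θ) ∧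
      ∀ j, (∑ i, (D j).indicator (fun _ => (1 : ℝ)) (s i)) ≤
        2 * M * (∑ p, w p * (D j).indicator (fun _ => (1 : ℝ)) p) + b j := by
  classical
  set E : X → ℂ := fun x => ∑ p, (w p : ℂ) * F x p with hE
  have hEn : ∀ x, ‖E x‖ ≤ 1 := by
    intro x
    calc ‖E x‖ ≤ ∑ p, ‖(w p : ℂ) * F x p‖ := norm_sum_le _ _
      _ ≤ ∑ p, w p * 1 := by
        refine Finset.sum_le_sum fun p _ => ?_
        rw [norm_mul, Complex.norm_real, Real.norm_of_nonneg (hw p)]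
        exact mul_le_mul_of_nonneg_left (hF x p) (hw p)
      _ = 1 := by simpa using hw1
  set q : J → ℝ := fun j => ∑ p, w p * (D j).indicator (fun _ => (1 : ℝ)) p with hq
  set lam : ℝ := θ / 16 with hlam
  have hlam0 : 0 < lam := by positivity
  let y : X → Fin 4 → P → ℝ := fun x k p => (dir k * (F x p - E x)).re
  have hy : ∀ x k p, |y x k p| ≤ 2 := by
    intro x k p
    calc |y x k p| ≤ ‖dir k * (F x p - E x)‖ := Complex.abs_re_le_norm _
      _ = ‖F x p - E x‖ := by rw [norm_mul, norm_dir, one_mul]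
      _ ≤ ‖F x p‖ + ‖E x‖ := norm_sub_le _ _
      _ ≤ 2 := by linarith [hF x p, hEn x]
  have hy0 : ∀ x k, ∑ p, w p * y x k p = 0 := by
    intro x k
    have : ∑ p, w p * y x k p = (dir k * (∑ p, (w p : ℂ) * (F x p - E x))).re := by
      rw [Finset.mul_sum, Complex.re_sum]
      refine Finset.sum_congr rfl fun p _ => ?_
      rw [mul_left_comm, Complex.re_ofReal_mul]
    rw [this]
    have h2 : ∑ p, (w p : ℂ) * (F x p - E x) = 0 := by
      simp_rw [mul_sub, Finset.sum_sub_distrib, ← Finset.sum_mul, ← Complex.ofReal_sum, hw1]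
      simp [hE]
    simp [h2]
  let φ : (X × Fin 4) ⊕ J → P → ℝ := fun h p => match h with
    | Sum.inl (x, k) => Real.exp (lam * y x k p)
    | Sum.inr j => Real.exp ((D j).indicator (fun _ => (1 : ℝ)) p)
  let c : (X × Fin 4) ⊕ J → ℝ := fun h => match h with
    | Sum.inl _ => Real.exp (4 * lam ^ 2)
    | Sum.inr j => Real.exp (2 * q j)
  let a : (X × Fin 4) ⊕ J → ℝ := fun h => match h with
    | Sum.inl _ => Real.exp (-(4 * lam ^ 2 * M) - ℓ)
    | Sum.inr j => Real.exp (-(2 * q j * M) - b j)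
  obtain ⟨s, hs⟩ := exists_seq w hw hw1 φ (by rintro (⟨x, k⟩ | j) p <;> exact (Real.exp_pos _).le) c
    (by
      rintro (⟨x, k⟩ | j)
      · show ∑ p, w p * Real.exp (lam * y x k p) ≤ Real.exp (4 * lam ^ 2)
        calc ∑ p, w p * Real.exp (lam * y x k p)
            ≤ ∑ p, (w p + lam * (w p * y x k p) + w p * (4 * lam ^ 2)) := by
              refine Finset.sum_le_sum fun p _ => ?_
              have hab := hy x k p
              have h1 : |lam * y x k p| ≤ 1 := by
                rw [abs_mul, abs_of_pos hlam0]
                nlinarith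
              have h2 := (abs_le.1 (Real.abs_exp_sub_one_sub_id_le h1)).2
              have h3 : (lam * y x k p) ^ 2 ≤ 4 * lam ^ 2 := by
                have : (y x k p) ^ 2 ≤ 4 := by
                  rw [← sq_abs]; nlinarith [abs_nonneg (y x k p)]
                rw [mul_pow]; nlinarith [sq_nonneg lam]
              have h4 : Real.exp (lam * y x k p) ≤ 1 + lam * y x k p + 4 * lam ^ 2 := by linarith
              have := mul_le_mul_of_nonneg_left h4 (hw p)
              linarith
          _ = 1 + 4 * lam ^ 2 := by
              rw [Finset.sum_add_distrib, Finset.sum_add_distrib, ← Finset.mul_sum, hy0,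
                ← Finset.sum_mul, hw1]
              ring
          _ ≤ _ := by linarith [Real.add_one_le_exp (4 * lam ^ 2)]
      · show ∑ p, w p * Real.exp ((D j).indicator (fun _ => (1 : ℝ)) p) ≤ Real.exp (2 * q j)
        calc ∑ p, w p * Real.exp ((D j).indicator (fun _ => (1 : ℝ)) p)
            ≤ ∑ p, (w p + 2 * (w p * (D j).indicator (fun _ => (1 : ℝ)) p)) := by
              refine Finset.sum_le_sum fun p _ => ?_
              have h4 : Real.exp ((D j).indicator (fun _ => (1 : ℝ)) p) ≤
                  1 + 2 * (D j).indicator (fun _ => (1 : ℝ)) p := by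
                by_cases hp : p ∈ D j
                · simp only [Set.indicator_of_mem hp]
                  linarith [Real.exp_one_lt_d9]
                · simp [Set.indicator_of_notMem hp]
              have := mul_le_mul_of_nonneg_left h4 (hw p)
              linarith
          _ = 1 + 2 * q j := by
              rw [Finset.sum_add_distrib, ← Finset.mul_sum, hw1]
          _ ≤ _ := by linarith [Real.add_one_le_exp (2 * q j)])
    M a (by rintro (⟨x, k⟩ | j) <;> exact (Real.exp_pos _).le)
  have htot : ∑ h, a h * c h ^ M ≤ 1 := by
    rw [Fintype.sum_sum_type]
    have h1 : ∑ xk : X × Fin 4, a (Sum.inl xk) * c (Sum.inl xk) ^ M ≤ 1 / 2 := by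
      have : ∀ xk : X × Fin 4, a (Sum.inl xk) * c (Sum.inl xk) ^ M = Real.exp (-ℓ) := by
        intro xk
        show Real.exp (-(4 * lam ^ 2 * M) - ℓ) * Real.exp (4 * lam ^ 2) ^ M = _
        rw [← Real.exp_nat_mul, ← Real.exp_add]
        congr 1; ring
      simp only [this, Finset.sum_const, Finset.card_univ, Fintype.card_prod, Fintype.card_fin,
        nsmul_eq_mul]
      push_cast
      rw [Real.exp_neg]
      have he := Real.exp_pos ℓ
      rw [← div_eq_mul_inv, div_le_iff₀ he]
      linarith
    have h2 : ∑ j : J, a (Sum.inr j) * c (Sum.inr j) ^ M ≤ 1 / 2 := by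
      refine le_trans (le_of_eq ?_) hb1
      refine Finset.sum_congr rfl fun j _ => ?_
      show Real.exp (-(2 * q j * M) - b j) * Real.exp (2 * q j) ^ M = _
      rw [← Real.exp_nat_mul, ← Real.exp_add]
      congr 1; ring
    linarith
  have hnn : ∀ h, 0 ≤ a h * ∏ i, φ h (s i) := by
    rintro (⟨x, k⟩ | j)
    · exact mul_nonneg (Real.exp_pos _).le (Finset.prod_nonneg fun i _ => (Real.exp_pos _).le)
    · exact mul_nonneg (Real.exp_pos _).le (Finset.prod_nonneg fun i _ => (Real.exp_pos _).le)
  have hone : ∀ h, a h * ∏ i, φ h (s i) ≤ 1 := fun h =>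
    (Finset.single_le_sum (fun h _ => hnn h) (Finset.mem_univ h)).trans (hs.trans htot)
  refine ⟨s, fun x => ?_, fun j => ?_⟩
  · have hdir : ∀ k, (dir k * ((∑ i, F x (s i)) - M * E x)).re ≤ 4 * lam * M + ℓ / lam := by
      intro k
      have h1 := hone (Sum.inl (x, k))
      have h2 : a (Sum.inl (x, k)) * ∏ i, φ (Sum.inl (x, k)) (s i) =
          Real.exp (-(4 * lam ^ 2 * M) - ℓ + lam * ∑ i, y x k (s i)) := by
        show Real.exp _ * ∏ i, Real.exp _ = _
        rw [← Real.exp_sum, ← Real.exp_add, Finset.mul_sum]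
      rw [h2, Real.exp_le_one_iff] at h1
      have h3 : (dir k * ((∑ i, F x (s i)) - M * E x)).re = ∑ i, y x k (s i) := by
        have : (∑ i, F x (s i)) - M * E x = ∑ i, (F x (s i) - E x) := by
          rw [Finset.sum_sub_distrib]; simp
        rw [this, Finset.mul_sum, Complex.re_sum]
      rw [h3]
      have h4 : lam * ∑ i, y x k (s i) ≤ lam * (4 * lam * M + ℓ / lam) := by
        have : lam * (4 * lam * M + ℓ / lam) = 4 * lam ^ 2 * M + ℓ := by field_simp
        rw [this]; linarith
      exact le_of_mul_le_mul_left h4 hlam0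
    refine (norm_le_of_dir _ _ hdir).trans ?_
    have : ℓ / lam ≤ M * θ / 4 := by
      rw [div_le_iff₀ hlam0, hlam]
      linarith
    rw [hlam] at this ⊢
    linarith
  · have h1 := hone (Sum.inr j)
    have h2 : a (Sum.inr j) * ∏ i, φ (Sum.inr j) (s i) =
        Real.exp (-(2 * q j * M) - b j + ∑ i, (D j).indicator (fun _ => (1 : ℝ)) (s i)) := by
      show Real.exp _ * ∏ i, Real.exp _ = _
      rw [← Real.exp_sum, ← Real.exp_add]
    rw [h2, Real.exp_le_one_iff] at h1
    linarith

end PR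

namespace PR

section rip
variable {X G : Type*} [Fintype X] [Fintype G]

/-- transform of `f` with kernel `χ` -/
noncomputable def tr (χ : X → G → ℂ) (f : X → ℂ) (g : G) : ℂ := ∑ x, f x * χ x g

/-- The Maurey empirical method. -/
lemma maurey (χ : X → G → ℂ) (hχ : ∀ x g, ‖χ x g‖ ≤ 1) (f : X → ℂ) (ρ : ℝ)
    (hρ : ρ = ∑ x, (|(f x).re| + |(f x).im|)) (hρ0 : 0 < ρ) (m : ℕ) (θ ℓ : ℝ)
    (hθ : 0 < θ) (hθ1 : θ ≤ 1) (hℓ : 8 * (Fintype.card G : ℝ) ≤ Real.exp ℓ)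
    (hM : 64 * ℓ ≤ m * θ ^ 2) :
    ∃ h : Fin m → X × Fin 4, ∀ g,
      ‖(∑ j, dir (h j).2 * χ (h j).1 g) - m * (tr χ f g / ρ)‖ ≤ m * θ := by
  let w : X × Fin 4 → ℝ := fun p => (![max (f p.1).re 0, max (-(f p.1).re) 0,
    max (f p.1).im 0, max (-(f p.1).im) 0] p.2) / ρ
  have hw : ∀ p, 0 ≤ w p := by
    rintro ⟨x, k⟩
    refine div_nonneg ?_ hρ0.le
    fin_cases k <;> simp
  have habs : ∀ t : ℝ, max t 0 + max (-t) 0 = |t| := fun t => by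
    rcases le_total 0 t with h | h
    · simp [abs_of_nonneg h, h]
    · simp [abs_of_nonpos h, h]
  have hdif : ∀ t : ℝ, max t 0 - max (-t) 0 = t := fun t => by
    rcases le_total 0 t with h | h
    · simp [h]
    · simp [h]
  have hw1 : ∑ p, w p = 1 := by
    simp only [w]
    rw [← Finset.sum_div, Fintype.sum_prod_type, div_eq_one_iff_eq hρ0.ne', hρ]
    refine Finset.sum_congr rfl fun x _ => ?_
    rw [Fin.sum_univ_four]
    simp
    linarith [habs (f x).re, habs (f x).im]
  obtain ⟨s, hs, -⟩ := exists_sample (J := Empty) w hw hw1 (fun g p => dir p.2 * χ p.1 g)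
    (fun g p => by rw [norm_mul, norm_dir, one_mul]; exact hχ _ _) (fun j => j.elim)
    (fun j => j.elim) (fun j => j.elim) (by simp) m θ ℓ hθ hθ1 hℓ hM
  refine ⟨s, fun g => ?_⟩
  have : ∑ p, (w p : ℂ) * (dir p.2 * χ p.1 g) = tr χ f g / ρ := by
    rw [Fintype.sum_prod_type, tr, Finset.sum_div]
    refine Finset.sum_congr rfl fun x _ => ?_
    rw [Fin.sum_univ_four]
    have h1 : f x = ((max (f x).re 0 - max (-(f x).re) 0 : ℝ) : ℂ) +
        ((max (f x).im 0 - max (-(f x).im) 0 : ℝ) : ℂ) * Complex.I := by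
      rw [hdif, hdif, Complex.re_add_im]
    rw [Complex.ofReal_sub, Complex.ofReal_sub] at h1
    simp [w, dir]
    linear_combination (-(χ x g / ρ)) * h1
  rw [← this]
  exact hs g

lemma parseval (χ : X → G → ℂ) (n : ℝ) [DecidableEq X]
    (horth : ∀ x y, ∑ g, χ x g * (starRingEnd ℂ) (χ y g) = if x = y then (n : ℂ) else 0)
    (f : X → ℂ) : ∑ g, ‖tr χ f g‖ ^ 2 = n * ∑ x, ‖f x‖ ^ 2 := by
  have h : ((∑ g, ‖tr χ f g‖ ^ 2 : ℝ) : ℂ) = ((n * ∑ x, ‖f x‖ ^ 2 : ℝ) : ℂ) := by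
    push_cast
    simp_rw [← Complex.mul_conj', tr, map_sum, map_mul, Finset.sum_mul_sum]
    rw [Finset.sum_comm]
    simp_rw [Finset.sum_comm (s := (Finset.univ : Finset G))]
    have : ∀ x y, ∑ g, f x * χ x g * ((starRingEnd ℂ) (f y) * (starRingEnd ℂ) (χ y g)) =
        f x * (starRingEnd ℂ) (f y) * if x = y then (n : ℂ) else 0 := by
      intro x y
      rw [← horth, Finset.mul_sum]
      exact Finset.sum_congr rfl fun g _ => by ring
    simp_rw [this]
    simp [Finset.mul_sum]
    exact Finset.sum_congr rfl fun g _ => by ring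
  exact_mod_cast h

lemma l1_le (f : X → ℂ) (k : ℕ) (hk : (Finset.univ.filter fun x => f x ≠ 0).card ≤ k) :
    (∑ x, (|(f x).re| + |(f x).im|)) ^ 2 ≤ 2 * k * ∑ x, ‖f x‖ ^ 2 := by
  classical
  set S := Finset.univ.filter fun x => f x ≠ 0
  have h1 : ∑ x, (|(f x).re| + |(f x).im|) = ∑ x ∈ S, (|(f x).re| + |(f x).im|) := by
    symm
    refine Finset.sum_subset (Finset.subset_univ _) fun x _ hx => ?_
    have : f x = 0 := by simpa [S] using hx
    simp [this]
  rw [h1]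
  refine (sq_sum_le_card_mul_sum_sq).trans ?_
  have h2 : ∑ x ∈ S, (|(f x).re| + |(f x).im|) ^ 2 ≤ 2 * ∑ x, ‖f x‖ ^ 2 := by
    rw [Finset.mul_sum]
    refine (Finset.sum_le_sum (g := fun x => 2 * ‖f x‖ ^ 2) fun x _ => ?_).trans
      (Finset.sum_le_sum_of_subset_of_nonneg (Finset.subset_univ _) fun x _ _ => by positivity)
    rw [← Complex.normSq_eq_norm_sq, Complex.normSq_apply]
    nlinarith [sq_abs (f x).re, sq_abs (f x).im, sq_nonneg (|(f x).re| - |(f x).im|)]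
  have h3 : (S.card : ℝ) ≤ k := by exact_mod_cast hk
  have h4 : 0 ≤ ∑ x ∈ S, (|(f x).re| + |(f x).im|) ^ 2 :=
    Finset.sum_nonneg fun x _ => by positivity
  nlinarith

lemma tr_le (χ : X → G → ℂ) (hχ : ∀ x g, ‖χ x g‖ ≤ 1) (f : X → ℂ) (g : G) :
    ‖tr χ f g‖ ≤ ∑ x, (|(f x).re| + |(f x).im|) := by
  refine (norm_sum_le _ _).trans (Finset.sum_le_sum fun x _ => ?_)
  rw [norm_mul]
  have := Complex.norm_le_abs_re_add_abs_im (f x)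
  nlinarith [hχ x g, norm_nonneg (f x), norm_nonneg (χ x g)]

lemma tr_sq_le (χ : X → G → ℂ) (hχ : ∀ x g, ‖χ x g‖ ≤ 1) (f : X → ℂ) (g : G) :
    ‖tr χ f g‖ ^ 2 ≤ Fintype.card X * ∑ x, ‖f x‖ ^ 2 := by
  have h1 : ‖tr χ f g‖ ≤ ∑ x, ‖f x‖ := by
    refine (norm_sum_le _ _).trans (Finset.sum_le_sum fun x _ => ?_)
    rw [norm_mul]
    nlinarith [hχ x g, norm_nonneg (f x), norm_nonneg (χ x g)]
  calc ‖tr χ f g‖ ^ 2 ≤ (∑ x, ‖f x‖) ^ 2 := pow_le_pow_left₀ (norm_nonneg _) h1 2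
    _ ≤ _ := by simpa using sq_sum_le_card_mul_sum_sq (s := Finset.univ) (f := fun x => ‖f x‖)

/-- dyadic layer-cake bound -/
lemma layer_cake {M : ℕ} (v : Fin M → ℝ) (F T ℓ : ℝ) (n : ℕ) (hn : 1 ≤ n) (hF : 0 < F)
    (hv : ∀ i, v i ≤ n * F) (hT : 0 ≤ T) (hℓ : 8 * (n : ℝ) ≤ Real.exp ℓ)
    (h : ∀ t : ℝ, F ≤ t → t * (∑ i, {i | t ≤ v i}.indicator (fun _ => (1 : ℝ)) i) ≤ T) :
    ∑ i, v i ≤ M * F + 4 * ℓ * T := by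
  set Λ := Nat.log 4 n
  have hpt : ∀ i, v i ≤ F + ∑ l ∈ Finset.range (Λ + 1), 4 * (4 ^ l * F) *
      {i | 4 ^ l * F ≤ v i}.indicator (fun _ => (1 : ℝ)) i := by
    intro i
    have hnn : ∀ l ∈ Finset.range (Λ + 1), 0 ≤ 4 * (4 ^ l * F) *
        {i | 4 ^ l * F ≤ v i}.indicator (fun _ => (1 : ℝ)) i := fun l _ =>
      mul_nonneg (by positivity) (Set.indicator_nonneg (fun _ _ => zero_le_one) _)
    by_cases hi : v i ≤ F
    · linarith [Finset.sum_nonneg hnn]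
    · push Not at hi
      set r := ⌊v i / F⌋₊
      have hr : 1 ≤ r := by
        apply Nat.le_floor
        rw [Nat.cast_one, le_div_iff₀ hF]; linarith
      have hrn : r ≤ n := by
        apply Nat.floor_le_of_le
        rw [div_le_iff₀ hF]; exact hv i
      set l := Nat.log 4 r
      have hl : l ∈ Finset.range (Λ + 1) :=
        Finset.mem_range.2 (Nat.lt_succ_of_le (Nat.log_mono_right hrn))
      refine le_trans ?_ (add_le_add_right (Finset.single_le_sum hnn hl) F)
      have h1 : (4 : ℝ) ^ l * F ≤ v i := by
        rw [← le_div_iff₀ hF]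
        have : 4 ^ l ≤ r := Nat.pow_log_le_self 4 (by omega)
        refine le_trans (by exact_mod_cast this) (Nat.floor_le ?_)
        exact div_nonneg (hF.le.trans hi.le) hF.le
      have h2 : v i ≤ 4 * (4 ^ l * F) := by
        have h3 : r < 4 ^ (l + 1) := Nat.lt_pow_succ_log_self (by norm_num) r
        have h4 : v i / F < r + 1 := Nat.lt_floor_add_one _
        have h5 : (r : ℝ) + 1 ≤ 4 ^ (l + 1) := by exact_mod_cast h3
        have h6 : v i / F ≤ 4 ^ (l + 1) := by linarith
        rw [div_le_iff₀ hF] at h6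
        rw [pow_succ] at h6; linarith
      rw [Set.indicator_of_mem (by exact h1)]
      linarith
  have hΛ : ((Λ : ℝ) + 1) ≤ ℓ := by
    have h1 : (4 : ℝ) ^ Λ ≤ n := by exact_mod_cast Nat.pow_log_le_self 4 (by omega)
    have h2 : (8 : ℝ) * 4 ^ Λ ≤ Real.exp ℓ := by linarith
    have h3 : Real.exp ((Λ : ℝ) + 1) ≤ 8 * 4 ^ Λ := by
      rw [Real.exp_add, ← mul_one (Λ : ℝ), Real.exp_nat_mul]
      have : Real.exp 1 < 4 := by linarith [Real.exp_one_lt_d9]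
      have h5 : Real.exp 1 ^ Λ ≤ 4 ^ Λ := pow_le_pow_left₀ (Real.exp_pos _).le this.le _
      have : (0 : ℝ) < 4 ^ Λ := by positivity
      nlinarith [Real.exp_pos 1]
    exact Real.exp_le_exp.1 (h3.trans h2)
  calc ∑ i, v i ≤ ∑ i, (F + ∑ l ∈ Finset.range (Λ + 1), 4 * (4 ^ l * F) *
      {i | 4 ^ l * F ≤ v i}.indicator (fun _ => (1 : ℝ)) i) := Finset.sum_le_sum fun i _ => hpt i
    _ = M * F + ∑ l ∈ Finset.range (Λ + 1), 4 * ((4 ^ l * F) *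
        ∑ i, {i | 4 ^ l * F ≤ v i}.indicator (fun _ => (1 : ℝ)) i) := by
      rw [Finset.sum_add_distrib, Finset.sum_comm]
      simp [Finset.mul_sum, mul_assoc]
    _ ≤ M * F + ∑ l ∈ Finset.range (Λ + 1), 4 * T := by
      refine add_le_add_right (Finset.sum_le_sum fun l _ => ?_) _
      refine mul_le_mul_of_nonneg_left (h _ ?_) (by norm_num)
      have : (1 : ℝ) ≤ 4 ^ l := one_le_pow₀ (by norm_num)
      nlinarith
    _ = M * F + 4 * (Λ + 1) * T := by simp; ring
    _ ≤ _ := by nlinarith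

end rip
end PR

namespace PR

section rip
variable {X G P : Type*} [Fintype X] [Fintype G] [Fintype P]

lemma rip_sum (n : ℕ) (hX : Fintype.card X = n) (ℓ : ℝ)
    (hn : 1 ≤ n) (hℓ : 8 * (n : ℝ) ≤ Real.exp ℓ) (K : ℕ) :
    ∑ j : (Σ m : Fin K, (Fin m → X × Fin 4)), Real.exp (-(((j.1 : ℕ) : ℝ) + 2) * ℓ) ≤ 1 / 2 := by
  rw [Fintype.sum_sigma]
  have hn' : (1 : ℝ) ≤ n := by exact_mod_cast hn
  have he : Real.exp (-ℓ) * (8 * n) ≤ 1 := by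
    rw [Real.exp_neg, inv_mul_le_iff₀ (Real.exp_pos _), mul_one]; exact hℓ
  have hp := Real.exp_pos (-ℓ)
  have he8 : Real.exp (-ℓ) ≤ 1 / 8 := by nlinarith
  have h1 : ∀ m : Fin K, ∑ j : (Fin m → X × Fin 4), Real.exp (-(((m : ℕ) : ℝ) + 2) * ℓ) ≤
      1 / 64 * (1 / 2) ^ (m : ℕ) := by
    intro m
    simp only [Finset.sum_const, Finset.card_univ, Fintype.card_fun, Fintype.card_prod,
      Fintype.card_fin, hX, nsmul_eq_mul]
    have : -(((m : ℕ) : ℝ) + 2) * ℓ = ((m : ℕ) : ℝ) * (-ℓ) + (2 : ℕ) * (-ℓ) := by push_cast; ring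
    rw [this, Real.exp_add, Real.exp_nat_mul, Real.exp_nat_mul]
    push_cast
    rw [← mul_assoc, ← mul_pow, mul_comm (1 / 64 : ℝ)]
    refine mul_le_mul (pow_le_pow_left₀ (by positivity) (by linarith) _) ?_ (by positivity)
      (by positivity)
    nlinarith
  refine (Finset.sum_le_sum fun m _ => h1 m).trans ?_
  rw [Fin.sum_univ_eq_sum_range (fun m => 1 / 64 * (1 / 2 : ℝ) ^ m) K, ← Finset.mul_sum]
  have := sum_geometric_two_le K
  linarith

set_option maxHeartbeats 1000000 in
theorem rip [DecidableEq X] (n : ℕ) (hn : 1 ≤ n) (hX : Fintype.card X = n)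
    (hG : Fintype.card G = n)
    (χ : X → G → ℂ) (hχ : ∀ x g, ‖χ x g‖ ≤ 1)
    (horth : ∀ x y, ∑ g, χ x g * (starRingEnd ℂ) (χ y g) = if x = y then ((n : ℝ) : ℂ) else 0)
    (w : P → ℝ) (hw : ∀ p, 0 ≤ w p) (hw1 : ∑ p, w p = 1) (π : P → G) (D : ℝ) (hD : 1 ≤ D)
    (hπ : ∀ φ : G → ℝ, (∀ g, 0 ≤ φ g) → ∑ p, w p * φ (π p) ≤ D / n * ∑ g, φ g)
    (ℓ : ℝ) (hℓ1 : 1 ≤ ℓ) (hℓ : 8 * (n : ℝ) ≤ Real.exp ℓ) (M : ℕ) (θ : ℝ)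
    (hθ : 0 < θ) (hθ1 : θ ≤ 1) (hM : 64 * ℓ ≤ M * θ ^ 2) :
    ∃ s : Fin M → P,
      (∀ x, ‖∑ i, χ x (π (s i)) - M * ∑ p, (w p : ℂ) * χ x (π p)‖ ≤ M * θ) ∧
      ∀ (f : X → ℂ) (k : ℕ), (Finset.univ.filter fun x => f x ≠ 0).card ≤ k →
        ∑ i, ‖tr χ f (π (s i))‖ ^ 2 ≤ 50000 * ℓ ^ 3 * (D * M + k) * ∑ x, ‖f x‖ ^ 2 := by
  have hn' : (1 : ℝ) ≤ n := by exact_mod_cast hn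
  set K : ℕ := ⌈4096 * ℓ * n⌉₊ + 1 with hK
  obtain ⟨s, hs1, hs2⟩ := exists_sample (J := (Σ m : Fin K, (Fin m → X × Fin 4))) w hw hw1
    (fun x p => χ x (π p)) (fun x p => hχ _ _)
    (fun j => {p | 3 * (8 * √(ℓ / (j.1 : ℕ))) * (j.1 : ℕ) ≤
      ‖∑ i, dir (j.2 i).2 * χ (j.2 i).1 (π p)‖})
    (fun j => (((j.1 : ℕ) : ℝ) + 2) * ℓ) (fun j => by positivity)
    (by simpa only [neg_mul] using rip_sum n hX ℓ hn hℓ K) M θ ℓ hθ hθ1 (by rw [hX]; exact hℓ) hM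
  refine ⟨s, hs1, fun f k hk => ?_⟩
  set F := ∑ x, ‖f x‖ ^ 2 with hF
  have hF0 : 0 ≤ F := Finset.sum_nonneg fun x _ => by positivity
  rcases hF0.eq_or_lt with hF00 | hFpos
  · have : ∀ x, f x = 0 := by
      intro x
      have := (Finset.sum_eq_zero_iff_of_nonneg (fun x _ => by positivity)).1 hF00.symm x
        (Finset.mem_univ x)
      simpa using this
    rw [← hF00]
    simp [tr, this]
  set ρ := ∑ x, (|(f x).re| + |(f x).im|) with hρ
  have hρ2 : ρ ^ 2 ≤ 2 * k * F := l1_le f k hk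
  have hρ2' : ρ ^ 2 ≤ 2 * n * F := by
    refine l1_le f n ?_
    rw [← hX]; exact Finset.card_le_univ _
  have hρ0 : 0 ≤ ρ := Finset.sum_nonneg fun x _ => by positivity
  have key : ∑ i, ‖tr χ f (π (s i))‖ ^ 2 ≤ M * F + 4 * ℓ * ((16 * D * M + 12288 * ℓ ^ 2 * k) * F) := by
    refine layer_cake _ F _ ℓ n hn hFpos (fun i => ?_) (by positivity) hℓ ?_
    · rw [← hX]; exact tr_sq_le χ hχ f _
    intro τ hτ
    have hτ0 : 0 < τ := hFpos.trans_le hτ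
    by_cases hex : ∃ i, τ ≤ ‖tr χ f (π (s i))‖ ^ 2
    swap
    · push Not at hex
      have : ∀ i, {i | τ ≤ ‖tr χ f (π (s i))‖ ^ 2}.indicator (fun _ => (1 : ℝ)) i = 0 := by
        intro i
        exact Set.indicator_of_notMem (by simpa using hex i) _
      simp only [this, Finset.sum_const_zero, mul_zero]
      positivity
    obtain ⟨i0, hi0⟩ := hex
    have hτρ : τ ≤ ρ ^ 2 := hi0.trans (pow_le_pow_left₀ (norm_nonneg _) (tr_le χ hχ f _) 2)
    have hρpos : 0 < ρ := by
      rcases hρ0.eq_or_lt with h | h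
      · rw [← h] at hτρ; norm_num at hτρ; linarith
      · exact h
    set m : ℕ := ⌈1024 * ℓ * ρ ^ 2 / τ⌉₊ with hm
    have hm1 : 1024 * ℓ * ρ ^ 2 / τ ≤ m := Nat.le_ceil _
    have hratio : 1 ≤ ρ ^ 2 / τ := by rw [le_div_iff₀ hτ0]; linarith
    have hbig : 1 ≤ 1024 * ℓ * ρ ^ 2 / τ := by
      rw [mul_div_assoc]; nlinarith
    have hm2 : (m : ℝ) ≤ 2048 * ℓ * ρ ^ 2 / τ := by
      have := (Nat.ceil_lt_add_one (zero_le_one.trans hbig)).le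
      have h2 : 2048 * ℓ * ρ ^ 2 / τ = 2 * (1024 * ℓ * ρ ^ 2 / τ) := by ring
      rw [h2]; linarith
    have hmpos : (1 : ℝ) ≤ m := hbig.trans hm1
    have hmK : m < K := by
      rw [hK, Nat.lt_succ_iff, ← Nat.cast_le (α := ℝ)]
      refine le_trans ?_ (Nat.le_ceil _)
      refine hm2.trans ?_
      rw [div_le_iff₀ hτ0]
      have : ρ ^ 2 ≤ 2 * n * τ := hρ2'.trans (by nlinarith)
      nlinarith
    rw [div_le_iff₀ hτ0] at hm1
    rw [le_div_iff₀ hτ0] at hm2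
    set θ' := 8 * √(ℓ / m) with hθ'
    have hθsq : θ' ^ 2 * m = 64 * ℓ := by
      rw [hθ', mul_pow, Real.sq_sqrt (by positivity)]; field_simp; norm_num
    have hθpos : 0 < θ' := by rw [hθ']; positivity
    have hA : 16 * (ρ ^ 2 * θ' ^ 2) ≤ τ := by
      have : 16 * (ρ ^ 2 * θ' ^ 2) * m ≤ τ * m := by
        calc 16 * (ρ ^ 2 * θ' ^ 2) * m = 16 * ρ ^ 2 * (θ' ^ 2 * m) := by ring
          _ = 1024 * ℓ * ρ ^ 2 := by rw [hθsq]; ring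
          _ ≤ _ := by linarith
      exact le_of_mul_le_mul_right this (by linarith)
    have hθ1' : θ' ≤ 1 := by
      have : θ' ^ 2 ≤ 1 ^ 2 := by
        have h3 : ρ ^ 2 * (16 * θ' ^ 2) ≤ ρ ^ 2 * 1 := by linarith
        have := le_of_mul_le_mul_left h3 (by positivity)
        nlinarith [sq_nonneg θ']
      exact le_of_sq_le_sq this (by norm_num)
    have hB : τ ≤ 8 * (2 * ρ * θ') ^ 2 := by
      have : τ * m ≤ 8 * (2 * ρ * θ') ^ 2 * m := by
        calc τ * m ≤ 2048 * ℓ * ρ ^ 2 := by linarith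
          _ = 32 * ρ ^ 2 * (64 * ℓ) := by ring
          _ = _ := by rw [← hθsq]; ring
      exact le_of_mul_le_mul_right this (by linarith)
    obtain ⟨h, hh⟩ := maurey χ hχ f ρ hρ hρpos m θ' ℓ hθpos hθ1' (by rw [hG]; exact hℓ)
      (by linarith)
    have hcount := hs2 ⟨⟨m, hmK⟩, h⟩
    simp only [← hθ'] at hcount
    set Dh : Set P := {p | 3 * θ' * (m : ℝ) ≤ ‖∑ i, dir (h i).2 * χ (h i).1 (π p)‖} with hDh
    have hsc : ∀ g, ‖(m : ℂ) * (tr χ f g / ρ)‖ = m * (‖tr χ f g‖ / ρ) := by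
      intro g
      rw [norm_mul, norm_div, Complex.norm_real, Complex.norm_natCast, Real.norm_of_nonneg hρ0]
    have hin : ∀ i, τ ≤ ‖tr χ f (π (s i))‖ ^ 2 → s i ∈ Dh := by
      intro i hi
      have h4 : 4 * ρ * θ' ≤ ‖tr χ f (π (s i))‖ := by
        apply le_of_sq_le_sq _ (norm_nonneg _)
        nlinarith
      have h5 := hh (π (s i))
      have h6 := norm_sub_norm_le ((m : ℂ) * (tr χ f (π (s i)) / ρ))
        (∑ j, dir (h j).2 * χ (h j).1 (π (s i)))
      rw [norm_sub_rev, hsc] at h6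
      have h7 : 4 * θ' ≤ ‖tr χ f (π (s i))‖ / ρ := by
        rw [le_div_iff₀ hρpos]; linarith
      have : (m : ℝ) * (4 * θ') ≤ m * (‖tr χ f (π (s i))‖ / ρ) :=
        mul_le_mul_of_nonneg_left h7 (by linarith)
      show 3 * θ' * (m : ℝ) ≤ _
      linarith
    have hout : ∀ p, Dh.indicator (fun _ => (1 : ℝ)) p ≤ 8 / τ * ‖tr χ f (π p)‖ ^ 2 := by
      intro p
      by_cases hp : p ∈ Dh
      · rw [Set.indicator_of_mem hp]
        have h5 := hh (π p)
        have h6 := norm_sub_norm_le (∑ j, dir (h j).2 * χ (h j).1 (π p))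
          ((m : ℂ) * (tr χ f (π p) / ρ))
        rw [hsc] at h6
        have h8 : 3 * θ' * (m : ℝ) ≤ _ := hp
        have h7 : (m : ℝ) * (2 * θ') ≤ m * (‖tr χ f (π p)‖ / ρ) := by linarith
        have h9 := le_of_mul_le_mul_left h7 (by linarith)
        rw [le_div_iff₀ hρpos] at h9
        have h10 : (2 * ρ * θ') ^ 2 ≤ ‖tr χ f (π p)‖ ^ 2 :=
          pow_le_pow_left₀ (by positivity) (by linarith) 2
        rw [div_mul_eq_mul_div, le_div_iff₀ hτ0]
        linarith
      · rw [Set.indicator_of_notMem hp]; positivity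
    have hq : ∑ p, w p * Dh.indicator (fun _ => (1 : ℝ)) p ≤ 8 / τ * (D * F) := by
      calc ∑ p, w p * Dh.indicator (fun _ => (1 : ℝ)) p
          ≤ ∑ p, w p * (8 / τ * ‖tr χ f (π p)‖ ^ 2) :=
            Finset.sum_le_sum fun p _ => mul_le_mul_of_nonneg_left (hout p) (hw p)
        _ ≤ D / n * ∑ g, 8 / τ * ‖tr χ f g‖ ^ 2 :=
            hπ (fun g => 8 / τ * ‖tr χ f g‖ ^ 2) (fun g => by positivity)
        _ = _ := by
            rw [← Finset.mul_sum, parseval χ n horth f]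
            field_simp
            rfl
    have hle : ∑ i, {i | τ ≤ ‖tr χ f (π (s i))‖ ^ 2}.indicator (fun _ => (1 : ℝ)) i ≤
        ∑ i, Dh.indicator (fun _ => (1 : ℝ)) (s i) := by
      refine Finset.sum_le_sum fun i _ => ?_
      by_cases hi : τ ≤ ‖tr χ f (π (s i))‖ ^ 2
      · rw [Set.indicator_of_mem (by exact hi), Set.indicator_of_mem (hin i hi)]
      · rw [Set.indicator_of_notMem (by exact hi)]
        exact Set.indicator_nonneg (fun _ _ => zero_le_one) _
    have hc2 : ∑ i, {i | τ ≤ ‖tr χ f (π (s i))‖ ^ 2}.indicator (fun _ => (1 : ℝ)) i ≤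
        2 * M * (8 / τ * (D * F)) + ((m : ℝ) + 2) * ℓ :=
      hle.trans (hcount.trans (add_le_add_left
        (mul_le_mul_of_nonneg_left hq (by positivity)) _))
    calc τ * ∑ i, {i | τ ≤ ‖tr χ f (π (s i))‖ ^ 2}.indicator (fun _ => (1 : ℝ)) i
        ≤ τ * (2 * M * (8 / τ * (D * F)) + ((m : ℝ) + 2) * ℓ) :=
          mul_le_mul_of_nonneg_left hc2 hτ0.le
      _ = 16 * D * M * F + ((m : ℝ) + 2) * τ * ℓ := by field_simp; ring
      _ ≤ 16 * D * M * F + (3 * m * τ) * ℓ := by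
          have h3 : ((m : ℝ) + 2) * τ ≤ 3 * m * τ :=
            mul_le_mul_of_nonneg_right (by linarith) hτ0.le
          exact add_le_add_right (mul_le_mul_of_nonneg_right h3 (by linarith)) _
      _ ≤ 16 * D * M * F + (3 * (2048 * ℓ * (2 * k * F))) * ℓ := by
          have : 2048 * ℓ * ρ ^ 2 ≤ 2048 * ℓ * (2 * k * F) :=
            mul_le_mul_of_nonneg_left hρ2 (by positivity)
          have h2 : 3 * m * τ ≤ 3 * (2048 * ℓ * (2 * k * F)) := by linarith
          exact add_le_add_right (mul_le_mul_of_nonneg_right h2 (by linarith)) _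
      _ = _ := by ring
  refine key.trans ?_
  have e1 : (1 : ℝ) ≤ ℓ ^ 3 := one_le_pow₀ hℓ1
  have e2 : ℓ ≤ ℓ ^ 3 := by nlinarith [sq_nonneg (ℓ - 1)]
  have e3 : (M : ℝ) ≤ ℓ ^ 3 * (D * M) := by
    have : (0 : ℝ) ≤ M := by positivity
    have : (M : ℝ) ≤ D * M := by nlinarith
    nlinarith
  have e4 : ℓ * (D * M) ≤ ℓ ^ 3 * (D * M) := mul_le_mul_of_nonneg_right e2 (by positivity)
  have e5 : 0 ≤ ℓ ^ 3 * k := by positivity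
  have e6 : 0 ≤ ℓ ^ 3 * (D * M) := by positivity
  have : M + 4 * ℓ * (16 * D * M + 12288 * ℓ ^ 2 * k) ≤ 50000 * ℓ ^ 3 * (D * M + k) := by
    nlinarith
  calc _ = (M + 4 * ℓ * (16 * D * M + 12288 * ℓ ^ 2 * k)) * F := by ring
    _ ≤ _ := mul_le_mul_of_nonneg_right this hF0

end rip
end PR

namespace PR

/-- the character `e(-t)` -/
noncomputable def ee (t : ℝ) : ℂ := Complex.exp (((-2 * Real.pi * t : ℝ) : ℂ) * Complex.I)

lemma ee_add (a b : ℝ) : ee (a + b) = ee a * ee b := by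
  rw [ee, ee, ee, ← Complex.exp_add]; congr 1; push_cast; ring

lemma ee_zero : ee 0 = 1 := by simp [ee]

lemma norm_ee (t : ℝ) : ‖ee t‖ = 1 := Complex.norm_exp_ofReal_mul_I _

lemma ee_neg (t : ℝ) : ee (-t) = (starRingEnd ℂ) (ee t) := by
  rw [ee, ee, ← Complex.exp_conj, map_mul, Complex.conj_ofReal, Complex.conj_I]; congr 1; push_cast; ring

lemma ee_int (m : ℤ) : ee m = 1 := by
  rw [ee, Complex.exp_eq_one_iff]
  exact ⟨-m, by push_cast; ring⟩

lemma ee_sum {ι : Type*} (s : Finset ι) (t : ι → ℝ) : ee (∑ i ∈ s, t i) = ∏ i ∈ s, ee (t i) := by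
  classical
  induction s using Finset.induction_on with
  | empty => simp [ee_zero]
  | insert a s ha ih => rw [Finset.sum_insert ha, Finset.prod_insert ha, ee_add, ih]

lemma ee_nat_mul (m : ℕ) (t : ℝ) : ee (m * t) = ee t ^ m := by
  rw [ee, ee, ← Complex.exp_nat_mul]; congr 1; push_cast; ring

lemma continuous_ee : Continuous ee := by unfold ee; fun_prop

lemma ee_sub (a b : ℝ) : ee (a - b) = ee a * (starRingEnd ℂ) (ee b) := by
  rw [sub_eq_add_neg, ee_add, ee_neg]

/-- one-dimensional box factor -/
noncomputable def bb (t : ℝ) : ℂ := ∫ u in (0 : ℝ)..1, ee (t * u)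

lemma norm_bb (t : ℝ) : ‖bb t‖ ≤ 1 := by
  have := intervalIntegral.norm_integral_le_of_norm_le_const (a := 0) (b := 1) (C := 1)
    (f := fun u => ee (t * u)) (fun u _ => (norm_ee _).le)
  simpa [bb] using this

lemma bb_zero : bb 0 = 1 := by simp [bb, ee_zero]

lemma bb_int (m : ℤ) (hm : m ≠ 0) : bb m = 0 := by
  have hc : ((-2 * Real.pi * m : ℝ) : ℂ) * Complex.I ≠ 0 := by
    simp [Real.pi_ne_zero, hm]
  have h : ∀ u : ℝ, ee (m * u) = Complex.exp ((((-2 * Real.pi * m : ℝ) : ℂ) * Complex.I) * u) := by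
    intro u; rw [ee]; congr 1; push_cast; ring
  simp_rw [bb, h]
  rw [integral_exp_mul_complex hc]
  have := ee_int m
  rw [ee] at this
  simp only [Complex.ofReal_one, mul_one, Complex.ofReal_zero, mul_zero, Complex.exp_zero]
  rw [this]; simp

lemma bb_subdiv (t : ℝ) (L : ℕ) (hL : 1 ≤ L) :
    bb t = (1 / L) * ∑ a ∈ Finset.range L, ee (t * a / L) * bb (t / L) := by
  have hL0 : (L : ℝ) ≠ 0 := by positivity
  have hc : Continuous fun u => ee (t * u) := continuous_ee.comp (by fun_prop)
  have h1 := intervalIntegral.sum_integral_adjacent_intervals (f := fun u => ee (t * u))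
    (μ := volume) (a := fun k : ℕ => (k : ℝ) / L) (n := L)
    (fun k _ => hc.intervalIntegrable _ _)
  simp only [Nat.cast_zero, zero_div, div_self hL0] at h1
  rw [bb, ← h1, Finset.mul_sum]
  refine Finset.sum_congr rfl fun a _ => ?_
  have h2 := intervalIntegral.integral_comp_mul_add (a := 0) (b := 1) (fun u => ee (t * u))
    (c := 1 / (L : ℝ)) (by positivity) ((a : ℝ) / L)
  have h3 : ∀ u : ℝ, ee (t * (1 / L * u + a / L)) = ee (t * a / L) * ee (t / L * u) := by
    intro u; rw [← ee_add]; congr 1; ring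
  simp_rw [h3] at h2
  rw [intervalIntegral.integral_const_mul] at h2
  rw [bb, h2]
  have h4 : (1 / (L : ℝ)) * 0 + a / L = a / L := by ring
  have h5 : (1 / (L : ℝ)) * 1 + a / L = ((a + 1 : ℕ) : ℝ) / L := by push_cast; ring
  rw [h4, h5]
  simp only [one_div, inv_inv, Complex.real_smul]
  have : (L : ℂ) ≠ 0 := by exact_mod_cast hL0
  push_cast
  field_simp

variable {d : ℕ}

/-- integral of a character over the unit cube -/
lemma integral_cube (t : Fin d → ℝ) :
    ∫ u in Set.Icc (0 : Fin d → ℝ) 1, ee (∑ j, t j * u j) = ∏ j, bb (t j) := by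
  simp_rw [ee_sum]
  rw [← Set.pi_univ_Icc, volume_pi, Measure.restrict_pi_pi,
    integral_fintype_prod_eq_prod (𝕜 := ℂ) (fun j u => ee (t j * u))]
  refine Finset.prod_congr rfl fun j _ => ?_
  rw [bb, intervalIntegral.integral_of_le zero_le_one, integral_Icc_eq_integral_Ioc]
  rfl

/-- one-dimensional orthogonality -/
lemma orth1 (N : ℕ) (hN : 1 ≤ N) (x y : Fin N) :
    ∑ g : Fin N, ee (((x : ℕ) : ℝ) * (g : ℕ) / N) * (starRingEnd ℂ) (ee (((y : ℕ) : ℝ) * (g : ℕ) / N)) =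
      if x = y then (N : ℂ) else 0 := by
  have hN0 : (N : ℝ) ≠ 0 := by positivity
  have h : ∀ g : Fin N, ee (((x : ℕ) : ℝ) * (g : ℕ) / N) *
      (starRingEnd ℂ) (ee (((y : ℕ) : ℝ) * (g : ℕ) / N)) =
      ee ((((x : ℕ) : ℝ) - (y : ℕ)) / N) ^ (g : ℕ) := by
    intro g; rw [← ee_sub, ← ee_nat_mul]; congr 1; ring
  simp_rw [h]
  rw [Fin.sum_univ_eq_sum_range (fun k => ee ((((x : ℕ) : ℝ) - (y : ℕ)) / N) ^ k)]
  split_ifs with hxy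
  · subst hxy; simp [ee_zero]
  · have hne : ee ((((x : ℕ) : ℝ) - (y : ℕ)) / N) ≠ 1 := by
      rw [ee, Ne, Complex.exp_eq_one_iff]
      rintro ⟨m, hm⟩
      have h2 : (-((((x : ℕ) : ℝ) - (y : ℕ)) / N) : ℝ) = m := by
        have : (((-((((x : ℕ) : ℝ) - (y : ℕ)) / N) : ℝ) : ℂ)) = (m : ℂ) := by
          have hpi : (2 * Real.pi * Complex.I : ℂ) ≠ 0 := Complex.two_pi_I_ne_zero
          apply mul_right_cancel₀ hpi
          rw [← hm]; push_cast; ring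
        exact_mod_cast this
      have h3 : (((y : ℕ) : ℝ) - (x : ℕ)) = m * N := by
        rw [← h2]; field_simp; ring
      have h4 : ((y : ℕ) : ℤ) - (x : ℕ) = m * N := by exact_mod_cast h3
      have h5 : ((y : ℕ) : ℤ) - (x : ℕ) = 0 := by
        apply Int.eq_zero_of_abs_lt_dvd (m := N) ⟨m, by rw [h4]; ring⟩
        have := x.2; have := y.2
        rw [abs_lt]; omega
      apply hxy; ext; omega
    rw [geom_sum_eq hne, ← ee_nat_mul]
    have : (N : ℝ) * ((((x : ℕ) : ℝ) - (y : ℕ)) / N) = (((x : ℕ) - (y : ℕ) : ℤ) : ℝ) := by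
      push_cast; field_simp
    rw [this, ee_int]; simp

/-- the characters of the grid -/
noncomputable def chi (N : ℕ) (x g : Fin d → Fin N) : ℂ :=
  ee (∑ j, (((x j : ℕ) : ℝ) * ((g j : ℕ) : ℝ) / N))

lemma norm_chi (N : ℕ) (x g : Fin d → Fin N) : ‖chi N x g‖ ≤ 1 := (norm_ee _).le

lemma orth (N : ℕ) (hN : 1 ≤ N) (x y : Fin d → Fin N) :
    ∑ g, chi N x g * (starRingEnd ℂ) (chi N y g) = if x = y then (((N ^ d : ℕ) : ℝ) : ℂ) else 0 := by
  simp_rw [chi, ee_sum, map_prod, ← Finset.prod_mul_distrib]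
  have := Finset.prod_univ_sum (κ := fun _ : Fin d => Fin N) (fun _ => Finset.univ)
    (fun j g => ee (((x j : ℕ) : ℝ) * (g : ℕ) / N) * (starRingEnd ℂ) (ee (((y j : ℕ) : ℝ) * (g : ℕ) / N)))
  rw [Fintype.piFinset_univ] at this
  rw [← this]
  simp_rw [orth1 N hN]
  split_ifs with h
  · subst h; simp
  · obtain ⟨j, hj⟩ := Function.ne_iff.1 h
    exact Finset.prod_eq_zero (Finset.mem_univ j) (by simp [hj])

end PR

namespace PR
variable {d : ℕ}

/-- trigonometric sum -/
noncomputable def Tf (A : Finset (Fin d → ℤ)) (f : (Fin d → ℤ) → ℂ) (ξ : Fin d → ℝ) : ℂ :=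
  ∑ x ∈ A, f x * ee (∑ j, (x j : ℝ) * ξ j)

lemma continuous_Tf (A : Finset (Fin d → ℤ)) (f : (Fin d → ℤ) → ℂ) : Continuous (Tf A f) := by
  unfold Tf
  refine continuous_finsetSum _ fun x _ => continuous_const.mul (continuous_ee.comp ?_)
  fun_prop

/-- point in a cube -/
noncomputable def pt (N : ℕ) (s : Fin d → Fin N) (u : Fin d → ℝ) : Fin d → ℝ :=
  fun j => (((s j : ℕ) : ℝ) + u j) / N

lemma continuous_pt (N : ℕ) (s : Fin d → Fin N) : Continuous (pt N s) := by
  unfold pt; fun_prop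

/-- energy -/
noncomputable def En {M : ℕ} (N : ℕ) (s : Fin M → Fin d → Fin N) (A : Finset (Fin d → ℤ))
    (f : (Fin d → ℤ) → ℂ) : ℝ :=
  (1 / M) * ∑ i, ∫ u in Set.Icc (0 : Fin d → ℝ) 1, ‖Tf A f (pt N (s i) u)‖ ^ 2

/-- Fourier transform of the state measure -/
noncomputable def ph {M : ℕ} (N : ℕ) (s : Fin M → Fin d → Fin N) (z : Fin d → ℤ) : ℂ :=
  (∏ j, bb ((z j : ℝ) / N)) * ((1 / M) * ∑ i, ee (∑ j, (z j : ℝ) * ((s i j : ℕ) : ℝ) / N))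

lemma integral_sq (A : Finset (Fin d → ℤ)) (f : (Fin d → ℤ) → ℂ) (N : ℕ) (s : Fin d → Fin N) :
    ((∫ u in Set.Icc (0 : Fin d → ℝ) 1, ‖Tf A f (pt N s u)‖ ^ 2 : ℝ) : ℂ) =
      ∑ x ∈ A, ∑ y ∈ A, f x * (starRingEnd ℂ) (f y) * ((∏ j, bb (((x - y) j : ℝ) / N)) *
        ee (∑ j, ((x - y) j : ℝ) * ((s j : ℕ) : ℝ) / N)) := by
  rw [← integral_complex_ofReal]
  have h : ∀ u, ((‖Tf A f (pt N s u)‖ ^ 2 : ℝ) : ℂ) = ∑ x ∈ A, ∑ y ∈ A,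
      (f x * (starRingEnd ℂ) (f y) * ee (∑ j, ((x - y) j : ℝ) * ((s j : ℕ) : ℝ) / N)) *
        ee (∑ j, ((x - y) j : ℝ) / N * u j) := by
    intro u
    rw [Complex.ofReal_pow, ← Complex.mul_conj', Tf, map_sum, Finset.sum_mul_sum]
    refine Finset.sum_congr rfl fun x _ => Finset.sum_congr rfl fun y _ => ?_
    rw [map_mul, ← ee_neg]
    have : ee (∑ j, (x j : ℝ) * pt N s u j) * ee (-∑ j, (y j : ℝ) * pt N s u j) =
        ee (∑ j, ((x - y) j : ℝ) * ((s j : ℕ) : ℝ) / N) * ee (∑ j, ((x - y) j : ℝ) / N * u j) := by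
      rw [← ee_add, ← ee_add, ← Finset.sum_neg_distrib, ← Finset.sum_add_distrib,
        ← Finset.sum_add_distrib]
      congr 1
      refine Finset.sum_congr rfl fun j _ => ?_
      simp [pt]; ring
    linear_combination (f x * (starRingEnd ℂ) (f y)) * this
  simp_rw [h]
  have hc : ∀ x y : Fin d → ℤ, Continuous fun u : Fin d → ℝ =>
      (f x * (starRingEnd ℂ) (f y) * ee (∑ j, ((x - y) j : ℝ) * ((s j : ℕ) : ℝ) / N)) *
        ee (∑ j, ((x - y) j : ℝ) / N * u j) := fun x y =>
    continuous_const.mul (continuous_ee.comp (by fun_prop))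
  rw [integral_finsetSum _ fun x _ => Continuous.integrableOn_Icc
    (continuous_finsetSum _ fun y _ => hc x y)]
  refine Finset.sum_congr rfl fun x _ => ?_
  rw [integral_finsetSum _ fun y _ => (hc x y).integrableOn_Icc]
  refine Finset.sum_congr rfl fun y _ => ?_
  rw [integral_const_mul, integral_cube]
  ring

lemma En_eq {M : ℕ} (N : ℕ) (s : Fin M → Fin d → Fin N) (A : Finset (Fin d → ℤ))
    (f : (Fin d → ℤ) → ℂ) :
    (En N s A f : ℂ) = ∑ x ∈ A, ∑ y ∈ A, f x * (starRingEnd ℂ) (f y) * ph N s (x - y) := by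
  rw [En]
  push_cast
  simp_rw [integral_sq]
  rw [Finset.sum_comm, Finset.mul_sum]
  refine Finset.sum_congr rfl fun x _ => ?_
  rw [Finset.sum_comm, Finset.mul_sum]
  refine Finset.sum_congr rfl fun y _ => ?_
  rw [ph, ← Finset.mul_sum, ← Finset.mul_sum]
  ring

/-- child map -/
def child {M N L : ℕ} (s : Fin M → Fin d → Fin N) (p : Fin M × (Fin d → Fin L)) :
    Fin d → Fin (N * L) := fun j => finProdFinEquiv (s p.1 j, p.2 j)

lemma child_val {M N L : ℕ} (s : Fin M → Fin d → Fin N) (p : Fin M × (Fin d → Fin L)) (j : Fin d) :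
    ((child s p j : ℕ)) = (p.2 j : ℕ) + L * (s p.1 j : ℕ) := by
  simp [child, finProdFinEquiv]

lemma ph_refine {M : ℕ} (N L : ℕ) (hN : 1 ≤ N) (hL : 1 ≤ L) (s : Fin M → Fin d → Fin N)
    (z : Fin d → ℤ) :
    ph N s z = (∏ j, bb ((z j : ℝ) / (N * L : ℕ))) *
      ∑ p : Fin M × (Fin d → Fin L), ((1 / (M * L ^ d) : ℝ) : ℂ) *
        ee (∑ j, (z j : ℝ) * ((child s p j : ℕ) : ℝ) / (N * L : ℕ)) := by
  have hL0 : (L : ℝ) ≠ 0 := by positivity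
  have hN0 : (N : ℝ) ≠ 0 := by positivity
  have h1 : ∏ j, bb ((z j : ℝ) / N) = (1 / L) ^ d * (∑ b : Fin d → Fin L,
      ee (∑ j, (z j : ℝ) * ((b j : ℕ) : ℝ) / (N * L : ℕ))) * ∏ j, bb ((z j : ℝ) / (N * L : ℕ)) := by
    have : ∀ j, bb ((z j : ℝ) / N) = (1 / L) * (∑ a : Fin L,
        ee ((z j : ℝ) * ((a : ℕ) : ℝ) / (N * L : ℕ))) * bb ((z j : ℝ) / (N * L : ℕ)) := by
      intro j
      rw [bb_subdiv _ L hL, ← Finset.sum_mul, mul_assoc]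
      rw [← Fin.sum_univ_eq_sum_range (fun a => ee ((z j : ℝ) / N * a / L)) L]
      have e : (z j : ℝ) / N / L = (z j : ℝ) / (N * L : ℕ) := by push_cast; field_simp
      rw [e]
      congr 2
      refine Finset.sum_congr rfl fun a _ => ?_
      congr 1; push_cast; field_simp
    simp_rw [this, Finset.prod_mul_distrib]
    simp only [Finset.prod_const, Finset.card_univ, Fintype.card_fin]
    congr 2
    have := Finset.prod_univ_sum (κ := fun _ : Fin d => Fin L) (fun _ => Finset.univ)
      (fun j a => ee ((z j : ℝ) * ((a : ℕ) : ℝ) / (N * L : ℕ)))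
    rw [Fintype.piFinset_univ] at this
    rw [this]
    simp_rw [ee_sum]
  rw [ph, h1, ← Finset.mul_sum, Fintype.sum_prod_type]
  have h2 : ∀ (i : Fin M) (b : Fin d → Fin L),
      ee (∑ j, (z j : ℝ) * ((child s (i, b) j : ℕ) : ℝ) / (N * L : ℕ)) =
      ee (∑ j, (z j : ℝ) * ((s i j : ℕ) : ℝ) / N) * ee (∑ j, (z j : ℝ) * ((b j : ℕ) : ℝ) / (N * L : ℕ)) := by
    intro i b
    rw [← ee_add, ← Finset.sum_add_distrib]
    congr 1
    refine Finset.sum_congr rfl fun j _ => ?_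
    rw [child_val]; push_cast; field_simp; ring
  simp_rw [h2, ← Finset.mul_sum, ← Finset.sum_mul]
  push_cast
  have : (L : ℂ) ≠ 0 := by exact_mod_cast hL0
  rw [one_div_pow]
  field_simp

/-- reduction mod `N` -/
def red (N : ℕ) (hN : 1 ≤ N) (z : Fin d → ℤ) : Fin d → Fin N := fun j =>
  ⟨(z j % N).toNat, by
    have := Int.emod_lt_of_pos (z j) (b := N) (by omega)
    have := Int.emod_nonneg (z j) (b := N) (by omega)
    omega⟩

lemma red_val (N : ℕ) (hN : 1 ≤ N) (z : Fin d → ℤ) (j : Fin d) :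
    (((red N hN z j : ℕ)) : ℤ) = z j % N := by
  have := Int.emod_nonneg (z j) (b := N) (by omega)
  simp [red, this]

lemma ee_red (N : ℕ) (hN : 1 ≤ N) (z : Fin d → ℤ) (g : Fin d → Fin N) :
    ee (∑ j, (z j : ℝ) * ((g j : ℕ) : ℝ) / N) = chi N (red N hN z) g := by
  have hN0 : (N : ℝ) ≠ 0 := by positivity
  have : ∑ j, (z j : ℝ) * ((g j : ℕ) : ℝ) / N = ((∑ j, (z j / N) * (g j : ℕ) : ℤ) : ℝ) +
      ∑ j, (((red N hN z j : ℕ) : ℝ) * ((g j : ℕ) : ℝ) / N) := by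
    push_cast
    rw [← Finset.sum_add_distrib]
    refine Finset.sum_congr rfl fun j _ => ?_
    have h1 : (z j : ℝ) = N * ((z j / N : ℤ) : ℝ) + ((red N hN z j : ℕ) : ℝ) := by
      have h2 : ((red N hN z j : ℕ) : ℝ) = ((z j % N : ℤ) : ℝ) := by
        rw [← red_val N hN]; simp
      rw [h2]
      exact_mod_cast (Int.mul_ediv_add_emod (z j) N).symm
    rw [h1]
    field_simp
  rw [this, ee_add, ee_int, one_mul, chi]

/-- closeness of energies for sparse functions -/
lemma En_close {M M' : ℕ} (hM' : 1 ≤ M') (N L : ℕ) (hN : 1 ≤ N) (hL : 1 ≤ L)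
    (s : Fin M → Fin d → Fin N)
    (s' : Fin M' → Fin M × (Fin d → Fin L)) (θ : ℝ)
    (h : ∀ x : Fin d → Fin (N * L), ‖∑ i, chi (N * L) x (child s (s' i)) -
      M' * ∑ p, ((1 / (M * L ^ d) : ℝ) : ℂ) * chi (N * L) x (child s p)‖ ≤ M' * θ)
    (A : Finset (Fin d → ℤ)) (f : (Fin d → ℤ) → ℂ) :
    En (N * L) (fun i => child s (s' i)) A f ≤ En N s A f + θ * (A.card * ∑ x ∈ A, ‖f x‖ ^ 2) := by
  have hNL : 1 ≤ N * L := Nat.mul_pos hN hL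
  have hM0 : (0 : ℝ) < M' := by exact_mod_cast hM'
  have hM0c : (M' : ℂ) ≠ 0 := by exact_mod_cast hM0.ne'
  have hph : ∀ z, ‖ph (N * L) (fun i => child s (s' i)) z - ph N s z‖ ≤ θ := by
    intro z
    rw [ph_refine N L hN hL s z, ph, ← mul_sub, norm_mul]
    simp_rw [ee_red (N * L) hNL]
    have h1 := h (red (N * L) hNL z)
    have hb : ‖∏ j, bb ((z j : ℝ) / (N * L : ℕ))‖ ≤ 1 := by
      rw [norm_prod]
      exact Finset.prod_le_one (fun _ _ => norm_nonneg _) fun _ _ => norm_bb _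
    have h2 : ‖1 / (M' : ℂ) * ∑ i, chi (N * L) (red (N * L) hNL z) (child s (s' i)) -
        ∑ p, ((1 / (M * L ^ d) : ℝ) : ℂ) * chi (N * L) (red (N * L) hNL z) (child s p)‖ ≤ θ := by
      have : (1 / (M' : ℂ) * ∑ i, chi (N * L) (red (N * L) hNL z) (child s (s' i)) -
        ∑ p, ((1 / (M * L ^ d) : ℝ) : ℂ) * chi (N * L) (red (N * L) hNL z) (child s p)) =
        (1 / (M' : ℂ)) * (∑ i, chi (N * L) (red (N * L) hNL z) (child s (s' i)) -
      M' * ∑ p, ((1 / (M * L ^ d) : ℝ) : ℂ) * chi (N * L) (red (N * L) hNL z) (child s p)) := by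
        field_simp
      rw [this, norm_mul, norm_div, norm_one, Complex.norm_natCast, one_div_mul_eq_div,
        div_le_iff₀ hM0]
      linarith
    calc _ ≤ 1 * θ := mul_le_mul hb h2 (norm_nonneg _) zero_le_one
      _ = θ := one_mul _
  have hθ0 : 0 ≤ θ := (norm_nonneg _).trans (hph 0)
  have key : ((En (N * L) (fun i => child s (s' i)) A f - En N s A f : ℝ) : ℂ) =
      ∑ x ∈ A, ∑ y ∈ A, f x * (starRingEnd ℂ) (f y) *
        (ph (N * L) (fun i => child s (s' i)) (x - y) - ph N s (x - y)) := by
    push_cast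
    rw [En_eq, En_eq, ← Finset.sum_sub_distrib]
    refine Finset.sum_congr rfl fun x _ => ?_
    rw [← Finset.sum_sub_distrib]
    refine Finset.sum_congr rfl fun y _ => ?_
    ring
  have h3 : ‖((En (N * L) (fun i => child s (s' i)) A f - En N s A f : ℝ) : ℂ)‖ ≤
      θ * (∑ x ∈ A, ‖f x‖) ^ 2 := by
    rw [key, sq, Finset.sum_mul_sum, Finset.mul_sum]
    refine (norm_sum_le _ _).trans (Finset.sum_le_sum fun x _ => ?_)
    rw [Finset.mul_sum]
    refine (norm_sum_le _ _).trans (Finset.sum_le_sum fun y _ => ?_)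
    rw [norm_mul, norm_mul, RCLike.norm_conj, mul_comm]
    exact mul_le_mul_of_nonneg_right (hph _) (by positivity)
  rw [Complex.norm_real, Real.norm_eq_abs] at h3
  have h4 : (∑ x ∈ A, ‖f x‖) ^ 2 ≤ A.card * ∑ x ∈ A, ‖f x‖ ^ 2 := sq_sum_le_card_mul_sum_sq
  have h5 := mul_le_mul_of_nonneg_left h4 hθ0
  linarith [le_abs_self (En (N * L) (fun i => child s (s' i)) A f - En N s A f)]

/-- folded function -/
noncomputable def fold (N : ℕ) (hN : 1 ≤ N) (A : Finset (Fin d → ℤ)) (f : (Fin d → ℤ) → ℂ)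
    (u : Fin d → ℝ) (z : Fin d → Fin N) : ℂ :=
  ∑ x ∈ A with red N hN x = z, f x * ee (∑ j, (x j : ℝ) / N * u j)

lemma Tf_fold (N : ℕ) (hN : 1 ≤ N) (A : Finset (Fin d → ℤ)) (f : (Fin d → ℤ) → ℂ)
    (u : Fin d → ℝ) (s : Fin d → Fin N) :
    Tf A f (pt N s u) = tr (chi N) (fold N hN A f u) s := by
  rw [Tf, tr, ← Finset.sum_fiberwise A (red N hN)]
  refine Finset.sum_congr rfl fun z _ => ?_
  rw [fold, Finset.sum_mul]
  refine Finset.sum_congr rfl fun x hx => ?_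
  rw [← (Finset.mem_filter.1 hx).2, ← ee_red, mul_assoc, ← ee_add, ← Finset.sum_add_distrib]
  congr 2
  refine Finset.sum_congr rfl fun j _ => ?_
  rw [pt]; ring

lemma fold_supp (N : ℕ) (hN : 1 ≤ N) (A : Finset (Fin d → ℤ)) (f : (Fin d → ℤ) → ℂ)
    (u : Fin d → ℝ) :
    (Finset.univ.filter fun z => fold N hN A f u z ≠ 0).card ≤ min A.card (N ^ d) := by
  classical
  refine le_min ?_ ?_
  · refine le_trans (Finset.card_le_card (t := A.image (red N hN)) ?_) Finset.card_image_le
    intro z hz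
    rw [Finset.mem_filter] at hz
    obtain ⟨x, hx, -⟩ := Finset.exists_ne_zero_of_sum_ne_zero hz.2
    rw [Finset.mem_filter] at hx
    exact Finset.mem_image.2 ⟨x, hx⟩
  · refine (Finset.card_le_univ _).trans ?_
    simp

lemma continuous_fold (N : ℕ) (hN : 1 ≤ N) (A : Finset (Fin d → ℤ)) (f : (Fin d → ℤ) → ℂ)
    (z : Fin d → Fin N) : Continuous fun u => fold N hN A f u z := by
  unfold fold
  refine continuous_finsetSum _ fun x _ => continuous_const.mul (continuous_ee.comp ?_)
  fun_prop

lemma integral_fold (N : ℕ) (hN : 1 ≤ N) (A : Finset (Fin d → ℤ)) (f : (Fin d → ℤ) → ℂ) :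
    ∫ u in Set.Icc (0 : Fin d → ℝ) 1, ∑ z, ‖fold N hN A f u z‖ ^ 2 = ∑ x ∈ A, ‖f x‖ ^ 2 := by
  have hN0 : (N : ℝ) ≠ 0 := by positivity
  have hc : ∀ z, Continuous fun u => ‖fold N hN A f u z‖ ^ 2 := fun z =>
    (continuous_fold N hN A f z).norm.pow 2
  rw [integral_finsetSum _ fun z _ => (hc z).integrableOn_Icc]
  rw [← Finset.sum_fiberwise A (red N hN)]
  refine Finset.sum_congr rfl fun z _ => ?_
  set B := A.filter fun x => red N hN x = z with hB
  have hfold : ∀ u, fold N hN A f u z = Tf B f (pt N (fun _ => ⟨0, hN⟩) u) := by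
    intro u
    rw [fold, Tf]
    refine Finset.sum_congr rfl fun x _ => ?_
    congr 2
    refine Finset.sum_congr rfl fun j _ => ?_
    simp [pt]; ring
  simp_rw [hfold]
  have h := integral_sq B f N (fun _ => ⟨0, hN⟩)
  have h2 : ∑ x ∈ B, ∑ y ∈ B, f x * (starRingEnd ℂ) (f y) * ((∏ j, bb (((x - y) j : ℝ) / N)) *
        ee (∑ j, ((x - y) j : ℝ) * (((⟨0, hN⟩ : Fin N) : ℕ) : ℝ) / N)) =
        ((∑ x ∈ B, ‖f x‖ ^ 2 : ℝ) : ℂ) := by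
    push_cast
    refine Finset.sum_congr rfl fun x hx => ?_
    rw [Finset.sum_eq_single x]
    · simp [bb_zero, ee_zero, Complex.mul_conj']
    · intro y hy hyx
      obtain ⟨j, hj⟩ := Function.ne_iff.1 hyx
      have hxz := (Finset.mem_filter.1 hx).2
      have hyz := (Finset.mem_filter.1 hy).2
      have h3 : x j % N = y j % N := by
        rw [← red_val N hN, ← red_val N hN, hxz, hyz]
      obtain ⟨c, hc⟩ := Int.ModEq.dvd (show y j ≡ x j [ZMOD N] from h3.symm)
      have h0 : ∏ j, bb (((x - y) j : ℝ) / N) = 0 := by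
        refine Finset.prod_eq_zero (Finset.mem_univ j) ?_
        have h4 : (((x - y) j : ℤ) : ℝ) / N = (c : ℝ) := by
          rw [Pi.sub_apply, hc]; push_cast; field_simp
        rw [h4]
        refine bb_int c ?_
        rintro rfl
        apply hj
        simp at hc; omega
      rw [h0]; simp
    · intro h; exact absurd hx h
  rw [h2] at h
  exact_mod_cast h

lemma En_le {M : ℕ} (hM : 1 ≤ M) (N : ℕ) (hN : 1 ≤ N) (s : Fin M → Fin d → Fin N)
    (A : Finset (Fin d → ℤ)) (f : (Fin d → ℤ) → ℂ) (C : ℝ)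
    (h : ∀ (F : (Fin d → Fin N) → ℂ), (Finset.univ.filter fun z => F z ≠ 0).card ≤ min A.card (N ^ d) →
      ∑ i, ‖tr (chi N) F (s i)‖ ^ 2 ≤ C * ∑ z, ‖F z‖ ^ 2) :
    En N s A f ≤ C / M * ∑ x ∈ A, ‖f x‖ ^ 2 := by
  have hM0 : (0 : ℝ) < M := by exact_mod_cast hM
  have hc : ∀ i, Continuous fun u => ‖Tf A f (pt N (s i) u)‖ ^ 2 := fun i =>
    (((continuous_Tf A f).comp (continuous_pt N (s i))).norm).pow 2
  rw [En, ← integral_finsetSum _ fun i _ => (hc i).integrableOn_Icc, ← integral_fold N hN A f,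
    div_mul_eq_mul_div, div_mul_eq_mul_div, one_mul]
  refine div_le_div_of_nonneg_right ?_ hM0.le
  rw [← integral_const_mul]
  refine integral_mono (continuous_finsetSum _ fun i _ => hc i).integrableOn_Icc
    (continuous_const.mul (continuous_finsetSum _ fun z _ =>
      (continuous_fold N hN A f z).norm.pow 2)).integrableOn_Icc fun u => ?_
  simp_rw [Tf_fold N hN]
  exact h _ (fold_supp N hN A f u)

end PR

namespace PR
variable {d : ℕ}

lemma ev_log (d : ℕ) (hd : 0 < d) (K c : ℝ) (hK : 0 < K) (hc : 0 < c) :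
    ∀ᶠ R : ℝ in Filter.atTop, K * (Real.log (8 * R ^ d)) ^ 3 ≤ R ^ c := by
  have hd' : (0 : ℝ) < d := by exact_mod_cast hd
  have h1 := isLittleO_log_rpow_rpow_atTop (s := c / d) 3 (by positivity)
  have h2 : Filter.Tendsto (fun R : ℝ => 8 * R ^ d) Filter.atTop Filter.atTop :=
    Filter.Tendsto.const_mul_atTop (by norm_num) (Filter.tendsto_pow_atTop hd.ne')
  have h3 := (h1.comp_tendsto h2).def (c := 1 / (K * 8 ^ (c / d))) (by positivity)
  filter_upwards [h3, Filter.eventually_ge_atTop 1] with R hR hR1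
  have hR0 : (0 : ℝ) ≤ R := by linarith
  simp only [Function.comp] at hR
  have e1 : (8 * R ^ d) ^ (c / d) = 8 ^ (c / d) * R ^ c := by
    rw [Real.mul_rpow (by norm_num) (by positivity), ← Real.rpow_natCast R d, ← Real.rpow_mul hR0]
    congr 2; field_simp
  have e2 : Real.log (8 * R ^ d) ^ (3 : ℝ) = Real.log (8 * R ^ d) ^ 3 := by
    exact_mod_cast Real.rpow_natCast _ 3
  rw [e1, e2] at hR
  have hp : (0 : ℝ) ≤ R ^ c := by positivity
  have hq : (0 : ℝ) < 8 ^ (c / d) := by positivity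
  rw [Real.norm_of_nonneg (mul_nonneg hq.le hp)] at hR
  have h4 := (le_abs_self _).trans hR
  calc K * Real.log (8 * R ^ d) ^ 3 ≤ K * (1 / (K * 8 ^ (c / d)) * (8 ^ (c / d) * R ^ c)) :=
        mul_le_mul_of_nonneg_left h4 hK.le
    _ = R ^ c := by field_simp

lemma child_weight {M N L : ℕ} (hN : 1 ≤ N) (hL : 1 ≤ L) (hM : 1 ≤ M) (s : Fin M → Fin d → Fin N)
    (φ : (Fin d → Fin (N * L)) → ℝ) (hφ : ∀ g, 0 ≤ φ g) :
    ∑ p : Fin M × (Fin d → Fin L), (1 / (M * L ^ d) : ℝ) * φ (child s p) ≤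
      ((N : ℝ) ^ d) / ((N * L) ^ d : ℕ) * ∑ g, φ g := by
  have hM0 : (0 : ℝ) < M := by exact_mod_cast hM
  have hL0 : (0 : ℝ) < L := by exact_mod_cast hL
  have hN0 : (0 : ℝ) < N := by exact_mod_cast hN
  rw [← Finset.mul_sum, Fintype.sum_prod_type]
  have h1 : ∀ i : Fin M, ∑ b : Fin d → Fin L, φ (child s (i, b)) ≤ ∑ g, φ g := by
    intro i
    have hinj : Function.Injective fun b : Fin d → Fin L => child s (i, b) := by
      intro b b' h
      funext j
      have h2 := congrFun h j
      have h3 := child_val s (i, b) j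
      have h4 := child_val s (i, b') j
      simp only at h2
      rw [h2, h4] at h3
      ext; simpa using h3.symm
    rw [← Finset.sum_image (f := φ) (s := Finset.univ) (g := fun b => child s (i, b))
      (fun a _ b _ h => hinj h)]
    exact Finset.sum_le_sum_of_subset_of_nonneg (Finset.subset_univ _) fun g _ _ => hφ g
  calc (1 / (M * L ^ d) : ℝ) * ∑ i : Fin M, ∑ b : Fin d → Fin L, φ (child s (i, b))
      ≤ (1 / (M * L ^ d) : ℝ) * ∑ i : Fin M, ∑ g, φ g :=
        mul_le_mul_of_nonneg_left (Finset.sum_le_sum fun i _ => h1 i) (by positivity)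
    _ = _ := by
      rw [Finset.sum_const, Finset.card_univ, Fintype.card_fin, nsmul_eq_mul]
      push_cast
      rw [mul_pow]
      field_simp

set_option maxHeartbeats 1000000 in
lemma stage (hd : 0 < d) {M N : ℕ} (hN : 1 ≤ N) (hM : 1 ≤ M) (s : Fin M → Fin d → Fin N)
    (β η ε : ℝ) (hβ : 0 < β) (hβd : β ≤ d) (hη : 0 < η) (hε : 0 < ε) (B : ℕ) :
    ∃ (L M' : ℕ) (s' : Fin M' → Fin M × (Fin d → Fin L)), 1 ≤ L ∧ B ≤ N * L ∧ 1 ≤ M' ∧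
      (M' : ℝ) ≤ ((N * L : ℕ) : ℝ) ^ β ∧
      ∀ (A : Finset (Fin d → ℤ)) (f : (Fin d → ℤ) → ℂ),
        En (N * L) (fun i => child s (s' i)) A f ≤ En N s A f +
          η * (A.card : ℝ) ^ (1 - β / d + ε) * ∑ x ∈ A, ‖f x‖ ^ 2 := by
  have hd' : (0 : ℝ) < d := by exact_mod_cast hd
  have hev : ∀ᶠ R : ℝ in Filter.atTop, 128 * (Real.log (8 * R ^ d)) ^ 3 ≤ R ^ β ∧
      (128 / η ^ 2) * (Real.log (8 * R ^ d)) ^ 3 ≤ R ^ (β / 2) ∧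
      (200000 * N ^ d / η) * (Real.log (8 * R ^ d)) ^ 3 ≤ R ^ (β / 4 * ε) ∧ (B : ℝ) ≤ R ∧ 1 ≤ R := by
    have hN0 : (0 : ℝ) < N := by exact_mod_cast hN
    filter_upwards [ev_log d hd 128 β (by norm_num) hβ,
      ev_log d hd (128 / η ^ 2) (β / 2) (by positivity) (by positivity),
      ev_log d hd (200000 * N ^ d / η) (β / 4 * ε) (by positivity) (by positivity),
      Filter.eventually_ge_atTop (B : ℝ), Filter.eventually_ge_atTop (1 : ℝ)] with R a b c e g
    exact ⟨a, b, c, e, g⟩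
  have htend : Filter.Tendsto (fun L : ℕ => (N : ℝ) * L) Filter.atTop Filter.atTop :=
    Filter.Tendsto.const_mul_atTop (by exact_mod_cast hN) tendsto_natCast_atTop_atTop
  obtain ⟨L, ⟨hR1, hR2, hR3, hRB, hR0⟩, hL⟩ :=
    ((htend.eventually hev).and (Filter.eventually_ge_atTop 1)).exists
  set R : ℝ := (N : ℝ) * L with hR
  have hRc : ((N * L : ℕ) : ℝ) = R := by rw [hR]; push_cast; rfl
  have hRpos : 0 < R := by linarith
  set ℓ := Real.log (8 * R ^ d) with hℓ
  have hRd : (1 : ℝ) ≤ R ^ d := one_le_pow₀ hR0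
  have hexp : Real.exp ℓ = 8 * R ^ d := by rw [hℓ, Real.exp_log (by positivity)]
  have hℓ1 : 1 ≤ ℓ := by
    rw [hℓ, Real.le_log_iff_exp_le (by positivity)]
    linarith [Real.exp_one_lt_d9]
  have hℓ3 : ℓ ≤ ℓ ^ 3 := by nlinarith [sq_nonneg (ℓ - 1)]
  have hRβ1 : 1 ≤ R ^ β := Real.one_le_rpow hR0 hβ.le
  set M' := ⌊R ^ β⌋₊ with hM'
  have hM'1 : 1 ≤ M' := Nat.le_floor (by simpa using hRβ1)
  have hM'le : (M' : ℝ) ≤ R ^ β := Nat.floor_le (by linarith)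
  have hM'ge : R ^ β / 2 ≤ M' := by
    have h1 : (1 : ℝ) ≤ M' := by exact_mod_cast hM'1
    have := Nat.lt_floor_add_one (R ^ β)
    linarith
  have hM'pos : (0 : ℝ) < M' := by exact_mod_cast hM'1
  set θ := 8 * √(2 * ℓ / R ^ β) with hθ
  have hθsq : θ ^ 2 = 128 * ℓ / R ^ β := by
    rw [hθ, mul_pow, Real.sq_sqrt (by positivity)]; ring
  have hθpos : 0 < θ := by rw [hθ]; positivity
  have hθ1 : θ ≤ 1 := by
    apply le_of_sq_le_sq _ zero_le_one
    rw [hθsq, one_pow, div_le_one (by positivity)]; linarith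
  have hθη : θ * R ^ (β / 4) ≤ η := by
    apply le_of_sq_le_sq _ hη.le
    rw [mul_pow, hθsq, ← Real.rpow_natCast (R ^ (β / 4)) 2, ← Real.rpow_mul hRpos.le]
    have e1 : R ^ β = R ^ (β / 2) * R ^ (β / 2) := by rw [← Real.rpow_add hRpos]; congr 1; ring
    have e2 : β / 4 * ((2 : ℕ) : ℝ) = β / 2 := by push_cast; ring
    have e3 : 0 < R ^ (β / 2) := by positivity
    rw [e2, e1]
    rw [div_mul_eq_mul_div, div_le_iff₀ (by positivity)]
    rw [div_mul_eq_mul_div, div_le_iff₀ (by positivity)] at hR2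
    nlinarith
  have hmθ : 64 * ℓ ≤ M' * θ ^ 2 := by
    rw [hθsq]
    calc 64 * ℓ = R ^ β / 2 * (128 * ℓ / R ^ β) := by field_simp; ring
      _ ≤ _ := mul_le_mul_of_nonneg_right hM'ge (by positivity)
  have hNL : 1 ≤ N * L := Nat.mul_pos hN hL
  have hn : 1 ≤ (N * L) ^ d := Nat.one_le_pow _ _ hNL
  have hcard : Fintype.card (Fin d → Fin (N * L)) = (N * L) ^ d := by simp
  have hD : (1 : ℝ) ≤ (N : ℝ) ^ d := one_le_pow₀ (by exact_mod_cast hN)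
  obtain ⟨s', hs1, hs2⟩ := rip (P := Fin M × (Fin d → Fin L)) ((N * L) ^ d) hn hcard hcard
    (chi (N * L)) (norm_chi _) (orth (N * L) hNL) (fun _ => (1 / (M * L ^ d) : ℝ))
    (fun _ => by positivity)
    (by
      have : (M : ℝ) ≠ 0 := by positivity
      have : (L : ℝ) ≠ 0 := by positivity
      simp; field_simp) (child s) ((N : ℝ) ^ d) hD
    (fun φ hφ => child_weight hN hL hM s φ hφ) ℓ hℓ1
    (by rw [hexp]; push_cast; exact le_rfl) M' θ hθpos hθ1 hmθ
  refine ⟨L, M', s', hL, by exact_mod_cast hRc ▸ hRB, hM'1, by rw [hRc]; exact hM'le, fun A f => ?_⟩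
  set F := ∑ x ∈ A, ‖f x‖ ^ 2 with hF
  have hF0 : 0 ≤ F := Finset.sum_nonneg fun x _ => by positivity
  have hβd1 : 0 ≤ 1 - β / d := by
    rw [sub_nonneg, div_le_one hd']; exact hβd
  rcases Nat.eq_zero_or_pos A.card with hk0 | hkpos
  · have := En_close hM'1 N L hN hL s s' θ hs1 A f
    have hF00 : F = 0 := by rw [hF, Finset.card_eq_zero.1 hk0]; simp
    rw [hk0] at this
    rw [hF00]; simpa using this
  have hk1 : (1 : ℝ) ≤ A.card := by exact_mod_cast hkpos
  by_cases hk : (A.card : ℝ) ≤ R ^ (β / 4)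
  · refine (En_close hM'1 N L hN hL s s' θ hs1 A f).trans (add_le_add_right ?_ _)
    rw [← mul_assoc]
    refine mul_le_mul_of_nonneg_right ?_ hF0
    have h1 : 1 ≤ (A.card : ℝ) ^ (1 - β / d + ε) := Real.one_le_rpow hk1 (by linarith)
    calc θ * (A.card : ℝ) ≤ θ * R ^ (β / 4) := mul_le_mul_of_nonneg_left hk hθpos.le
      _ ≤ η * 1 := by linarith
      _ ≤ _ := mul_le_mul_of_nonneg_left h1 hη.le
  · push Not at hk
    have hE0 : 0 ≤ En N s A f := by
      rw [En]
      refine mul_nonneg (by positivity) (Finset.sum_nonneg fun i _ => ?_)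
      exact integral_nonneg fun u => by positivity
    have h1 := En_le hM'1 (N * L) hNL (fun i => child s (s' i)) A f
      (50000 * ℓ ^ 3 * ((N : ℝ) ^ d * M' + (min A.card ((N * L) ^ d) : ℕ)))
      (fun F hF => hs2 F _ hF)
    refine h1.trans (le_trans ?_ (le_add_of_nonneg_left hE0))
    refine mul_le_mul_of_nonneg_right ?_ hF0
    set m : ℕ := min A.card ((N * L) ^ d) with hm
    have hkε : R ^ (β / 4 * ε) ≤ (A.card : ℝ) ^ ε := by
      rw [Real.rpow_mul hRpos.le]
      exact Real.rpow_le_rpow (by positivity) hk.le hε.le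
    have hkβ : 1 ≤ (A.card : ℝ) ^ (1 - β / d) := Real.one_le_rpow hk1 hβd1
    have hm1 : (1 : ℝ) ≤ m := by
      rw [hm]; exact_mod_cast le_min hkpos hn
    have hmk : (m : ℝ) ≤ A.card := by exact_mod_cast min_le_left _ _
    have hmR : (m : ℝ) ≤ R ^ d := by
      rw [← hRc]; exact_mod_cast min_le_right _ _
    have hmle : (m : ℝ) ≤ (A.card : ℝ) ^ (1 - β / d) * R ^ β := by
      calc (m : ℝ) = (m : ℝ) ^ (1 - β / d) * (m : ℝ) ^ (β / d) := by
            rw [← Real.rpow_add (by linarith)]; simp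
        _ ≤ (A.card : ℝ) ^ (1 - β / d) * (R ^ d) ^ (β / d) :=
            mul_le_mul (Real.rpow_le_rpow (by positivity) hmk hβd1)
              (Real.rpow_le_rpow (by positivity) hmR (by positivity)) (by positivity) (by positivity)
        _ = _ := by
            rw [← Real.rpow_natCast R d, ← Real.rpow_mul hRpos.le]
            congr 2; field_simp
    have hmM : (m : ℝ) ≤ 2 * (A.card : ℝ) ^ (1 - β / d) * M' := by
      calc (m : ℝ) ≤ (A.card : ℝ) ^ (1 - β / d) * R ^ β := hmle
        _ ≤ (A.card : ℝ) ^ (1 - β / d) * (2 * M') :=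
          mul_le_mul_of_nonneg_left (by linarith) (by linarith)
        _ = _ := by ring
    rw [div_le_iff₀ hM'pos, Real.rpow_add (by linarith)]
    rw [div_mul_eq_mul_div, div_le_iff₀ hη] at hR3
    set a := (A.card : ℝ) ^ (1 - β / d) with ha
    set b := (A.card : ℝ) ^ ε with hb
    have hDa : (N : ℝ) ^ d * M' + m ≤ 3 * (N : ℝ) ^ d * a * M' := by
      have : (N : ℝ) ^ d * M' ≤ (N : ℝ) ^ d * a * M' := by
        refine mul_le_mul_of_nonneg_right ?_ hM'pos.le
        nlinarith
      have h2 : 2 * a * M' ≤ 2 * (N : ℝ) ^ d * a * M' := by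
        refine mul_le_mul_of_nonneg_right ?_ hM'pos.le
        nlinarith
      linarith
    have hb' : 200000 * (N : ℝ) ^ d * ℓ ^ 3 ≤ η * b := by
      have := mul_le_mul_of_nonneg_left hkε hη.le
      linarith
    have hℓp : 0 ≤ ℓ ^ 3 := by positivity
    calc 50000 * ℓ ^ 3 * ((N : ℝ) ^ d * M' + m)
        ≤ 50000 * ℓ ^ 3 * (3 * (N : ℝ) ^ d * a * M') :=
          mul_le_mul_of_nonneg_left hDa (by positivity)
      _ = 150000 * (N : ℝ) ^ d * ℓ ^ 3 * (a * M') := by ring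
      _ ≤ 200000 * (N : ℝ) ^ d * ℓ ^ 3 * (a * M') := by
          refine mul_le_mul_of_nonneg_right ?_ (by positivity)
          have : 0 ≤ (N : ℝ) ^ d * ℓ ^ 3 := by positivity
          linarith
      _ ≤ η * b * (a * M') := mul_le_mul_of_nonneg_right hb' (by positivity)
      _ = _ := by ring

end PR

namespace PR
variable {d : ℕ}

/-- construction state -/
structure St (d : ℕ) where
  N : ℕ
  M : ℕ
  s : Fin M → Fin d → Fin N
  hN : 1 ≤ N
  hM : 1 ≤ M

/-- the union of cubes -/
def St.E (S : St d) : Set (Fin d → ℝ) :=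
  ⋃ i, {ξ | ∀ j, ((S.s i j : ℕ) : ℝ) ≤ S.N * ξ j ∧ S.N * ξ j ≤ ((S.s i j : ℕ) : ℝ) + 1}

/-- energy of a state -/
noncomputable def St.En (S : St d) (A : Finset (Fin d → ℤ)) (f : (Fin d → ℤ) → ℂ) : ℝ :=
  PR.En S.N S.s A f

lemma St.isClosed (S : St d) : IsClosed S.E := by
  refine isClosed_iUnion_of_finite fun i => ?_
  have : {ξ : Fin d → ℝ | ∀ j, ((S.s i j : ℕ) : ℝ) ≤ S.N * ξ j ∧
      S.N * ξ j ≤ ((S.s i j : ℕ) : ℝ) + 1} = ⋂ j, ({ξ : Fin d → ℝ | ((S.s i j : ℕ) : ℝ) ≤ S.N * ξ j} ∩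
      {ξ : Fin d → ℝ | S.N * ξ j ≤ ((S.s i j : ℕ) : ℝ) + 1}) := by
    ext ξ; simp
  rw [this]
  refine isClosed_iInter fun j => ?_
  exact (isClosed_le continuous_const (by fun_prop)).inter
    (isClosed_le (by fun_prop) continuous_const)

lemma St.pt_mem (S : St d) (i : Fin S.M) (u : Fin d → ℝ) (hu : u ∈ Set.Icc (0 : Fin d → ℝ) 1) :
    pt S.N (S.s i) u ∈ S.E := by
  refine Set.mem_iUnion.2 ⟨i, fun j => ?_⟩
  have hN : (0 : ℝ) < S.N := by exact_mod_cast S.hN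
  have h0 := hu.1 j
  have h1 := hu.2 j
  simp only [Pi.zero_apply, Pi.one_apply] at h0 h1
  rw [pt, mul_div_cancel₀ _ hN.ne']
  constructor <;> linarith

lemma St.subset (S : St d) : S.E ⊆ Set.Icc 0 1 := by
  intro ξ hξ
  obtain ⟨i, hi⟩ := Set.mem_iUnion.1 hξ
  have hN : (0 : ℝ) < S.N := by exact_mod_cast S.hN
  refine ⟨fun j => ?_, fun j => ?_⟩
  · have := (hi j).1
    have h2 : (0 : ℝ) ≤ ((S.s i j : ℕ) : ℝ) := by positivity
    simp only [Pi.zero_apply]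
    by_contra h
    push Not at h
    nlinarith
  · have := (hi j).2
    have h2 : ((S.s i j : ℕ) : ℝ) + 1 ≤ S.N := by exact_mod_cast (S.s i j).2
    simp only [Pi.one_apply]
    by_contra h
    push Not at h
    nlinarith

lemma St.next (hd : 0 < d) (β : ℝ) (hβ : 0 < β) (hβd : β ≤ d) (n : ℕ) (S : St d) :
    ∃ S' : St d, n + 1 ≤ S'.N ∧ (S'.M : ℝ) ≤ (S'.N : ℝ) ^ β ∧ S'.E ⊆ S.E ∧
      ∀ A f, S'.En A f ≤ S.En A f + (1 / 2) ^ n * (A.card : ℝ) ^ (1 - β / d + 1 / ((n : ℝ) + 1)) *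
        ∑ x ∈ A, ‖f x‖ ^ 2 := by
  obtain ⟨L, M', s', hL, hB, hM', hM2, h⟩ := stage hd S.hN S.hM S.s β ((1 / 2) ^ n) (1 / ((n : ℝ) + 1))
    hβ hβd (by positivity) (by positivity) (n + 1)
  refine ⟨⟨S.N * L, M', fun i => child S.s (s' i), Nat.mul_pos S.hN hL, hM'⟩, hB, hM2, ?_, h⟩
  intro ξ hξ
  obtain ⟨i, hi⟩ := Set.mem_iUnion.1 hξ
  refine Set.mem_iUnion.2 ⟨(s' i).1, fun j => ?_⟩
  obtain ⟨h1, h2⟩ := hi j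
  have hL0 : (0 : ℝ) < L := by exact_mod_cast hL
  simp only [child_val] at h1 h2
  push_cast at h1 h2
  have hb : (((s' i).2 j : ℕ) : ℝ) + 1 ≤ L := by exact_mod_cast ((s' i).2 j).2
  have hb0 : (0 : ℝ) ≤ (((s' i).2 j : ℕ) : ℝ) := by positivity
  constructor
  · refine le_of_mul_le_mul_left ?_ hL0
    linarith
  · refine le_of_mul_le_mul_left ?_ hL0
    linarith

lemma St.En_le (S : St d) (A : Finset (Fin d → ℤ)) (f : (Fin d → ℤ) → ℂ) :
    S.En A f ≤ (S.N : ℝ) ^ d * ∑ x ∈ A, ‖f x‖ ^ 2 := by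
  have hM : (0 : ℝ) < S.M := by exact_mod_cast S.hM
  have := PR.En_le S.hM S.N S.hN S.s A f (S.M * (S.N : ℝ) ^ d) (fun F _ => by
    calc ∑ i, ‖tr (chi S.N) F (S.s i)‖ ^ 2 ≤ ∑ i : Fin S.M, ((S.N : ℝ) ^ d * ∑ z, ‖F z‖ ^ 2) := by
          refine Finset.sum_le_sum fun i _ => ?_
          have := tr_sq_le (chi S.N) (norm_chi S.N) F (S.s i)
          simpa using this
      _ = _ := by simp; ring)
  rwa [mul_div_cancel_left₀ _ hM.ne'] at this

lemma St.exists_measure (S : St d) : ∃ m : ProbabilityMeasure (Set.Icc (0 : Fin d → ℝ) 1),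
    ∀ g : (Fin d → ℝ) → ℝ, Continuous g → ∫ q, g (q : Fin d → ℝ) ∂(m : Measure (Set.Icc (0 : Fin d → ℝ) 1)) =
      (1 / S.M) * ∑ i, ∫ u in Set.Icc (0 : Fin d → ℝ) 1, g (pt S.N (S.s i) u) := by
  have hM : (0 : ℝ) < S.M := by exact_mod_cast S.hM
  let P : Fin S.M → Set.Icc (0 : Fin d → ℝ) 1 → Set.Icc (0 : Fin d → ℝ) 1 := fun i u =>
    ⟨pt S.N (S.s i) u, S.subset (S.pt_mem i u u.2)⟩
  have hP : ∀ i, Continuous (P i) := fun i =>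
    Continuous.subtype_mk ((continuous_pt _ _).comp continuous_subtype_val) _
  let v : Measure (Set.Icc (0 : Fin d → ℝ) 1) :=
    Measure.comap (Subtype.val : Set.Icc (0 : Fin d → ℝ) 1 → Fin d → ℝ) volume
  have hvol : v Set.univ = 1 := by
    rw [(MeasurableEmbedding.subtype_coe measurableSet_Icc).comap_apply, Set.image_univ,
      Subtype.range_coe, Real.volume_Icc_pi]
    simp
  have hprob : IsProbabilityMeasure v := ⟨hvol⟩
  let m : Measure (Set.Icc (0 : Fin d → ℝ) 1) := (ENNReal.ofReal (1 / S.M)) •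
    ∑ i : Fin S.M, Measure.map (P i) v
  have hpm : ∀ i, IsProbabilityMeasure (Measure.map (P i) v) := fun i =>
    Measure.isProbabilityMeasure_map (hP i).measurable.aemeasurable
  have hm : IsProbabilityMeasure m := ⟨by
    simp only [m, Measure.smul_apply, Measure.finsetSum_apply, measure_univ, smul_eq_mul]
    simp
    rw [ENNReal.ofReal_inv_of_pos hM, ENNReal.ofReal_natCast]
    exact ENNReal.inv_mul_cancel (by simpa using (Nat.pos_iff_ne_zero.1 S.hM)) (by simp)⟩
  refine ⟨⟨m, hm⟩, fun g hg => ?_⟩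
  have hgc : Continuous fun q : Set.Icc (0 : Fin d → ℝ) 1 => g q := hg.comp continuous_subtype_val
  have hgi : ∀ i, Integrable (fun q : Set.Icc (0 : Fin d → ℝ) 1 => g q) (Measure.map (P i) v) :=
    fun i => hgc.integrable_of_hasCompactSupport (HasCompactSupport.of_compactSpace _)
  show ∫ q, g q ∂m = _
  rw [integral_smul_measure, ENNReal.toReal_ofReal (by positivity), smul_eq_mul,
    integral_finsetSum_measure fun i _ => hgi i]
  congr 1
  refine Finset.sum_congr rfl fun i _ => ?_
  rw [integral_map (hP i).measurable.aemeasurable hgc.aestronglyMeasurable]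
  exact integral_subtype_comap measurableSet_Icc (fun u => g (pt S.N (S.s i) u))

end PR

namespace PR
variable {d : ℕ}

theorem core (hd : 0 < d) (β : ℝ) (hβ : 0 < β) (hβd : β ≤ d) :
    ∃ (K : Set (Fin d → ℝ)) (μ : Measure (Fin d → ℝ)), IsCompact K ∧ IsProbabilityMeasure μ ∧
      μ Kᶜ = 0 ∧ K ⊆ Set.Icc 0 1 ∧
      (∀ B : ℕ, ∃ (N M : ℕ) (s : Fin M → Fin d → Fin N), B ≤ N ∧ 1 ≤ N ∧ (M : ℝ) ≤ (N : ℝ) ^ β ∧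
        ∀ ξ ∈ K, ∃ i, ∀ j, ((s i j : ℕ) : ℝ) ≤ N * ξ j ∧ N * ξ j ≤ ((s i j : ℕ) : ℝ) + 1) ∧
      ∀ ε : ℝ, 0 < ε → ∃ C : ℝ, 0 ≤ C ∧ ∀ (A : Finset (Fin d → ℤ)) (f : (Fin d → ℤ) → ℂ),
        ∫ ξ, ‖Tf A f ξ‖ ^ 2 ∂μ ≤ C * (A.card : ℝ) ^ (1 - β / d + ε) * ∑ x ∈ A, ‖f x‖ ^ 2 := by
  have hd' : (0 : ℝ) < d := by exact_mod_cast hd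
  have hβd1 : 0 ≤ 1 - β / d := by
    rw [sub_nonneg, div_le_one hd']; exact hβd
  choose nx hx1 hx2 hx3 hx4 using St.next hd β hβ hβd
  let S0 : St d := ⟨1, 1, fun _ _ => 0, le_rfl, le_rfl⟩
  let S : ℕ → St d := fun n => Nat.rec S0 (fun n T => nx n T) n
  have hS : ∀ n, S (n + 1) = nx n (S n) := fun n => rfl
  have hanti : Antitone fun n => (S n).E := antitone_nat_of_succ_le fun n => by
    rw [hS]; exact hx3 n _
  have hstep : ∀ n A f, (S (n + 1)).En A f ≤ (S n).En A f +
      (1 / 2) ^ n * (A.card : ℝ) ^ (1 - β / d + 1 / ((n : ℝ) + 1)) * ∑ x ∈ A, ‖f x‖ ^ 2 := by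
    intro n; rw [hS]; exact hx4 n _
  have hbound : ∀ ε : ℝ, 0 < ε → ∃ (J : ℕ) (C : ℝ), 0 ≤ C ∧ ∀ (n : ℕ) (A : Finset (Fin d → ℤ))
      (f : (Fin d → ℤ) → ℂ), J ≤ n → (S n).En A f ≤
        C * (A.card : ℝ) ^ (1 - β / d + ε) * ∑ x ∈ A, ‖f x‖ ^ 2 := by
    intro ε hε
    obtain ⟨J, hJ⟩ := exists_nat_one_div_lt hε
    refine ⟨J, ((S J).N : ℝ) ^ d + 2, by positivity, fun n A f hn => ?_⟩
    have hF0 : 0 ≤ ∑ x ∈ A, ‖f x‖ ^ 2 := Finset.sum_nonneg fun x _ => by positivity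
    set F := ∑ x ∈ A, ‖f x‖ ^ 2 with hF
    rcases Nat.eq_zero_or_pos A.card with hk0 | hkpos
    · have hF00 : F = 0 := by rw [hF, Finset.card_eq_zero.1 hk0]; simp
      have := (S n).En_le A f
      rw [← hF, hF00] at this
      rw [hF00]; linarith
    have hk1 : (1 : ℝ) ≤ A.card := by exact_mod_cast hkpos
    have h1 : 1 ≤ (A.card : ℝ) ^ (1 - β / d + ε) := Real.one_le_rpow hk1 (by linarith)
    set a := (A.card : ℝ) ^ (1 - β / d + ε) with ha
    have hind : ∀ m, (S (J + m)).En A f ≤ (((S J).N : ℝ) ^ d + ∑ i ∈ Finset.range m, (1 / 2 : ℝ) ^ i) * a * F := by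
      intro m
      induction m with
      | zero =>
        simp only [add_zero, Finset.range_zero, Finset.sum_empty]
        refine ((S J).En_le A f).trans (mul_le_mul_of_nonneg_right ?_ hF0)
        exact le_mul_of_one_le_right (by positivity) h1
      | succ m ih =>
        rw [← add_assoc]
        refine (hstep (J + m) A f).trans ?_
        rw [Finset.sum_range_succ, ← add_assoc, add_mul, add_mul]
        refine add_le_add ih (mul_le_mul_of_nonneg_right ?_ hF0)
        refine mul_le_mul ?_ ?_ (by positivity) (by positivity)
        · exact pow_le_pow_of_le_one (by norm_num) (by norm_num) (by omega)
        · refine Real.rpow_le_rpow_of_exponent_le hk1 (add_le_add_right ?_ _)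
          refine le_trans ?_ hJ.le
          apply one_div_le_one_div_of_le (by positivity)
          push_cast; linarith [(Nat.cast_nonneg m : (0 : ℝ) ≤ m)]
    obtain ⟨m, rfl⟩ := Nat.exists_eq_add_of_le hn
    refine (hind m).trans (mul_le_mul_of_nonneg_right (mul_le_mul_of_nonneg_right ?_ (by linarith)) hF0)
    linarith [sum_geometric_two_le m]
  choose m hm using fun n => (S n).exists_measure
  let U : Ultrafilter ℕ := Filter.hyperfilter ℕ
  have hU : (U : Filter ℕ) ≤ Filter.atTop := by
    rw [← Nat.cofinite_eq_atTop]; exact Filter.hyperfilter_le_cofinite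
  obtain ⟨ν, -, hν⟩ := isCompact_univ.ultrafilter_le_nhds (U.map m) (by simp)
  have hν' : Filter.Tendsto m U (nhds ν) := hν
  rw [ProbabilityMeasure.tendsto_iff_forall_integral_tendsto] at hν'
  have hlim : ∀ g : (Fin d → ℝ) → ℝ, Continuous g → Filter.Tendsto (fun n => ∫ q, g (q : Fin d → ℝ) ∂(m n : Measure (Set.Icc (0 : Fin d → ℝ) 1))) U
      (nhds (∫ q, g (q : Fin d → ℝ) ∂(ν : Measure (Set.Icc (0 : Fin d → ℝ) 1)))) := by
    intro g hg
    exact hν' (BoundedContinuousFunction.mkOfCompact ⟨fun q => g q, hg.comp continuous_subtype_val⟩)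
  let μ : Measure (Fin d → ℝ) := Measure.map Subtype.val (ν : Measure (Set.Icc (0 : Fin d → ℝ) 1))
  have h_int : ∀ g : (Fin d → ℝ) → ℝ, Continuous g → ∫ ξ, g ξ ∂μ =
      ∫ q, g (q : Fin d → ℝ) ∂(ν : Measure (Set.Icc (0 : Fin d → ℝ) 1)) := fun g hg =>
    integral_map measurable_subtype_coe.aemeasurable hg.aestronglyMeasurable
  have hμp : IsProbabilityMeasure μ :=
    Measure.isProbabilityMeasure_map measurable_subtype_coe.aemeasurable
  have hE : ∀ n, μ ((S n).E)ᶜ = 0 := by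
    intro n
    have hne : ((S n).E).Nonempty := ⟨_, (S n).pt_mem ⟨0, (S n).hM⟩ 0 ⟨le_rfl, zero_le_one⟩⟩
    have hc : Continuous fun ξ : Fin d → ℝ => Metric.infDist ξ (S n).E := Metric.continuous_infDist_pt _
    have h0 : ∀ k, n ≤ k → ∫ q, Metric.infDist (q : Fin d → ℝ) (S n).E ∂(m k : Measure (Set.Icc (0 : Fin d → ℝ) 1)) = 0 := by
      intro k hk
      rw [hm k _ hc]
      have : ∀ i, ∫ u in Set.Icc (0 : Fin d → ℝ) 1, Metric.infDist (pt (S k).N ((S k).s i) u) (S n).E = 0 := by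
        intro i
        refine setIntegral_eq_zero_of_forall_eq_zero fun u hu => ?_
        exact Metric.infDist_zero_of_mem (hanti hk ((S k).pt_mem i u hu))
      simp [this]
    have h1 : ∫ q, Metric.infDist (q : Fin d → ℝ) (S n).E ∂(ν : Measure (Set.Icc (0 : Fin d → ℝ) 1)) = 0 := by
      refine tendsto_nhds_unique (hlim _ hc) ?_
      refine Filter.Tendsto.congr' (f₁ := fun _ => 0) ?_ tendsto_const_nhds
      exact hU ((Filter.eventually_ge_atTop n).mono fun k hk => (h0 k hk).symm)
    have h2 : ∀ᵐ q : Set.Icc (0 : Fin d → ℝ) 1 ∂(ν : Measure (Set.Icc (0 : Fin d → ℝ) 1)), Metric.infDist (q : Fin d → ℝ) (S n).E = 0 := by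
      have hi : Integrable (fun q : Set.Icc (0 : Fin d → ℝ) 1 => Metric.infDist (q : Fin d → ℝ) (S n).E) (ν : Measure (Set.Icc (0 : Fin d → ℝ) 1)) :=
        (hc.comp continuous_subtype_val).integrable_of_hasCompactSupport (HasCompactSupport.of_compactSpace _)
      exact (integral_eq_zero_iff_of_nonneg (fun _ => Metric.infDist_nonneg) hi).1 h1
    rw [Measure.map_apply measurable_subtype_coe (S n).isClosed.measurableSet.compl]
    refine measure_mono_null (fun q hq => ?_) h2
    intro h3
    exact hq (((S n).isClosed.mem_iff_infDist_zero hne).2 h3)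
  refine ⟨⋂ n, (S n).E, μ, ?_, hμp, ?_, ?_, ?_, ?_⟩
  · refine IsCompact.of_isClosed_subset (isCompact_Icc (a := (0 : Fin d → ℝ)) (b := 1))
      (isClosed_iInter fun n => (S n).isClosed) ?_
    exact (Set.iInter_subset _ 0).trans (S 0).subset
  · rw [Set.compl_iInter]
    exact measure_iUnion_null hE
  · exact (Set.iInter_subset _ 0).trans (S 0).subset
  · intro B
    refine ⟨(S (B + 1)).N, (S (B + 1)).M, (S (B + 1)).s, ?_, (S (B + 1)).hN, ?_, ?_⟩
    · have := hx1 B (S B)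
      rw [hS]; omega
    · rw [hS]; exact hx2 B _
    · intro ξ hξ
      exact Set.mem_iUnion.1 (Set.mem_iInter.1 hξ (B + 1))
  · intro ε hε
    obtain ⟨J, C, hC, h⟩ := hbound ε hε
    refine ⟨C, hC, fun A f => ?_⟩
    have hc : Continuous fun ξ => ‖Tf A f ξ‖ ^ 2 := (continuous_Tf A f).norm.pow 2
    rw [h_int _ hc]
    refine le_of_tendsto (hlim _ hc) (hU ((Filter.eventually_ge_atTop J).mono fun n hn => ?_))
    show _ ≤ _
    rw [hm n _ hc]
    exact h n A f hn

end PR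

namespace PR
variable {d : ℕ}

lemma integral_le_of_sq {Ω : Type*} [MeasurableSpace Ω] (μ : Measure Ω) [IsProbabilityMeasure μ]
    (g : Ω → ℝ) (hg : Integrable g μ) (hg2 : Integrable (fun x => g x ^ 2) μ) (b : ℝ) (hb : 0 < b)
    (h : ∫ x, g x ^ 2 ∂μ ≤ b ^ 2) : ∫ x, g x ∂μ ≤ b := by
  have h1 : ∫ x, g x ∂μ ≤ ∫ x, (b / 2 + (1 / (2 * b)) * g x ^ 2) ∂μ := by
    refine integral_mono hg ((integrable_const _).add (hg2.const_mul _)) fun x => ?_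
    have : 0 ≤ (g x - b) ^ 2 / (2 * b) := by positivity
    have e : (g x - b) ^ 2 / (2 * b) = b / 2 + (1 / (2 * b)) * g x ^ 2 - g x := by
      field_simp; ring
    simp only
    linarith
  rw [integral_add (integrable_const _) (hg2.const_mul _), integral_const_mul] at h1
  simp at h1
  have h2 : b⁻¹ * 2⁻¹ * ∫ x, g x ^ 2 ∂μ ≤ b⁻¹ * 2⁻¹ * b ^ 2 :=
    mul_le_mul_of_nonneg_left h (by positivity)
  have e : b⁻¹ * 2⁻¹ * b ^ 2 = b / 2 := by field_simp
  linarith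

lemma norm_Tf_le (A : Finset (Fin d → ℤ)) (f : (Fin d → ℤ) → ℂ) (ξ : Fin d → ℝ) :
    ‖Tf A f ξ‖ ≤ ∑ x ∈ A, ‖f x‖ := by
  refine (norm_sum_le _ _).trans (Finset.sum_le_sum fun x _ => ?_)
  rw [norm_mul, norm_ee, mul_one]

lemma integrable_Tf (μ : Measure (Fin d → ℝ)) [IsProbabilityMeasure μ]
    (A : Finset (Fin d → ℤ)) (f : (Fin d → ℤ) → ℂ) : Integrable (fun ξ => ‖Tf A f ξ‖) μ := by
  refine Integrable.of_bound (C := ∑ x ∈ A, ‖f x‖) (continuous_Tf A f).norm.aestronglyMeasurable ?_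
  refine Filter.Eventually.of_forall fun ξ => ?_
  rw [norm_norm]; exact norm_Tf_le A f ξ

lemma integrable_Tf_sq (μ : Measure (Fin d → ℝ)) [IsProbabilityMeasure μ]
    (A : Finset (Fin d → ℤ)) (f : (Fin d → ℤ) → ℂ) : Integrable (fun ξ => ‖Tf A f ξ‖ ^ 2) μ := by
  refine Integrable.of_bound (C := (∑ x ∈ A, ‖f x‖) ^ 2)
    ((continuous_Tf A f).norm.pow 2).aestronglyMeasurable ?_
  refine Filter.Eventually.of_forall fun ξ => ?_
  rw [norm_pow, norm_norm]; exact pow_le_pow_left₀ (norm_nonneg _) (norm_Tf_le A f ξ) 2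

lemma restr1 (μ : Measure (Fin d → ℝ)) [IsProbabilityMeasure μ] (C σ p : ℝ) (hC : 0 ≤ C)
    (hσ : 0 ≤ σ) (hp : 1 ≤ p) (hpσ : p * (σ + 1) < 2)
    (h : ∀ (A : Finset (Fin d → ℤ)) (f : (Fin d → ℤ) → ℂ),
      ∫ ξ, ‖Tf A f ξ‖ ^ 2 ∂μ ≤ C * (A.card : ℝ) ^ σ * ∑ x ∈ A, ‖f x‖ ^ 2) :
    ∃ C' : ℝ, 0 ≤ C' ∧ ∀ (A : Finset (Fin d → ℤ)) (f : (Fin d → ℤ) → ℂ), ∑ x ∈ A, ‖f x‖ ^ p ≤ 1 →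
      ∫ ξ, ‖Tf A f ξ‖ ∂μ ≤ C' := by
  classical
  set r : ℝ := 2 ^ (p * (σ + 1) / 2 - 1) with hr
  have hr0 : 0 < r := by rw [hr]; positivity
  have hr1 : r < 1 := Real.rpow_lt_one_of_one_lt_of_neg (by norm_num) (by linarith)
  set a : ℝ := √(C + 1) * 2 ^ (p * (σ + 1) / 2) with ha
  have ha0 : 0 < a := by rw [ha]; positivity
  refine ⟨a * (1 - r)⁻¹, by have : 0 < 1 - r := by linarith
                            positivity, fun A f hf => ?_⟩
  have hle1 : ∀ x ∈ A, ‖f x‖ ≤ 1 := by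
    intro x hx
    have h1 : ‖f x‖ ^ p ≤ 1 := (Finset.single_le_sum (f := fun x => ‖f x‖ ^ p)
      (fun y _ => by positivity) hx).trans hf
    by_contra h2
    push Not at h2
    linarith [Real.one_lt_rpow h2 (by linarith : 0 < p)]
  have hlev : ∀ x, ∃ n : ℕ, x ∈ A → f x ≠ 0 → ‖f x‖ ≤ (1 / 2) ^ n ∧ (1 / 2) ^ (n + 1) ≤ ‖f x‖ := by
    intro x
    by_cases hx : x ∈ A ∧ f x ≠ 0
    · have h0 : 0 < ‖f x‖ := norm_pos_iff.2 hx.2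
      obtain ⟨n, hn1, hn2⟩ := exists_nat_pow_near (x := 1 / ‖f x‖) (y := 2)
        (by rw [le_div_iff₀ h0, one_mul]; exact hle1 x hx.1) (by norm_num)
      refine ⟨n, fun _ _ => ⟨?_, ?_⟩⟩
      · rw [one_div_pow, le_div_iff₀ (by positivity)]
        rwa [le_div_iff₀ h0, mul_comm] at hn1
      · rw [one_div_pow, div_le_iff₀ (by positivity)]
        rw [div_lt_iff₀ h0] at hn2
        linarith
    · exact ⟨0, fun h1 h2 => absurd ⟨h1, h2⟩ hx⟩
  choose lv hlv using hlev
  set A' := A.filter fun x => f x ≠ 0 with hA'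
  have hTf : ∀ ξ, Tf A f ξ = ∑ n ∈ A'.image lv, Tf (A'.filter fun x => lv x = n) f ξ := by
    intro ξ
    simp only [Tf]
    rw [Finset.sum_fiberwise_of_maps_to (fun x hx => Finset.mem_image_of_mem lv hx), hA',
      Finset.sum_filter]
    refine Finset.sum_congr rfl fun x _ => ?_
    split_ifs with h2
    · rfl
    · push Not at h2; rw [h2, zero_mul]
  have hn : ∀ n, ∫ ξ, ‖Tf (A'.filter fun x => lv x = n) f ξ‖ ∂μ ≤ a * r ^ n := by
    intro n
    set B := A'.filter fun x => lv x = n with hB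
    have hBm : ∀ x ∈ B, x ∈ A ∧ ‖f x‖ ≤ (1 / 2) ^ n ∧ (1 / 2) ^ (n + 1) ≤ ‖f x‖ := by
      intro x hx
      simp only [hB, hA', Finset.mem_filter] at hx
      obtain ⟨⟨h1, h2⟩, rfl⟩ := hx
      exact ⟨h1, hlv x h1 h2⟩
    have hcard : (B.card : ℝ) ≤ 2 ^ ((n + 1) * p) := by
      have h1 : ∑ x ∈ B, ((1 / 2 : ℝ) ^ (n + 1)) ^ p ≤ 1 := by
        refine le_trans (Finset.sum_le_sum fun x hx => ?_)
          (le_trans (Finset.sum_le_sum_of_subset_of_nonneg (s := B) (t := A)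
            (fun x hx => (hBm x hx).1) fun x _ _ => by positivity) hf)
        exact Real.rpow_le_rpow (by positivity) (hBm x hx).2.2 (by linarith)
      rw [Finset.sum_const, nsmul_eq_mul] at h1
      have h2 : ((1 / 2 : ℝ) ^ (n + 1)) ^ p = (2 ^ ((n + 1) * p))⁻¹ := by
        rw [one_div, inv_pow, Real.inv_rpow (by positivity), ← Real.rpow_natCast,
          ← Real.rpow_mul (by norm_num)]
        push_cast; rfl
      rw [h2, ← div_eq_mul_inv, div_le_one (by positivity)] at h1
      exact h1
    refine integral_le_of_sq μ _ (integrable_Tf μ B f) (integrable_Tf_sq μ B f) _ (by positivity) ?_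
    refine (h B f).trans ?_
    have hF : ∑ x ∈ B, ‖f x‖ ^ 2 ≤ B.card * ((1 / 2) ^ n) ^ 2 := by
      rw [← nsmul_eq_mul, ← Finset.sum_const]
      exact Finset.sum_le_sum fun x hx => pow_le_pow_left₀ (norm_nonneg _) (hBm x hx).2.1 2
    have hk0 : (0 : ℝ) ≤ B.card := by positivity
    calc C * (B.card : ℝ) ^ σ * ∑ x ∈ B, ‖f x‖ ^ 2
        ≤ (C + 1) * (B.card : ℝ) ^ σ * (B.card * ((1 / 2) ^ n) ^ 2) := by
          refine mul_le_mul ?_ hF (Finset.sum_nonneg fun x _ => by positivity) (by positivity)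
          exact mul_le_mul_of_nonneg_right (by linarith) (by positivity)
      _ ≤ (C + 1) * (2 ^ ((n + 1) * p)) ^ σ * (2 ^ ((n + 1) * p) * ((1 / 2) ^ n) ^ 2) := by
          gcongr
      _ = (a * r ^ n) ^ 2 := by
          rw [ha, mul_pow, mul_pow, Real.sq_sqrt (by linarith), hr]
          rw [← Real.rpow_natCast (2 ^ (p * (σ + 1) / 2 - 1)) n,
            ← Real.rpow_mul (by norm_num), ← Real.rpow_mul (by norm_num)]
          have e1 : ((1 / 2 : ℝ) ^ n) ^ 2 = 2 ^ (-2 * (n : ℝ)) := by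
            rw [one_div, inv_pow, inv_pow, ← Real.rpow_natCast, ← Real.rpow_natCast,
              ← Real.rpow_mul (by norm_num), ← Real.rpow_neg (by norm_num)]
            congr 1; push_cast; ring
          rw [e1, ← Real.rpow_natCast (2 ^ (p * (σ + 1) / 2)), ← Real.rpow_natCast (2 ^ _),
            ← Real.rpow_mul (by norm_num), ← Real.rpow_mul (by norm_num), mul_assoc, mul_assoc,
            ← Real.rpow_add (by norm_num), ← Real.rpow_add (by norm_num), mul_assoc,
            ← Real.rpow_add (by norm_num)]
          congr 2
          push_cast; ring
  calc ∫ ξ, ‖Tf A f ξ‖ ∂μ ≤ ∫ ξ, ∑ n ∈ A'.image lv, ‖Tf (A'.filter fun x => lv x = n) f ξ‖ ∂μ := by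
        refine integral_mono (integrable_Tf μ A f)
          (integrable_finsetSum _ fun n _ => integrable_Tf μ _ f) fun ξ => ?_
        simp only
        rw [hTf]; exact norm_sum_le _ _
    _ = ∑ n ∈ A'.image lv, ∫ ξ, ‖Tf (A'.filter fun x => lv x = n) f ξ‖ ∂μ :=
        integral_finsetSum _ fun n _ => integrable_Tf μ _ f
    _ ≤ ∑ n ∈ A'.image lv, a * r ^ n := Finset.sum_le_sum fun n _ => hn n
    _ ≤ a * (1 - r)⁻¹ := by
        rw [← Finset.mul_sum, ← tsum_geometric_of_lt_one hr0.le hr1]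
        refine mul_le_mul_of_nonneg_left ?_ ha0.le
        exact (summable_geometric_of_lt_one hr0.le hr1).sum_le_tsum _ fun n _ => by positivity

lemma restr2 (μ : Measure (Fin d → ℝ)) [IsProbabilityMeasure μ] (C' p : ℝ) (hC : 0 ≤ C') (hp : 1 ≤ p)
    (h : ∀ (A : Finset (Fin d → ℤ)) (f : (Fin d → ℤ) → ℂ), ∑ x ∈ A, ‖f x‖ ^ p ≤ 1 →
      ∫ ξ, ‖Tf A f ξ‖ ∂μ ≤ C') (A : Finset (Fin d → ℤ)) (f : (Fin d → ℤ) → ℂ) (b : ℝ) (hb : 0 < b) :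
    ∫ ξ, ‖Tf A f ξ‖ ∂μ ≤ C' * b * ((∑ x ∈ A, ‖f x‖ ^ p) / b ^ p + 1) := by
  set S := ∑ x ∈ A, ‖f x‖ ^ p with hS
  have hS0 : 0 ≤ S := Finset.sum_nonneg fun x _ => by positivity
  have hbp : 0 < b ^ p := by positivity
  -- scaling factor
  have hscale : ∀ c : ℝ, 0 < c → S ≤ c ^ p → ∫ ξ, ‖Tf A f ξ‖ ∂μ ≤ C' * c := by
    intro c hc hSc
    have h1 := h A (fun x => f x / c) (by
      have : ∀ x, ‖f x / c‖ ^ p = ‖f x‖ ^ p / c ^ p := by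
        intro x
        rw [norm_div, Complex.norm_real, Real.norm_of_nonneg hc.le,
          Real.div_rpow (norm_nonneg _) hc.le]
      simp_rw [this, ← Finset.sum_div]
      rw [div_le_one (by positivity)]; exact hSc)
    have h2 : ∀ ξ, ‖Tf A (fun x => f x / c) ξ‖ = ‖Tf A f ξ‖ / c := by
      intro ξ
      have : Tf A (fun x => f x / c) ξ = Tf A f ξ / c := by
        simp only [Tf, Finset.sum_div]
        exact Finset.sum_congr rfl fun x _ => by ring
      rw [this, norm_div, Complex.norm_real, Real.norm_of_nonneg hc.le]
    simp_rw [h2] at h1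
    rw [integral_div, div_le_iff₀ hc] at h1
    exact h1
  set t := S / b ^ p with ht
  have ht0 : 0 ≤ t := by positivity
  have := hscale (b * (t + 1)) (by positivity) (by
    rw [Real.mul_rpow hb.le (by positivity)]
    have h1 : S = b ^ p * t := by rw [ht]; field_simp
    rw [h1]
    refine mul_le_mul_of_nonneg_left ?_ hbp.le
    calc t ≤ (t + 1) ^ (1 : ℝ) := by rw [Real.rpow_one]; linarith
      _ ≤ _ := Real.rpow_le_rpow_of_exponent_le (by linarith) hp)
  rwa [← mul_assoc] at this

end PR

namespace PR
variable {d : ℕ}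

def tile (m : Fin d → ℤ) : Set (Fin d → ℝ) := {x | ∀ j, ⌊x j⌋ = m j}

def zr (m : Fin d → ℤ) : Fin d → ℝ := fun j => (m j : ℝ)

lemma measurable_tile (m : Fin d → ℤ) : MeasurableSet (tile m) := by
  have : tile m = ⋂ j, {x : Fin d → ℝ | ⌊x j⌋ = m j} := by ext x; simp [tile]
  rw [this]
  refine MeasurableSet.iInter fun j => ?_
  exact (Int.measurable_floor.comp (measurable_pi_apply j)) (measurableSet_singleton (m j))

lemma tile_disjoint : Pairwise (Function.onFun Disjoint (tile (d := d))) := by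
  intro m n hmn
  refine Set.disjoint_left.2 fun x hx hy => hmn ?_
  funext j; rw [← hx j, ← hy j]

lemma tile_union : (⋃ m, tile (d := d) m) = Set.univ := by
  ext x; simp only [Set.mem_iUnion, Set.mem_univ, iff_true]
  exact ⟨fun j => ⌊x j⌋, fun j => rfl⟩

lemma tile_zero : tile (d := d) 0 = Set.pi Set.univ fun _ => Set.Ico (0:ℝ) 1 := by
  ext x; simp [tile, Int.floor_eq_iff, Set.mem_pi]

lemma volume_tile_zero : volume (tile (d := d) 0) = 1 := by
  rw [tile_zero, Real.volume_pi_Ico]; simp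

lemma tile_preimage (m : Fin d → ℤ) : (fun u => zr m + u) ⁻¹' (tile m) = tile 0 := by
  ext u; simp [tile, zr]

lemma setIntegral_tile {G : Type*} [NormedAddCommGroup G] [NormedSpace ℝ G]
    (m : Fin d → ℤ) (F : (Fin d → ℝ) → G) :
    ∫ x in tile m, F x = ∫ u in tile 0, F (zr m + u) := by
  have h := (measurePreserving_add_left (volume : Measure (Fin d → ℝ)) (zr m)).setIntegral_preimage_emb
    (MeasurableEquiv.addLeft (zr m)).measurableEmbedding F (tile m)
  rw [← h, tile_preimage]

lemma integrableOn_tile {G : Type*} [NormedAddCommGroup G] 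
    (m : Fin d → ℤ) (F : (Fin d → ℝ) → G) (hF : Integrable F) :
    IntegrableOn (fun u => F (zr m + u)) (tile 0) := by
  have h := (measurePreserving_add_left (volume : Measure (Fin d → ℝ)) (zr m)).integrable_comp_emb
    (MeasurableEquiv.addLeft (zr m)).measurableEmbedding (g := F)
  exact (h.2 hF).integrableOn

noncomputable def ft (g : (Fin d → ℝ) → ℂ) (ξ : Fin d → ℝ) : ℂ := ∫ x, g x * ee (∑ j, x j * ξ j)

set_option maxHeartbeats 1000000 in
lemma R2 (μ : Measure (Fin d → ℝ)) [IsProbabilityMeasure μ] (C' p : ℝ) (hC : 0 ≤ C') (hp : 1 ≤ p)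
    (h : ∀ (A : Finset (Fin d → ℤ)) (f : (Fin d → ℤ) → ℂ) (b : ℝ), 0 < b →
      ∫ ξ, ‖Tf A f ξ‖ ∂μ ≤ C' * b * ((∑ x ∈ A, ‖f x‖ ^ p) / b ^ p + 1))
    (g : (Fin d → ℝ) → ℂ) (hg : Continuous g) (B : ℝ) (hB : ∀ x, ‖g x‖ ≤ B) (hgi : Integrable g)
    (hgp : Integrable fun x => ‖g x‖ ^ p) (b : ℝ) (hb : 0 < b) (hgb : ∫ x, ‖g x‖ ^ p ≤ b ^ p) :
    ∫ ξ, ‖ft g ξ‖ ∂μ ≤ 2 * C' * b := by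
  have hcont2 : Continuous fun q : (Fin d → ℝ) × (Fin d → ℝ) => g q.1 * ee (∑ j, q.1 j * q.2 j) := by
    refine (hg.comp continuous_fst).mul (continuous_ee.comp ?_)
    fun_prop
  have h_int : ∀ ξ : Fin d → ℝ, Integrable fun x => g x * ee (∑ j, x j * ξ j) := by
    intro ξ
    refine hgi.norm.mono' ((hcont2.comp (Continuous.prodMk_left ξ)).aestronglyMeasurable) ?_
    
    refine Filter.Eventually.of_forall fun x => ?_
    rw [norm_mul, norm_ee, mul_one]
  have h_int : ∀ ξ : Fin d → ℝ, Integrable fun x => g x * ee (∑ j, x j * ξ j) := h_int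
  set GA : Finset (Fin d → ℤ) → (Fin d → ℝ) → ℂ := fun A ξ =>
    ∑ m ∈ A, ∫ x in tile m, g x * ee (∑ j, x j * ξ j) with hGA
  have hlim : ∀ ξ, Filter.Tendsto (fun A => GA A ξ) Filter.atTop (nhds (ft g ξ)) := by
    intro ξ
    have := hasSum_integral_iUnion (μ := volume) (f := fun x => g x * ee (∑ j, x j * ξ j))
      (fun m => measurable_tile (d := d) m) tile_disjoint (h_int ξ).integrableOn
    rw [tile_union, setIntegral_univ] at this
    exact this
  have hbound : ∀ A ξ, ‖GA A ξ‖ ≤ ∫ x, ‖g x‖ := by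
    intro A ξ
    have e : ∀ m, ‖∫ x in tile m, g x * ee (∑ j, x j * ξ j)‖ ≤ ∫ x in tile m, ‖g x‖ := by
      intro m
      refine (norm_integral_le_integral_norm _).trans (le_of_eq ?_)
      simp [norm_ee]
    refine (norm_sum_le _ _).trans ((Finset.sum_le_sum fun m _ => e m).trans ?_)
    rw [← integral_biUnion_finset A (fun m _ => measurable_tile m)
      (fun a _ b _ hab => tile_disjoint hab) (fun m _ => hgi.norm.integrableOn)]
    exact setIntegral_le_integral hgi.norm (Filter.Eventually.of_forall fun x => norm_nonneg _)
  have hGAeq : ∀ A ξ, GA A ξ = ∫ u in tile 0, ee (∑ j, u j * ξ j) * Tf A (fun m => g (zr m + u)) ξ := by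
    intro A ξ
    simp only [hGA]
    rw [Finset.sum_congr rfl fun m _ => setIntegral_tile m _]
    rw [← integral_finsetSum _ fun m _ => integrableOn_tile m _ (h_int ξ)]
    congr 1; funext u
    rw [Tf, Finset.mul_sum]
    refine Finset.sum_congr rfl fun m _ => ?_
    have : ∑ j, (zr m + u) j * ξ j = (∑ j, u j * ξ j) + ∑ j, (m j : ℝ) * ξ j := by
      rw [← Finset.sum_add_distrib]; refine Finset.sum_congr rfl fun j _ => ?_
      simp [zr]; ring
    rw [this, ee_add]; ring
  have hTc : ∀ A : Finset (Fin d → ℤ), Continuous fun q : (Fin d → ℝ) × (Fin d → ℝ) =>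
      Tf A (fun m => g (zr m + q.2)) q.1 := by
    intro A
    unfold Tf
    refine continuous_finsetSum _ fun m _ => ?_
    refine (hg.comp (by fun_prop)).mul (continuous_ee.comp (by fun_prop))
  have : IsFiniteMeasure (volume.restrict (tile (d := d) 0)) :=
    ⟨by rw [Measure.restrict_apply_univ, volume_tile_zero]; exact ENNReal.one_lt_top⟩
  have hTb : ∀ (A : Finset (Fin d → ℤ)) u ξ, ‖Tf A (fun m => g (zr m + u)) ξ‖ ≤ A.card * B := by
    intro A u ξ
    unfold Tf
    refine (norm_sum_le _ _).trans ?_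
    rw [← nsmul_eq_mul, ← Finset.sum_const]
    refine Finset.sum_le_sum fun m _ => ?_
    rw [norm_mul, norm_ee, mul_one]; exact hB _
  have hGAc : ∀ A, Continuous (GA A) := by
    intro A
    have : GA A = fun ξ => ∫ u in tile 0, ee (∑ j, u j * ξ j) * Tf A (fun m => g (zr m + u)) ξ :=
      funext fun ξ => hGAeq A ξ
    rw [this]
    refine continuous_of_dominated (bound := fun _ => A.card * B) ?_ ?_ (integrable_const _) ?_
    · intro ξ
      refine Continuous.aestronglyMeasurable ?_
      refine (continuous_ee.comp (by fun_prop)).mul ((hTc A).comp (Continuous.prodMk_right ξ))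
    · intro ξ
      refine Filter.Eventually.of_forall fun u => ?_
      rw [norm_mul, norm_ee, one_mul]; exact hTb _ _ _
    · refine Filter.Eventually.of_forall fun u => ?_
      refine (continuous_ee.comp (by fun_prop)).mul ((hTc A).comp (Continuous.prodMk_left u))
  have hmain : ∀ A, ∫ ξ, ‖GA A ξ‖ ∂μ ≤ 2 * C' * b := by
    intro A
    have hpi : Integrable (fun q : (Fin d → ℝ) × (Fin d → ℝ) => ‖Tf A (fun m => g (zr m + q.2)) q.1‖)
        (μ.prod (volume.restrict (tile (d := d) 0))) := by
      refine Integrable.mono' (integrable_const (A.card * B : ℝ)) (hTc A).norm.aestronglyMeasurable ?_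
      refine Filter.Eventually.of_forall fun q => ?_
      rw [norm_norm]; exact hTb _ _ _
    have hpi' := hpi.integral_prod_right
    have hi : ∀ m ∈ A, IntegrableOn (fun u => ‖g (zr m + u)‖ ^ p) (tile 0) :=
      fun m _ => integrableOn_tile m _ hgp
    calc ∫ ξ, ‖GA A ξ‖ ∂μ ≤ ∫ ξ, (∫ u in tile 0, ‖Tf A (fun m => g (zr m + u)) ξ‖) ∂μ := by
          refine integral_mono_of_nonneg (Filter.Eventually.of_forall fun ξ => norm_nonneg _)
            hpi.integral_prod_left (Filter.Eventually.of_forall fun ξ => ?_)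
          simp only
          rw [hGAeq]
          refine (norm_integral_le_integral_norm _).trans (le_of_eq ?_)
          simp [norm_ee]
      _ = ∫ u in tile 0, ∫ ξ, ‖Tf A (fun m => g (zr m + u)) ξ‖ ∂μ := by
          exact integral_integral_swap (f := fun ξ u => ‖Tf A (fun m => g (zr m + u)) ξ‖) hpi
      _ ≤ ∫ u in tile 0, C' * b * ((∑ m ∈ A, ‖g (zr m + u)‖ ^ p) / b ^ p + 1) := by
          refine integral_mono hpi' ?_ fun u => h A _ b hb
          exact (((integrable_finsetSum _ hi).div_const _).add (integrable_const _)).const_mul _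
      _ = C' * b * ((∑ m ∈ A, ∫ x in tile m, ‖g x‖ ^ p) / b ^ p + 1) := by
          rw [integral_const_mul, integral_add ((integrable_finsetSum _ hi).div_const _)
            (integrable_const _), integral_div, integral_finsetSum _ hi]
          rw [Finset.sum_congr rfl fun m _ => setIntegral_tile m _]
          simp [Measure.real, volume_tile_zero]
      _ ≤ C' * b * (1 + 1) := by
          have hbp : 0 < b ^ p := by positivity
          refine mul_le_mul_of_nonneg_left ?_ (by positivity)
          refine add_le_add_left ?_ 1
          rw [div_le_one hbp]
          refine le_trans ?_ hgb
          rw [← integral_biUnion_finset A (fun m _ => measurable_tile m)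
            (fun a _ b _ hab => tile_disjoint hab) (fun m _ => hgp.integrableOn)]
          exact setIntegral_le_integral hgp (Filter.Eventually.of_forall fun x => by positivity)
      _ = _ := by ring
  have hl := tendsto_integral_filter_of_dominated_convergence (μ := μ) (l := Filter.atTop)
    (F := fun A ξ => ‖GA A ξ‖) (f := fun ξ => ‖ft g ξ‖) (fun _ => ∫ x, ‖g x‖)
    (Filter.Eventually.of_forall fun A => (hGAc A).norm.aestronglyMeasurable)
    (Filter.Eventually.of_forall fun A => Filter.Eventually.of_forall fun ξ => by
      rw [norm_norm]; exact hbound A ξ) (integrable_const _)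
    (Filter.Eventually.of_forall fun ξ => (hlim ξ).norm)
  exact le_of_tendsto' hl hmain

end PR

namespace PR
variable {d : ℕ}

/-- the restriction estimate holds for some measure charging `E`. -/
def Good (E : Set (EuclideanSpace ℝ (Fin d))) (p : ℝ) : Prop :=
  ∃ (μ : Measure (EuclideanSpace ℝ (Fin d))) (q : ℝ≥0∞) (C : ℝ≥0),
      0 < μ E ∧ 1 ≤ q ∧
      ∀ f : SchwartzMap (EuclideanSpace ℝ (Fin d)) ℂ,
        eLpNorm (𝓕 ⇑f) q μ ≤ (C : ℝ≥0∞) * eLpNorm (⇑f) (ENNReal.ofReal p) volume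

lemma fourier_eq_ft (f : EuclideanSpace ℝ (Fin d) → ℂ) (ξ : Fin d → ℝ) :
    𝓕 f (WithLp.toLp 2 ξ) = ft (fun x => f (WithLp.toLp 2 x)) ξ := by
  rw [Real.fourier_eq', ft, ← (PiLp.volume_preserving_toLp (Fin d)).integral_comp
    (MeasurableEquiv.toLp 2 _).measurableEmbedding]
  congr 1; funext x
  rw [smul_eq_mul, mul_comm]
  congr 1
  rw [ee, PiLp.inner_apply]
  congr 1
  simp only [RCLike.inner_apply, conj_trivial]
  push_cast
  rw [Finset.mul_sum, Finset.mul_sum, Finset.sum_mul]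
  try rw [Finset.sum_mul]
  refine Finset.sum_congr rfl fun j _ => by ring

lemma good_of_sq (K : Set (Fin d → ℝ)) (hK : MeasurableSet K) (μ : Measure (Fin d → ℝ)) [IsProbabilityMeasure μ]
    (hμK : μ Kᶜ = 0) (C σ p : ℝ) (hC : 0 ≤ C) (hσ : 0 ≤ σ) (hp : 1 ≤ p) (hpσ : p * (σ + 1) < 2)
    (h : ∀ (A : Finset (Fin d → ℤ)) (f : (Fin d → ℤ) → ℂ),
      ∫ ξ, ‖Tf A f ξ‖ ^ 2 ∂μ ≤ C * (A.card : ℝ) ^ σ * ∑ x ∈ A, ‖f x‖ ^ 2) :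
    Good (WithLp.ofLp ⁻¹' K) p := by
  obtain ⟨C', hC', h1⟩ := restr1 μ C σ p hC hσ hp hpσ h
  have h2 := restr2 μ C' p hC' hp h1
  have hmeas : Measurable (WithLp.toLp 2 : (Fin d → ℝ) → EuclideanSpace ℝ (Fin d)) :=
    (MeasurableEquiv.toLp 2 _).measurable
  refine ⟨μ.map (WithLp.toLp 2), 1, Real.toNNReal (2 * C'), ?_, le_rfl, ?_⟩
  · have hm : MeasurableSet ((WithLp.ofLp : EuclideanSpace ℝ (Fin d) → _) ⁻¹' K) :=
      (MeasurableEquiv.toLp 2 _).symm.measurable hK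
    rw [Measure.map_apply hmeas hm, ← Set.preimage_comp]
    have : (WithLp.ofLp ∘ WithLp.toLp 2 : (Fin d → ℝ) → (Fin d → ℝ)) = id := rfl
    rw [this, Set.preimage_id]
    have := (prob_compl_eq_zero_iff hK).1 hμK
    rw [this]; exact one_pos
  · intro f
    set g : (Fin d → ℝ) → ℂ := fun x => f (WithLp.toLp 2 x) with hg
    have hgc : Continuous g := f.continuous.comp (PiLp.continuous_toLp 2 _)
    obtain ⟨B, hB⟩ : ∃ B, ∀ x, ‖g x‖ ≤ B := by
      obtain ⟨B, hB⟩ := f.decay 0 0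
      exact ⟨B, fun x => by simpa using hB.2 (WithLp.toLp 2 x)⟩
    have hmp := PiLp.volume_preserving_toLp (Fin d)
    have hemb := (MeasurableEquiv.toLp 2 (Fin d → ℝ)).measurableEmbedding
    have hgi : Integrable g := (hmp.integrable_comp_emb hemb).2 f.integrable
    have hp0 : 0 < p := by linarith
    have hpE : (ENNReal.ofReal p) ≠ 0 := by simpa using hp0
    have hfL := f.memLp (ENNReal.ofReal p)
    have hfp : Integrable fun x => ‖f x‖ ^ p := by
      have := hfL.integrable_norm_rpow hpE ENNReal.ofReal_ne_top
      rwa [ENNReal.toReal_ofReal hp0.le] at this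
    have hgp : Integrable fun x => ‖g x‖ ^ p := (hmp.integrable_comp_emb hemb).2 hfp
    have hgI : ∫ x, ‖g x‖ ^ p = ∫ x, ‖f x‖ ^ p := hmp.integral_comp hemb (fun x => ‖f x‖ ^ p)
    have hFc : Continuous (𝓕 ⇑f) := by
      rw [← SchwartzMap.fourier_coe]; exact (𝓕 f).continuous
    rw [eLpNorm_map_measure hFc.aestronglyMeasurable hmeas.aemeasurable]
    have hft : (𝓕 ⇑f) ∘ (WithLp.toLp 2) = ft g := funext fun ξ => fourier_eq_ft f ξ
    have hftc : Continuous (ft g) := by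
      rw [← hft]
      exact hFc.comp (PiLp.continuous_toLp 2 _)
    have hftb : ∀ ξ, ‖ft g ξ‖ ≤ ∫ x, ‖g x‖ := fun ξ =>
      (norm_integral_le_integral_norm _).trans (by simp [norm_ee])
    have hfti : Integrable (ft g) μ :=
      Integrable.mono' (integrable_const (∫ x, ‖g x‖)) hftc.aestronglyMeasurable
        (Filter.Eventually.of_forall hftb)
    rw [hft, eLpNorm_one_eq_lintegral_enorm, ← ofReal_integral_norm_eq_lintegral_enorm hfti,
      hfL.eLpNorm_eq_integral_rpow_norm hpE ENNReal.ofReal_ne_top, ENNReal.toReal_ofReal hp0.le]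
    set I := ∫ x, ‖f x‖ ^ p with hI
    have hI0 : 0 ≤ I := integral_nonneg fun x => by positivity
    have key : ∫ ξ, ‖ft g ξ‖ ∂μ ≤ 2 * C' * I ^ p⁻¹ := by
      refine le_of_forall_pos_le_add fun ε hε => ?_
      have hδ : 0 < ε / (2 * C' + 1) := by positivity
      have := R2 μ C' p hC' hp h2 g hgc B hB hgi hgp (I ^ p⁻¹ + ε / (2 * C' + 1)) (by positivity) (by
        rw [hgI]
        calc I = (I ^ p⁻¹) ^ p := by rw [← Real.rpow_mul hI0, inv_mul_cancel₀ hp0.ne', Real.rpow_one]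
          _ ≤ _ := Real.rpow_le_rpow (by positivity) (by linarith) hp0.le)
      refine this.trans ?_
      have h3 : 2 * C' * (ε / (2 * C' + 1)) ≤ ε := by
        rw [mul_div_assoc', div_le_iff₀ (by positivity)]; nlinarith
      linarith [mul_add (2 * C') (I ^ p⁻¹) (ε / (2 * C' + 1))]
    change _ ≤ ENNReal.ofReal (2 * C') * _
    rw [← ENNReal.ofReal_mul (by positivity)]
    exact ENNReal.ofReal_le_ofReal key

end PR

namespace PR
variable {d : ℕ}

lemma exists_gauss : ∃ G : SchwartzMap (EuclideanSpace ℝ (Fin d)) ℂ,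
    ∀ x, G x = ((Real.exp (-Real.pi * ‖x‖ ^ 2) : ℝ) : ℂ) := by
  have hq : (fun x : EuclideanSpace ℝ (Fin d) => -Real.pi * ‖x‖ ^ 2).HasTemperateGrowth :=
    (Function.HasTemperateGrowth.const (-Real.pi)).mul
      (Function.hasTemperateGrowth_norm_sq (H := EuclideanSpace ℝ (Fin d)))
  have hexp : ∀ (i : ℕ) (t : ℝ), ‖iteratedFDeriv ℝ i Real.exp t‖ ≤ Real.exp t := by
    intro i t
    rw [norm_iteratedFDeriv_eq_norm_iteratedDeriv, iteratedDeriv_eq_iterate, Real.iter_deriv_exp,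
      Real.norm_of_nonneg (Real.exp_pos _).le]
  let R : SchwartzMap (EuclideanSpace ℝ (Fin d)) ℝ :=
    { toFun := fun x => Real.exp (-Real.pi * ‖x‖ ^ 2)
      smooth' := Real.contDiff_exp.comp hq.1
      decay' := by
        intro k n
        obtain ⟨l, C, hC, hb⟩ := hq.norm_iteratedFDeriv_le_uniform n
        refine ⟨n.factorial * (C + 1) ^ n * ((k + l * n).factorial * Real.exp 2), fun x => ?_⟩
        have hx : 0 ≤ ‖x‖ := norm_nonneg x
        have h1 := norm_iteratedFDeriv_comp_le (𝕜 := ℝ) (n := n) (N := n) (g := Real.exp)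
          (f := fun x : EuclideanSpace ℝ (Fin d) => -Real.pi * ‖x‖ ^ 2) Real.contDiff_exp
          (hq.1.of_le (by exact_mod_cast le_top)) le_rfl x (C := Real.exp (-Real.pi * ‖x‖ ^ 2))
          (D := (C + 1) * (1 + ‖x‖) ^ l) (fun i _ => hexp i _) (by
            intro i hi hin
            refine (hb i hin x).trans ?_
            have h2 : 1 ≤ (C + 1) * (1 + ‖x‖) ^ l :=
              one_le_mul_of_one_le_of_one_le (by linarith) (one_le_pow₀ (by linarith))
            calc C * (1 + ‖x‖) ^ l ≤ (C + 1) * (1 + ‖x‖) ^ l := by gcongr; linarith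
              _ ≤ _ := le_self_pow₀ h2 (by omega))
        have h3 : (1 + ‖x‖) ^ (k + l * n) * Real.exp (-Real.pi * ‖x‖ ^ 2)
            ≤ (k + l * n).factorial * Real.exp 2 := by
          have h4 := Real.pow_div_factorial_le_exp (1 + ‖x‖) (by positivity) (k + l * n)
          rw [div_le_iff₀ (by positivity)] at h4
          calc _ ≤ Real.exp (1 + ‖x‖) * (k + l * n).factorial * Real.exp (-Real.pi * ‖x‖ ^ 2) := by
                gcongr
            _ = (k + l * n).factorial * Real.exp ((1 + ‖x‖) + -Real.pi * ‖x‖ ^ 2) := by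
                rw [Real.exp_add (1 + ‖x‖)]; ring
            _ ≤ _ := by
                gcongr
                have := Real.pi_gt_three
                nlinarith [sq_nonneg (‖x‖ - 1/2), sq_nonneg ‖x‖]
        calc ‖x‖ ^ k * _ ≤ (1 + ‖x‖) ^ k * (n.factorial * Real.exp (-Real.pi * ‖x‖ ^ 2) *
              ((C + 1) * (1 + ‖x‖) ^ l) ^ n) := by
              refine mul_le_mul ?_ h1 (norm_nonneg _) (by positivity)
              gcongr; linarith
          _ = n.factorial * (C + 1) ^ n * ((1 + ‖x‖) ^ (k + l * n) * Real.exp (-Real.pi * ‖x‖ ^ 2)) := by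
              rw [mul_pow, pow_add, pow_mul]; ring
          _ ≤ _ := by gcongr }
  exact ⟨R.postcompCLM Complex.ofRealCLM, fun x => rfl⟩

lemma exists_gauss_affine (r : ℝ) (hr : 0 < r) (v : EuclideanSpace ℝ (Fin d)) :
    ∃ G : SchwartzMap (EuclideanSpace ℝ (Fin d)) ℂ,
    ∀ x, G x = ((Real.exp (-Real.pi * (‖x - v‖ / r) ^ 2) : ℝ) : ℂ) := by
  obtain ⟨G, hG⟩ := exists_gauss (d := d)
  have ha : AntilipschitzWith (Real.toNNReal r) (fun x : EuclideanSpace ℝ (Fin d) => r⁻¹ • (x - v)) := by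
    refine AntilipschitzWith.of_le_mul_dist fun x y => ?_
    rw [dist_eq_norm, dist_eq_norm, ← smul_sub, norm_smul, Real.coe_toNNReal _ hr.le, norm_inv,
      Real.norm_of_nonneg hr.le, mul_inv_cancel_left₀ hr.ne']
    simp
  have ht : (fun x : EuclideanSpace ℝ (Fin d) => r⁻¹ • (x - v)).HasTemperateGrowth := by fun_prop
  refine ⟨SchwartzMap.compCLMOfAntilipschitz ℝ ht ha G, fun x => ?_⟩
  rw [SchwartzMap.compCLMOfAntilipschitz_apply, Function.comp_apply, hG, norm_smul, norm_inv,
    Real.norm_of_nonneg hr.le, div_eq_inv_mul]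

lemma exists_gauss_mod (r : ℝ) (hr : 0 < r) (v : EuclideanSpace ℝ (Fin d)) :
    ∃ f : SchwartzMap (EuclideanSpace ℝ (Fin d)) ℂ,
    (∀ x, f x = (r : ℂ) ^ d * Complex.exp (-(Real.pi * r ^ 2 : ℝ) * ‖x‖ ^ 2 +
        2 * Real.pi * Complex.I * inner ℝ v x)) ∧
    ∀ ξ, 𝓕 (⇑f) ξ = ((Real.exp (-Real.pi * (‖ξ - v‖ / r) ^ 2) : ℝ) : ℂ) := by
  obtain ⟨G, hG⟩ := exists_gauss_affine r hr v
  set m : EuclideanSpace ℝ (Fin d) → ℂ := fun x => Complex.exp (-(Real.pi * r ^ 2 : ℝ) * ‖x‖ ^ 2 +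
        2 * Real.pi * Complex.I * inner ℝ v x) with hm
  have hb : 0 < ((Real.pi * r ^ 2 : ℝ) : ℂ).re := by
    rw [Complex.ofReal_re]; positivity
  have hFm : 𝓕 m = fun ξ => ((r : ℂ) ^ d)⁻¹ * G ξ := by
    funext ξ
    rw [hm, fourier_gaussian_innerProductSpace' hb v ξ, hG]
    congr 1
    · have : (Real.pi : ℂ) / ((Real.pi * r ^ 2 : ℝ) : ℂ) = (((r ^ 2)⁻¹ : ℝ) : ℂ) := by
        push_cast
        have : (Real.pi : ℂ) ≠ 0 := by exact_mod_cast Real.pi_ne_zero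
        field_simp
      rw [this, finrank_euclideanSpace_fin]
      have e : ((d : ℂ) / 2) = (((d : ℝ) / 2 : ℝ) : ℂ) := by push_cast; rfl
      rw [e, ← Complex.ofReal_cpow (by positivity)]
      have : ((r ^ 2)⁻¹ : ℝ) ^ ((d : ℝ) / 2) = (r ^ d)⁻¹ := by
        rw [Real.inv_rpow (by positivity), ← Real.rpow_natCast r 2, ← Real.rpow_mul hr.le,
          ← Real.rpow_natCast r d]
        congr 2; push_cast; ring
      rw [this]; push_cast; rfl
    · rw [Complex.ofReal_exp]
      congr 1
      rw [norm_sub_rev ξ v]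
      push_cast
      have : (Real.pi : ℂ) ≠ 0 := by exact_mod_cast Real.pi_ne_zero
      have : (r : ℂ) ≠ 0 := by exact_mod_cast hr.ne'
      field_simp
  have hmc : Continuous m := by
    rw [hm]; fun_prop
  have hmi : Integrable m := by
    have := GaussianFourier.integrable_cexp_neg_mul_sq_norm_add hb (2 * Real.pi * Complex.I) v
    exact this
  have hFmi : Integrable (𝓕 m) := by
    rw [hFm]; exact G.integrable.const_mul _
  have hinv := hmc.fourierInv_fourier_eq hmi hFmi
  have hr0 : (r : ℂ) ^ d ≠ 0 := pow_ne_zero _ (by exact_mod_cast hr.ne')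
  refine ⟨𝓕⁻ G, fun x => ?_, fun ξ => ?_⟩
  · rw [SchwartzMap.fourierInv_coe]
    have h1 : (⇑G) = (r : ℂ) ^ d • 𝓕 m := by
      rw [hFm]; funext ξ; simp [hr0]
    have : m x = 𝓕⁻ (𝓕 m) x := by rw [hinv]
    rw [h1]
    change _ = _ * m x
    rw [this, Real.fourierInv_eq', Real.fourierInv_eq', ← integral_const_mul]
    congr 1; funext y
    simp only [Pi.smul_apply, smul_eq_mul]; ring
  · rw [← SchwartzMap.fourier_coe, ← hG]
    congr 1
    exact FourierTransform.fourier_fourierInv_eq G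

lemma not_good_of_seq (E : Set (EuclideanSpace ℝ (Fin d))) (hE : MeasurableSet E) (p c : ℝ) (hc : 0 < c)
    (h : ∀ ε : ℝ, 0 < ε → ∃ f : SchwartzMap (EuclideanSpace ℝ (Fin d)) ℂ,
      (∀ ξ ∈ E, c ≤ ‖𝓕 (⇑f) ξ‖) ∧ eLpNorm (⇑f) (ENNReal.ofReal p) volume ≤ ENNReal.ofReal ε) :
    ¬ Good E p := by
  rintro ⟨μ, q, C, hμ, hq, hf⟩
  have hL : eLpNorm (E.indicator fun _ => c) q μ = 0 := by
    refine le_antisymm (ENNReal.le_of_forall_pos_le_add fun δ hδ _ => ?_) bot_le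
    obtain ⟨f, hf1, hf2⟩ := h (δ / (C + 1)) (by positivity)
    rw [zero_add]
    calc eLpNorm (E.indicator fun _ => c) q μ ≤ eLpNorm (𝓕 ⇑f) q μ := by
          refine eLpNorm_mono fun ξ => ?_
          by_cases hξ : ξ ∈ E
          · rw [Set.indicator_of_mem hξ, Real.norm_of_nonneg hc.le]; exact hf1 ξ hξ
          · rw [Set.indicator_of_notMem hξ, norm_zero]; exact norm_nonneg _
      _ ≤ _ := hf f
      _ ≤ C * ENNReal.ofReal (δ / (C + 1)) := by gcongr
      _ ≤ δ := by
          rw [← ENNReal.ofReal_coe_nnreal, ← ENNReal.ofReal_mul (by positivity),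
            ← ENNReal.ofReal_coe_nnreal]
          refine ENNReal.ofReal_le_ofReal ?_
          have : (0:ℝ) ≤ C := C.2
          have : (0:ℝ) < δ := hδ
          rw [mul_div_assoc', div_le_iff₀ (by positivity)]; nlinarith
  rw [eLpNorm_eq_zero_iff ((measurable_const.indicator hE).aestronglyMeasurable)
    (by positivity)] at hL
  have : μ E = 0 := by
    refine measure_mono_null ?_ hL
    intro x hx
    simpa [hc.ne'] using hx
  exact hμ.ne' this

lemma good_union {E F : Set (EuclideanSpace ℝ (Fin d))} {p : ℝ} (h : Good (E ∪ F) p) :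
    Good E p ∨ Good F p := by
  obtain ⟨μ, q, C, hμ, hq, hf⟩ := h
  by_cases hE : μ E = 0
  · right
    refine ⟨μ, q, C, ?_, hq, hf⟩
    by_contra h0
    have : μ F = 0 := by simpa using h0
    exact hμ.ne' (measure_union_null hE this)
  · exact Or.inl ⟨μ, q, C, pos_iff_ne_zero.2 hE, hq, hf⟩

lemma good_mono {E F : Set (EuclideanSpace ℝ (Fin d))} {p : ℝ} (hEF : E ⊆ F) (h : Good E p) :
    Good F p := by
  obtain ⟨μ, q, C, hμ, hq, hf⟩ := h
  exact ⟨μ, q, C, hμ.trans_le (measure_mono hEF), hq, hf⟩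

lemma good_one {E : Set (EuclideanSpace ℝ (Fin d))} (hE : E.Nonempty) : Good E 1 := by
  obtain ⟨x, hx⟩ := hE
  refine ⟨Measure.dirac x, ⊤, 1, ?_, le_top, fun f => ?_⟩
  · refine lt_of_lt_of_le one_pos (Measure.le_dirac_apply.trans' ?_)
    simp [hx]
  · rw [ENNReal.ofReal_one, ENNReal.coe_one, one_mul, eLpNorm_one_eq_lintegral_enorm,
      ← ofReal_integral_norm_eq_lintegral_enorm f.integrable, eLpNorm_exponent_top]
    refine eLpNormEssSup_le_of_ae_bound (Filter.Eventually.of_forall fun ξ => ?_)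
    exact VectorFourier.norm_fourierIntegral_le_integral_norm _ _ _ _ _

end PR

namespace PR
variable {d : ℕ}

lemma theta_bound : ∃ T : ℝ, 0 ≤ T ∧ ∀ A : Finset (Fin d → ℤ),
    ∑ u ∈ A, Real.exp (-Real.pi * ∑ j, (u j : ℝ) ^ 2) ≤ T := by
  have hs : Summable fun n : ℤ => Real.exp (-Real.pi * (n : ℝ) ^ 2) := by
    have h := summable_pow_mul_jacobiTheta₂_term_bound 0 (T := 1) one_pos 0
    refine h.congr fun n => ?_
    simp
  refine ⟨(∑' n : ℤ, Real.exp (-Real.pi * (n : ℝ) ^ 2)) ^ d, by positivity, fun A => ?_⟩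
  classical
  have h1 : ∀ u : Fin d → ℤ, Real.exp (-Real.pi * ∑ j, (u j : ℝ) ^ 2) =
      ∏ j, Real.exp (-Real.pi * (u j : ℝ) ^ 2) := by
    intro u; rw [← Real.exp_sum, Finset.mul_sum]
  simp_rw [h1]
  calc ∑ u ∈ A, ∏ j, Real.exp (-Real.pi * (u j : ℝ) ^ 2)
      ≤ ∑ u ∈ Fintype.piFinset (fun j => A.image (fun u : Fin d → ℤ => (u j : ℤ))),
          ∏ j, Real.exp (-Real.pi * (u j : ℝ) ^ 2) := by
        refine Finset.sum_le_sum_of_subset_of_nonneg ?_ fun u _ _ => by positivity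
        intro u hu
        rw [Fintype.mem_piFinset]; intro j
        exact Finset.mem_image_of_mem _ hu
    _ = ∏ j, ∑ n ∈ A.image (fun u : Fin d → ℤ => (u j : ℤ)), Real.exp (-Real.pi * (n : ℝ) ^ 2) := by
        rw [Finset.prod_univ_sum]
    _ ≤ ∏ j : Fin d, (∑' n : ℤ, Real.exp (-Real.pi * (n : ℝ) ^ 2)) := by
        refine Finset.prod_le_prod (fun j _ => by positivity) fun j _ => ?_
        exact hs.sum_le_tsum _ fun n _ => by positivity
    _ = _ := by simp

/-- normalised integer point -/
noncomputable def vv (N : ℕ) (s : Fin d → ℤ) : EuclideanSpace ℝ (Fin d) :=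
  WithLp.toLp 2 fun j => (s j : ℝ) / N

noncomputable def hh (N : ℕ) (b : ℝ) (S : Finset (Fin d → ℤ)) (x : EuclideanSpace ℝ (Fin d)) : ℂ :=
  ∑ s ∈ S, ((N : ℝ)⁻¹ : ℂ) ^ d * Complex.exp (-(b : ℝ) * ‖x‖ ^ 2 +
        2 * Real.pi * Complex.I * inner ℝ (vv N s) x)

lemma continuous_hh (N : ℕ) (b : ℝ) (S : Finset (Fin d → ℤ)) : Continuous (hh N b S) := by
  unfold hh; fun_prop

lemma vv_norm (N : ℕ) (hN : 1 ≤ N) (s : Fin d → ℤ) (ξ : EuclideanSpace ℝ (Fin d)) :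
    (‖ξ - vv N s‖ / (N : ℝ)⁻¹) ^ 2 = ∑ j, (N * ξ j - s j) ^ 2 := by
  have : (N : ℝ) ≠ 0 := by positivity
  rw [div_pow, EuclideanSpace.norm_sq_eq, div_eq_mul_inv, Finset.sum_mul]
  refine Finset.sum_congr rfl fun j _ => ?_
  simp only [vv, PiLp.sub_apply, Real.norm_eq_abs, sq_abs]
  field_simp

lemma hh_l2 : ∃ T : ℝ, 0 ≤ T ∧ ∀ (N : ℕ) (_ : 1 ≤ N) (S : Finset (Fin d → ℤ)),
    Integrable (fun x => ‖hh N (Real.pi * ((N : ℝ)⁻¹) ^ 2 / 2) S x‖ ^ 2) ∧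
    ∫ x, ‖hh N (Real.pi * ((N : ℝ)⁻¹) ^ 2 / 2) S x‖ ^ 2 ≤ ((N : ℝ)⁻¹) ^ d * S.card * T := by
  obtain ⟨T, hT0, hT⟩ := theta_bound (d := d)
  refine ⟨T, hT0, fun N hN S => ?_⟩
  set r : ℝ := (N : ℝ)⁻¹ with hr
  have hr0 : 0 < r := by positivity
  choose m hm1 hm2 using fun w : EuclideanSpace ℝ (Fin d) => exists_gauss_mod r hr0 w
  have hexp : ∀ x, ((‖hh N (Real.pi * r ^ 2 / 2) S x‖ ^ 2 : ℝ) : ℂ) =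
      ∑ s ∈ S, ∑ s' ∈ S, (r : ℂ) ^ d * m (vv N s - vv N s') x := by
    intro x
    rw [← Complex.normSq_eq_norm_sq, ← Complex.mul_conj, hh, map_sum, Finset.sum_mul]
    refine Finset.sum_congr rfl fun s _ => ?_
    rw [Finset.mul_sum]
    refine Finset.sum_congr rfl fun s' _ => ?_
    rw [map_mul, ← Complex.exp_conj, hm1]
    have : ∀ a b c d : ℂ, a * b * (c * d) = a * (c * (b * d)) := by intros; ring
    rw [this, ← Complex.exp_add]
    have e1 : (starRingEnd ℂ) ((((N:ℝ)⁻¹ : ℂ)) ^ d) = (r : ℂ) ^ d := by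
      rw [map_pow, hr, map_inv₀, Complex.conj_ofReal, Complex.ofReal_inv]
    have e2 : (((N:ℝ)⁻¹ : ℂ)) ^ d = (r : ℂ) ^ d := by rw [hr, Complex.ofReal_inv]
    rw [e1, e2]
    congr 3
    rw [map_add, map_mul, map_mul, map_mul, map_mul, map_neg, map_pow, Complex.conj_I, Complex.conj_ofReal,
      Complex.conj_ofReal, Complex.conj_ofReal, Complex.conj_ofReal, inner_sub_left, Complex.conj_ofNat]
    push_cast
    ring
  have hmint : ∀ w, ∫ x, m w x = ((Real.exp (-Real.pi * (‖w‖ / r) ^ 2) : ℝ) : ℂ) := by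
    intro w
    have := hm2 w 0
    rw [Real.fourier_eq'] at this
    simpa using this
  have hi : ∀ s ∈ S, ∀ s' ∈ S, Integrable fun x => (r : ℂ) ^ d * m (vv N s - vv N s') x :=
    fun s _ s' _ => (m _).integrable.const_mul _
  have hi2 : Integrable fun x => ((‖hh N (Real.pi * r ^ 2 / 2) S x‖ ^ 2 : ℝ) : ℂ) := by
    simp_rw [hexp]
    exact integrable_finsetSum _ fun s hs => integrable_finsetSum _ fun s' hs' => hi s hs s' hs'
  have hi3 : Integrable fun x => ‖hh N (Real.pi * r ^ 2 / 2) S x‖ ^ 2 := by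
    exact hi2.re
  refine ⟨hi3, ?_⟩
  have hval : ∫ x, ‖hh N (Real.pi * r ^ 2 / 2) S x‖ ^ 2 =
      ∑ s ∈ S, ∑ s' ∈ S, r ^ d * Real.exp (-Real.pi * ∑ j, (((s' - s) j : ℤ) : ℝ) ^ 2) := by
    have h1 : ((∫ x, ‖hh N (Real.pi * r ^ 2 / 2) S x‖ ^ 2 : ℝ) : ℂ) =
        ((∑ s ∈ S, ∑ s' ∈ S, r ^ d * Real.exp (-Real.pi * ∑ j, (((s' - s) j : ℤ) : ℝ) ^ 2) : ℝ) : ℂ) := by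
      rw [← integral_complex_ofReal]
      simp_rw [hexp]
      rw [integral_finsetSum _ fun s hs => integrable_finsetSum _ fun s' hs' => hi s hs s' hs']
      rw [Complex.ofReal_sum]
      refine Finset.sum_congr rfl fun s hs => ?_
      rw [integral_finsetSum _ fun s' hs' => hi s hs s' hs', Complex.ofReal_sum]
      refine Finset.sum_congr rfl fun s' _ => ?_
      rw [integral_const_mul, hmint, Complex.ofReal_mul, Complex.ofReal_pow, hr, vv_norm N hN]
      congr 5
      funext j
      have : (N : ℝ) ≠ 0 := by positivity
      simp only [vv, Pi.sub_apply, Int.cast_sub]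
      rw [mul_div_cancel₀ _ this]
      ring
    exact_mod_cast h1
  rw [hval]
  calc _ ≤ ∑ s ∈ S, r ^ d * T := by
        refine Finset.sum_le_sum fun s _ => ?_
        rw [← Finset.mul_sum]
        refine mul_le_mul_of_nonneg_left ?_ (by positivity)
        classical
        refine le_trans (le_of_eq ?_) (hT (S.image fun s' => s' - s))
        rw [Finset.sum_image (by intro a _ b _ h; simpa using h)]
    _ = _ := by rw [Finset.sum_const, nsmul_eq_mul]; ring

end PR

namespace PR
variable {d : ℕ}

lemma gauss_t (t : ℝ) (ht : 0 < t) : ∃ C : ℝ, 0 ≤ C ∧ ∀ N : ℕ, 1 ≤ N →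
    eLpNorm (fun x : EuclideanSpace ℝ (Fin d) => Real.exp (-(Real.pi * ((N:ℝ)⁻¹) ^ 2 / 2) * ‖x‖ ^ 2))
      (ENNReal.ofReal t) volume ≤ ENNReal.ofReal (C * (N : ℝ) ^ ((d : ℝ) * t⁻¹)) := by
  refine ⟨((2 / t) ^ ((d : ℝ) / 2)) ^ t⁻¹, by positivity, fun N hN => ?_⟩
  have hN0 : (0 : ℝ) < N := by positivity
  set b : ℝ := Real.pi * ((N:ℝ)⁻¹) ^ 2 / 2 with hb
  have hb0 : 0 < b := by positivity
  have h_int := GaussianFourier.integral_rexp_neg_mul_sq_norm (V := EuclideanSpace ℝ (Fin d)) (mul_pos ht hb0)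
  have hI : Integrable fun x : EuclideanSpace ℝ (Fin d) => Real.exp (-(t * b) * ‖x‖ ^ 2) := by
    refine not_imp_comm.1 integral_undef ?_
    rw [h_int]; positivity
  rw [eLpNorm_eq_lintegral_rpow_enorm_toReal (by simpa using ht) ENNReal.ofReal_ne_top,
    ENNReal.toReal_ofReal ht.le]
  have h1 : ∀ x : EuclideanSpace ℝ (Fin d), ‖Real.exp (-b * ‖x‖ ^ 2)‖ₑ ^ t =
      ENNReal.ofReal (Real.exp (-(t * b) * ‖x‖ ^ 2)) := by
    intro x
    rw [Real.enorm_of_nonneg (by positivity), ENNReal.ofReal_rpow_of_pos (by positivity),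
      ← Real.exp_mul]
    congr 2; ring
  simp_rw [h1]
  rw [← ofReal_integral_eq_lintegral_ofReal hI (Filter.Eventually.of_forall fun x => by positivity),
    h_int, ENNReal.ofReal_rpow_of_nonneg (by positivity) (by positivity)]
  refine ENNReal.ofReal_le_ofReal (le_of_eq ?_)
  have h2 : Real.pi / (t * b) = (2 / t) * (N : ℝ) ^ (2 : ℝ) := by
    rw [hb, Real.rpow_two]
    have := Real.pi_ne_zero
    field_simp
  rw [h2, finrank_euclideanSpace_fin, Real.mul_rpow (by positivity) (by positivity),
    Real.mul_rpow (by positivity) (by positivity), ← Real.rpow_mul hN0.le, ← Real.rpow_mul hN0.le,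
    one_div]
  congr 2; ring

lemma gs_p (p : ℝ) (hp1 : 1 ≤ p) (hp2 : p ≤ 2) : ∃ C : ℝ, 0 ≤ C ∧ ∀ N : ℕ, 1 ≤ N →
    ∀ h : EuclideanSpace ℝ (Fin d) → ℂ, Continuous h →
    eLpNorm (fun x => (Real.exp (-(Real.pi * ((N:ℝ)⁻¹) ^ 2 / 2) * ‖x‖ ^ 2)) • h x)
      (ENNReal.ofReal p) volume ≤
      ENNReal.ofReal (C * (N : ℝ) ^ ((d : ℝ) * (p⁻¹ - 2⁻¹))) * eLpNorm h 2 volume := by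
  rcases hp2.eq_or_lt with rfl | hlt
  · refine ⟨1, zero_le_one, fun N hN h hc => ?_⟩
    rw [sub_self, mul_zero, Real.rpow_zero, mul_one, ENNReal.ofReal_one, one_mul, ENNReal.ofReal_ofNat]
    refine eLpNorm_mono fun x => ?_
    rw [norm_smul, Real.norm_of_nonneg (by positivity)]
    refine mul_le_of_le_one_left (norm_nonneg _) (Real.exp_le_one_iff.2 ?_)
    have : 0 ≤ Real.pi * ((N:ℝ)⁻¹) ^ 2 / 2 * ‖x‖ ^ 2 := by positivity
    linarith
  · have hp0 : 0 < p := by linarith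
    have ht : 0 < p⁻¹ - 2⁻¹ := sub_pos.2 (inv_strictAnti₀ hp0 hlt)
    obtain ⟨C, hC, hb⟩ := gauss_t (d := d) (p⁻¹ - 2⁻¹)⁻¹ (by positivity)
    refine ⟨C, hC, fun N hN h hc => ?_⟩
    have : ENNReal.HolderTriple (ENNReal.ofReal (p⁻¹ - 2⁻¹)⁻¹) 2 (ENNReal.ofReal p) := by
      constructor
      rw [← ENNReal.ofReal_ofNat 2, ← ENNReal.ofReal_inv_of_pos (by positivity), ← ENNReal.ofReal_inv_of_pos (by positivity),
        ← ENNReal.ofReal_inv_of_pos hp0, inv_inv, ← ENNReal.ofReal_add ht.le (by positivity)]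
      congr 1; ring
    refine (eLpNorm_smul_le_mul_eLpNorm (p := ENNReal.ofReal (p⁻¹ - 2⁻¹)⁻¹) (q := 2) 
      hc.aestronglyMeasurable (φ := fun x => Real.exp (-(Real.pi * ((N:ℝ)⁻¹) ^ 2 / 2) * ‖x‖ ^ 2))
      (Continuous.aestronglyMeasurable (by fun_prop))).trans ?_
    refine mul_le_mul_left ?_ _
    have := hb N hN
    rwa [inv_inv] at this

lemma gs_main (p : ℝ) (hp1 : 1 ≤ p) (hp2 : p ≤ 2) : ∃ C : ℝ, 0 ≤ C ∧ ∀ (N : ℕ), 1 ≤ N →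
    ∀ S : Finset (Fin d → ℤ), ∃ f : SchwartzMap (EuclideanSpace ℝ (Fin d)) ℂ,
    (∀ ξ : EuclideanSpace ℝ (Fin d), ∀ s ∈ S, (∀ j, |N * ξ j - s j| ≤ 1) →
      Real.exp (-Real.pi * d) ≤ ‖𝓕 (⇑f) ξ‖) ∧
    eLpNorm (⇑f) (ENNReal.ofReal p) volume ≤
      ENNReal.ofReal (C * (S.card : ℝ) ^ (2⁻¹ : ℝ) * (N : ℝ) ^ (-((d : ℝ) * (1 - p⁻¹)))) := by
  obtain ⟨C, hC, hb⟩ := gs_p (d := d) p hp1 hp2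
  obtain ⟨T, hT, hl2⟩ := hh_l2 (d := d)
  refine ⟨C * T ^ (2⁻¹ : ℝ), by positivity, fun N hN S => ?_⟩
  have hN0 : (0 : ℝ) < N := by positivity
  set r : ℝ := (N : ℝ)⁻¹ with hr
  have hr0 : 0 < r := by positivity
  choose m hm1 hm2 using fun w : EuclideanSpace ℝ (Fin d) => exists_gauss_mod r hr0 w
  refine ⟨∑ s ∈ S, m (vv N s), ?_, ?_⟩
  · intro ξ s hs hξ
    have hF : 𝓕 (⇑(∑ s ∈ S, m (vv N s))) ξ =
        ((∑ s ∈ S, Real.exp (-Real.pi * (‖ξ - vv N s‖ / r) ^ 2) : ℝ) : ℂ) := by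
      rw [← SchwartzMap.fourier_coe, FourierTransform.fourier_sum, SchwartzMap.sum_apply, Complex.ofReal_sum]
      exact Finset.sum_congr rfl fun s _ => hm2 _ ξ
    rw [hF, Complex.norm_real, Real.norm_of_nonneg (Finset.sum_nonneg fun _ _ => by positivity)]
    refine le_trans ?_ (Finset.single_le_sum (f := fun s => Real.exp (-Real.pi * (‖ξ - vv N s‖ / r) ^ 2))
      (fun _ _ => by positivity) hs)
    refine Real.exp_le_exp.2 ?_
    rw [vv_norm N hN]
    have h1 : ∑ j, (N * ξ j - s j) ^ 2 ≤ ∑ j : Fin d, (1 : ℝ) :=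
      Finset.sum_le_sum fun j _ => by
        rw [← sq_abs]; exact pow_le_one₀ (abs_nonneg _) (hξ j)
    simp only [Finset.sum_const, Finset.card_univ, Fintype.card_fin, nsmul_eq_mul, mul_one] at h1
    have := Real.pi_pos
    nlinarith
  · have hf : ⇑(∑ s ∈ S, m (vv N s)) = fun x => (Real.exp (-(Real.pi * r ^ 2 / 2) * ‖x‖ ^ 2)) •
        hh N (Real.pi * r ^ 2 / 2) S x := by
      funext x
      rw [SchwartzMap.sum_apply, hh, Finset.smul_sum]
      refine Finset.sum_congr rfl fun s _ => ?_
      rw [hm1, Complex.real_smul, mul_left_comm, Complex.ofReal_exp, ← Complex.exp_add, hr, Complex.ofReal_inv]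
      congr 2
      push_cast; ring
    rw [hf]
    refine (hb N hN _ (continuous_hh _ _ _)).trans ?_
    obtain ⟨hi, hle⟩ := hl2 N hN S
    have h2 : eLpNorm (hh N (Real.pi * r ^ 2 / 2) S) 2 volume ≤
        ENNReal.ofReal ((r ^ d * S.card * T) ^ (2⁻¹ : ℝ)) := by
      have hml : MemLp (hh N (Real.pi * r ^ 2 / 2) S) 2 volume :=
        (memLp_two_iff_integrable_sq_norm (continuous_hh _ _ _).aestronglyMeasurable).2 hi
      rw [hml.eLpNorm_eq_integral_rpow_norm (by norm_num) (by norm_num)]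
      refine ENNReal.ofReal_le_ofReal ?_
      simp only [ENNReal.toReal_ofNat, Real.rpow_two]
      exact Real.rpow_le_rpow (integral_nonneg fun x => by positivity) hle (by norm_num)
    refine (mul_le_mul_right h2 _).trans ?_
    rw [← ENNReal.ofReal_mul (by positivity)]
    refine ENNReal.ofReal_le_ofReal (le_of_eq ?_)
    rw [Real.mul_rpow (by positivity) hT, Real.mul_rpow (by positivity) (by positivity), hr,
      ← Real.rpow_natCast, Real.inv_rpow hN0.le, ← Real.rpow_neg hN0.le, ← Real.rpow_mul hN0.le]
    have : (N : ℝ) ^ (-((d : ℝ) * (1 - p⁻¹))) = (N : ℝ) ^ ((d : ℝ) * (p⁻¹ - 2⁻¹)) * (N : ℝ) ^ (-(d:ℝ) * 2⁻¹) := by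
      rw [← Real.rpow_add hN0]; congr 1; ring
    rw [this]; ring

/-- no restriction for sets with good covers -/
lemma not_good_cover (E : Set (EuclideanSpace ℝ (Fin d))) (hE : MeasurableSet E) (β p : ℝ) (hp1 : 1 ≤ p)
    (hp2 : p ≤ 2) (hβ : β < 2 * d * (1 - p⁻¹))
    (hcov : ∀ B : ℕ, ∃ (N : ℕ) (S : Finset (Fin d → ℤ)), B ≤ N ∧ 1 ≤ N ∧ (S.card : ℝ) ≤ (N : ℝ) ^ β ∧
      ∀ ξ ∈ E, ∃ s ∈ S, ∀ j, |N * ξ j - s j| ≤ 1) : ¬ Good E p := by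
  obtain ⟨C, hC, hm⟩ := gs_main (d := d) p hp1 hp2
  refine not_good_of_seq E hE p (Real.exp (-Real.pi * d)) (Real.exp_pos _) fun ε hε => ?_
  set e : ℝ := d * (1 - p⁻¹) - β / 2 with he
  have he0 : 0 < e := by rw [he]; linarith
  have hlim : Filter.Tendsto (fun N : ℕ => C * (N : ℝ) ^ (-e)) Filter.atTop (nhds (C * 0)) :=
    ((tendsto_rpow_neg_atTop he0).comp tendsto_natCast_atTop_atTop).const_mul C
  rw [mul_zero] at hlim
  obtain ⟨B, hB⟩ := Filter.eventually_atTop.1 (hlim.eventually (gt_mem_nhds hε))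
  obtain ⟨N, S, hBN, hN, hS, hcov⟩ := hcov B
  obtain ⟨f, hf1, hf2⟩ := hm N hN S
  have hN0 : (0 : ℝ) < N := by positivity
  refine ⟨f, fun ξ hξ => ?_, hf2.trans (ENNReal.ofReal_le_ofReal ?_)⟩
  · obtain ⟨s, hs, h⟩ := hcov ξ hξ
    exact hf1 ξ s hs h
  · refine le_trans ?_ (hB N hBN).le
    calc C * (S.card : ℝ) ^ (2⁻¹ : ℝ) * (N : ℝ) ^ (-((d : ℝ) * (1 - p⁻¹)))
        ≤ C * ((N : ℝ) ^ β) ^ (2⁻¹ : ℝ) * (N : ℝ) ^ (-((d : ℝ) * (1 - p⁻¹))) := by gcongr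
      _ = C * (N : ℝ) ^ (-e) := by
          rw [← Real.rpow_mul hN0.le, mul_assoc, ← Real.rpow_add hN0]
          congr 2; rw [he]; ring

end PR

namespace PR
variable {d : ℕ}

lemma dimH_cover (K : Set (Fin d → ℝ)) (β : ℝ) (hβ : 0 ≤ β)
    (hcov : ∀ B : ℕ, ∃ (N : ℕ) (S : Finset (Fin d → ℤ)), B ≤ N ∧ 1 ≤ N ∧ (S.card : ℝ) ≤ (N : ℝ) ^ β ∧
      ∀ ξ ∈ K, ∃ s ∈ S, ∀ j, |N * ξ j - s j| ≤ 1) : dimH K ≤ ENNReal.ofReal β := by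
  choose N S hBN hN hS hcov using hcov
  set r : ℕ → ℝ≥0∞ := fun B => ENNReal.ofReal (2 * (N B : ℝ)⁻¹) with hr
  have hNt : Filter.Tendsto N Filter.atTop Filter.atTop :=
    Filter.tendsto_atTop_mono hBN Filter.tendsto_id
  have hrt : Filter.Tendsto r Filter.atTop (nhds 0) := by
    have h1 : Filter.Tendsto (fun B => 2 * (N B : ℝ)⁻¹) Filter.atTop (nhds (2 * 0)) :=
      ((tendsto_inv_atTop_zero.comp tendsto_natCast_atTop_atTop).comp hNt).const_mul 2
    rw [mul_zero] at h1
    have h2 := (ENNReal.continuous_ofReal.tendsto 0).comp h1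
    rw [ENNReal.ofReal_zero] at h2
    exact h2
  have hdiam : ∀ (B : ℕ) (s : {s // s ∈ S B}),
      Metric.ediam {ξ : Fin d → ℝ | ∀ j, |N B * ξ j - (s.1 j : ℝ)| ≤ 1} ≤ r B := by
    intro B s
    refine Metric.ediam_le fun x hx y hy => ?_
    have hN0 : (0 : ℝ) < N B := by have := hN B; positivity
    rw [edist_dist]
    refine ENNReal.ofReal_le_ofReal ?_
    rw [dist_pi_le_iff (by positivity)]
    intro j
    have h1 := abs_le.1 (hx j); have h2 := abs_le.1 (hy j)
    have h3 : |x j - y j| * N B = |(x j - y j) * N B| := by rw [abs_mul, abs_of_pos hN0]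
    rw [Real.dist_eq, ← div_eq_mul_inv, le_div_iff₀ hN0, h3, abs_le]
    constructor <;> nlinarith
  have key := Measure.hausdorffMeasure_le_liminf_sum β K r hrt
    (fun B (s : {s // s ∈ S B}) => {ξ : Fin d → ℝ | ∀ j, |N B * ξ j - (s.1 j : ℝ)| ≤ 1})
    (Filter.Eventually.of_forall hdiam) (Filter.Eventually.of_forall fun B ξ hξ => by
      obtain ⟨s, hs, h⟩ := hcov B ξ hξ
      exact Set.mem_iUnion.2 ⟨⟨s, hs⟩, h⟩)
  have hb : ∀ B, ∑ s : {s // s ∈ S B},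
      Metric.ediam {ξ : Fin d → ℝ | ∀ j, |N B * ξ j - (s.1 j : ℝ)| ≤ 1} ^ β ≤ ENNReal.ofReal (2 ^ β) := by
    intro B
    have hN0 : (0 : ℝ) < N B := by have := hN B; positivity
    calc _ ≤ ∑ s : {s // s ∈ S B}, (r B) ^ β :=
          Finset.sum_le_sum fun s _ => ENNReal.rpow_le_rpow (hdiam B s) hβ
      _ = ENNReal.ofReal ((S B).card * (2 * (N B : ℝ)⁻¹) ^ β) := by
          rw [Finset.sum_const, nsmul_eq_mul, Finset.card_univ, Fintype.card_coe, hr,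
            ENNReal.ofReal_rpow_of_nonneg (by positivity) hβ, ENNReal.ofReal_mul (by positivity),
            ENNReal.ofReal_natCast]
      _ ≤ _ := by
          refine ENNReal.ofReal_le_ofReal ?_
          rw [Real.mul_rpow (by norm_num) (by positivity), Real.inv_rpow hN0.le]
          calc (S B).card * (2 ^ β * ((N B : ℝ) ^ β)⁻¹) ≤ (N B : ℝ) ^ β * (2 ^ β * ((N B : ℝ) ^ β)⁻¹) := by
                gcongr; exact hS B
            _ = 2 ^ β := by
                have : (N B : ℝ) ^ β ≠ 0 := by positivity
                field_simp
  have hfin : Measure.hausdorffMeasure β K ≠ ⊤ := by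
    refine ne_top_of_le_ne_top ENNReal.ofReal_ne_top (key.trans (b := _) (c := ENNReal.ofReal (2 ^ β)) ?_)
    refine Filter.liminf_le_of_le (by isBoundedDefault) fun b hb' => ?_
    obtain ⟨B, hB⟩ := hb'.exists
    exact hB.trans (hb B)
  have := dimH_le_of_hausdorffMeasure_ne_top (d := Real.toNNReal β) (s := K) (by
    rwa [Real.coe_toNNReal _ hβ])
  exact this

lemma dimH_ofLp (K : Set (Fin d → ℝ)) :
    dimH ((WithLp.ofLp : EuclideanSpace ℝ (Fin d) → _) ⁻¹' K) = dimH K :=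
  ContinuousLinearEquiv.dimH_preimage (EuclideanSpace.equiv (Fin d) ℝ) K

end PR

namespace PR

lemma exists_pi (γ : ℝ) (hγ : 0 < γ) (hγ1 : γ ≤ 1) : ∃ π : ℕ → ℕ, StrictMono π ∧
    (∀ ε > (0:ℝ), ∃ C : ℝ, ∀ k : ℕ, (π k : ℝ) ≤ (1/γ + ε) * k + C) ∧
    ∀ ε > (0:ℝ), ∀ B : ℕ, ∃ k : ℕ, B ≤ k ∧ π k + B + 1 ≤ π (k+1) ∧
      (π k : ℝ) ≤ (γ + ε) * ((π (k+1) : ℝ) - 1) := by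
  set c : ℝ := 1/γ - 1 with hc
  have hc0 : 0 ≤ c := by
    have : 1 ≤ 1/γ := by rw [le_div_iff₀ hγ]; linarith
    linarith
  set g : ℕ → ℕ := fun j => ⌈c * (Nat.factorial j : ℝ)⌉₊ + 2^j with hg
  have hgmono : Monotone g := by
    intro i j hij
    refine add_le_add (Nat.ceil_mono ?_) (Nat.pow_le_pow_right (by norm_num) hij)
    have : (Nat.factorial i : ℝ) ≤ Nat.factorial j := by exact_mod_cast Nat.factorial_le hij
    gcongr
  have hgub : ∀ j, (g j : ℝ) ≤ c * (Nat.factorial j : ℝ) + 1 + 2^j := by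
    intro j
    have := (Nat.ceil_lt_add_one (a := c * (Nat.factorial j : ℝ)) (by positivity)).le
    simp only [hg]; push_cast; linarith
  have hglb : ∀ j, c * (Nat.factorial j : ℝ) + 2^j ≤ (g j : ℝ) := by
    intro j
    have := Nat.le_ceil (c * (Nat.factorial j : ℝ))
    simp only [hg]; push_cast; linarith
  set s : ℕ → ℕ := fun k => ((Finset.range (k+1)).filter fun j => Nat.factorial j ≤ k).sup g with hs
  have hsmono : Monotone s := by
    intro k l hkl
    refine Finset.sup_mono ?_
    intro j hj
    simp only [Finset.mem_filter, Finset.mem_range] at hj ⊢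
    omega
  have hlim := FloorSemiring.tendsto_pow_div_factorial_atTop (2:ℝ)
  have h2 : ∀ ε > (0:ℝ), ∃ J : ℕ, ∀ j, J ≤ j → (2:ℝ)^j ≤ ε * (Nat.factorial j : ℝ) := by
    intro ε hε
    obtain ⟨J, hJ⟩ := Filter.eventually_atTop.1 (hlim.eventually (ge_mem_nhds hε))
    refine ⟨J, fun j hj => ?_⟩
    have := hJ j hj
    rwa [div_le_iff₀ (by positivity)] at this
  refine ⟨fun k => k + s k, ?_, ?_, ?_⟩
  · exact strictMono_id.add_monotone hsmono
  · intro ε hε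
    obtain ⟨J, hJ⟩ := h2 ε hε
    refine ⟨1 + 2^J, fun k => ?_⟩
    have hsk : (s k : ℝ) ≤ c * k + 1 + ε * k + 2^J := by
      have hpos : 0 ≤ c * k + 1 + ε * k + 2^J := by positivity
      have : s k ≤ ⌊c * k + 1 + ε * k + 2^J⌋₊ := by
        refine Finset.sup_le fun j hj => ?_
        simp only [Finset.mem_filter, Finset.mem_range] at hj
        refine Nat.le_floor ((hgub j).trans ?_)
        have hjk : (Nat.factorial j : ℝ) ≤ k := by exact_mod_cast hj.2
        have h3 : (2:ℝ)^j ≤ ε * k + 2^J := by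
          rcases le_total J j with h | h
          · have := hJ j h
            have : ε * (Nat.factorial j : ℝ) ≤ ε * k := by gcongr
            have : (0:ℝ) ≤ 2^J := by positivity
            linarith
          · have : (2:ℝ)^j ≤ 2^J := pow_le_pow_right₀ (by norm_num) h
            have : 0 ≤ ε * k := by positivity
            linarith
        have : c * (Nat.factorial j : ℝ) ≤ c * k := by gcongr
        linarith
      exact (Nat.le_floor_iff hpos).1 this
    push_cast
    have : (1/γ + ε) * (k:ℝ) = k + c * k + ε * k := by rw [hc]; ring
    linarith
  · intro ε hε B
    obtain ⟨J0, hJ0⟩ := h2 1 one_pos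
    obtain ⟨J1, hJ1⟩ := exists_nat_ge ((c+1)/ε)
    set J := J0 + J1 + B + 1 with hJ
    have hfJ : J < Nat.factorial (J+1) := by
      exact lt_of_lt_of_le (Nat.lt_succ_self J) (Nat.self_le_factorial _)
    have hk1 : Nat.factorial (J+1) - 1 + 1 = Nat.factorial (J+1) := by omega
    refine ⟨Nat.factorial (J+1) - 1, by omega, ?_⟩
    have hs1 : s (Nat.factorial (J+1) - 1) ≤ g J := by
      refine Finset.sup_le fun j hj => hgmono ?_
      simp only [Finset.mem_filter, Finset.mem_range] at hj
      by_contra hcon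
      have : Nat.factorial (J+1) ≤ Nat.factorial j := Nat.factorial_le (by omega)
      omega
    have hs2 : g (J+1) ≤ s (Nat.factorial (J+1)) := by
      refine Finset.le_sup (f := g) ?_
      simp only [Finset.mem_filter, Finset.mem_range]
      exact ⟨by have := Nat.self_le_factorial (J+1); omega, le_rfl⟩
    have hgJ : g J + J ≤ g (J+1) := by
      have h1 : ⌈c * (Nat.factorial J : ℝ)⌉₊ ≤ ⌈c * (Nat.factorial (J+1) : ℝ)⌉₊ := by
        refine Nat.ceil_mono ?_
        have : (Nat.factorial J : ℝ) ≤ Nat.factorial (J+1) := by exact_mod_cast Nat.factorial_le (Nat.le_succ J)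
        gcongr
      have h2 : J < 2^J := Nat.lt_two_pow_self
      simp only [hg, pow_succ]
      omega
    rw [hk1]
    constructor
    · beta_reduce; omega
    · have hk2 : ((Nat.factorial (J+1) - 1 : ℕ) : ℝ) = (Nat.factorial (J+1) : ℝ) - 1 := by
        rw [eq_sub_iff_add_eq]; exact_mod_cast hk1
      push_cast
      rw [hk2]
      have e1 : (s (Nat.factorial (J+1) - 1) : ℝ) ≤ g J := by exact_mod_cast hs1
      have e2 : (g (J+1) : ℝ) ≤ s (Nat.factorial (J+1)) := by exact_mod_cast hs2
      have e3 := hgub J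
      have e4 := hglb (J+1)
      have e5 := hJ0 J (by omega)
      have e6 : (1:ℝ) ≤ 2^(J+1) := one_le_pow₀ (by norm_num)
      have e7 : (Nat.factorial (J+1) : ℝ) = (J+1) * Nat.factorial J := by
        rw [Nat.factorial_succ]; push_cast; ring
      have e8 : c + 1 ≤ ε * (J+1) := by
        have h3 : (J1:ℝ) ≤ J := by exact_mod_cast (by omega : J1 ≤ J)
        rw [div_le_iff₀ hε] at hJ1
        nlinarith
      have e9 : (Nat.factorial (J+1) : ℝ)/γ ≤ (Nat.factorial (J+1) : ℝ) + (s (Nat.factorial (J+1)) : ℝ) - 1 := by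
        have : (Nat.factorial (J+1) : ℝ)/γ = Nat.factorial (J+1) + c * Nat.factorial (J+1) := by rw [hc]; ring
        linarith
      have e10 : (c + 1) * (Nat.factorial J : ℝ) ≤ ε * (Nat.factorial (J+1) : ℝ) := by
        rw [e7, ← mul_assoc]; gcongr
      have e11 : (γ + ε) * ((Nat.factorial (J+1) : ℝ)/γ) ≤ (γ + ε) * ((Nat.factorial (J+1) : ℝ) + (s (Nat.factorial (J+1)) : ℝ) - 1) := by
        gcongr
      have e12 : (Nat.factorial (J+1) : ℝ) + ε * (Nat.factorial (J+1) : ℝ) ≤ (γ + ε) * ((Nat.factorial (J+1) : ℝ)/γ) := by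
        have h4 : (Nat.factorial (J+1) : ℝ) ≤ (Nat.factorial (J+1) : ℝ)/γ := by
          rw [le_div_iff₀ hγ]; exact mul_le_of_le_one_right (by positivity) hγ1
        have h5 : γ * ((Nat.factorial (J+1) : ℝ)/γ) = Nat.factorial (J+1) := by field_simp
        nlinarith
      linarith

/-- integer-scaled digit spreading -/
def Hk (π : ℕ → ℕ) : ℕ → ℕ → ℕ
  | 0, a => a
  | k+1, a => 2^(π (k+1) - π k) * Hk π k (a/2) + a % 2

lemma Hk_strictMono (π : ℕ → ℕ) (hπ : StrictMono π) (k : ℕ) : StrictMono (Hk π k) := by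
  induction k with
  | zero => intro a b h; exact h
  | succ k ih =>
    intro a b hab
    have hlt : π k < π (k+1) := hπ (Nat.lt_succ_self k)
    have h2 : 2 ≤ 2^(π (k+1) - π k) := by
      calc 2 = 2^1 := by norm_num
        _ ≤ _ := Nat.pow_le_pow_right (by norm_num) (by omega)
    simp only [Hk]
    have ha := Nat.mod_lt a (by norm_num : 0 < 2)
    rcases lt_or_eq_of_le (Nat.div_le_div_right (c := 2) hab.le) with h | h
    · have := ih h
      have h3 : 2^(π (k+1) - π k) * (Hk π k (a/2) + 1) ≤ 2^(π (k+1) - π k) * Hk π k (b/2) :=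
        Nat.mul_le_mul_left _ this
      rw [mul_add, mul_one] at h3
      omega
    · rw [h]; omega

lemma Hk_lt (π : ℕ → ℕ) (hπ : StrictMono π) (k : ℕ) (a : ℕ) (ha : a < 2^k) : Hk π k a < 2^(π k) := by
  induction k generalizing a with
  | zero => simp only [Hk]; simp at ha; subst ha; positivity
  | succ k ih =>
    have hlt : π k < π (k+1) := hπ (Nat.lt_succ_self k)
    have h2 : 2 ≤ 2^(π (k+1) - π k) := by
      calc 2 = 2^1 := by norm_num
        _ ≤ _ := Nat.pow_le_pow_right (by norm_num) (by omega)
    have := ih (a/2) (by rw [pow_succ] at ha; omega)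
    have h3 : 2^(π (k+1) - π k) * (Hk π k (a/2) + 1) ≤ 2^(π (k+1) - π k) * 2^(π k) :=
        Nat.mul_le_mul_left _ this
    rw [← pow_add, mul_add, mul_one, Nat.sub_add_cancel hlt.le] at h3
    simp only [Hk]
    omega

noncomputable def xk (π : ℕ → ℕ) (y : ℝ) (k : ℕ) : ℝ := (Hk π k ⌊2^k * y⌋₊ : ℝ) / 2^(π k)

lemma xk_succ (π : ℕ → ℕ) (hπ : StrictMono π) (y : ℝ) (k : ℕ) :
    xk π y k ≤ xk π y (k+1) ∧ xk π y (k+1) ≤ xk π y k + 1/2^(π (k+1)) := by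
  have hlt : π k < π (k+1) := hπ (Nat.lt_succ_self k)
  have hfl : ⌊2^(k+1) * y⌋₊ / 2 = ⌊2^k * y⌋₊ := by
    have := Nat.floor_div_natCast ((2:ℝ)^(k+1) * y) 2
    rw [← this]; congr 1; push_cast; rw [pow_succ]; ring
  have h : xk π y (k+1) = xk π y k + ((⌊2^(k+1) * y⌋₊ % 2 : ℕ) : ℝ) / 2^(π (k+1)) := by
    simp only [xk, Hk, hfl]
    push_cast
    rw [add_div]
    congr 1
    have : (2:ℝ)^(π (k+1)) = 2^(π (k+1) - π k) * 2^(π k) := by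
      rw [← pow_add, Nat.sub_add_cancel hlt.le]
    rw [this]; field_simp
  have hm : ((⌊2^(k+1) * y⌋₊ % 2 : ℕ) : ℝ) ≤ 1 := by
    have := Nat.mod_lt ⌊2^(k+1) * y⌋₊ (by norm_num : 0 < 2)
    exact_mod_cast (by omega : ⌊2^(k+1) * y⌋₊ % 2 ≤ 1)
  rw [h]
  constructor
  · have : 0 ≤ ((⌊2^(k+1) * y⌋₊ % 2 : ℕ) : ℝ) / 2^(π (k+1)) := by positivity
    linarith
  · gcongr

lemma half_pow (π : ℕ → ℕ) (hπ : StrictMono π) (k : ℕ) : 2 * (1/(2:ℝ)^(π (k+1))) ≤ 1/2^(π k) := by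
  have hlt : π k < π (k+1) := hπ (Nat.lt_succ_self k)
  have : (2:ℝ)^(π k + 1) ≤ 2^(π (k+1)) := pow_le_pow_right₀ (by norm_num) hlt
  rw [pow_succ] at this
  have h3 : 2 * (1/(2:ℝ)^(π (k+1))) = 2 / 2^(π (k+1)) := by ring
  rw [h3, div_le_div_iff₀ (by positivity) (by positivity)]
  linarith

noncomputable def hfun (π : ℕ → ℕ) (y : ℝ) : ℝ := ⨆ k, xk π y k

lemma hfun_bounds (π : ℕ → ℕ) (hπ : StrictMono π) (y : ℝ) (k : ℕ) :
    xk π y k ≤ hfun π y ∧ hfun π y ≤ xk π y k + 1/2^(π k) := by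
  have h1 : Monotone (xk π y) := monotone_nat_of_le_succ fun k => (xk_succ π hπ y k).1
  have h2 : Antitone fun k => xk π y k + 1/2^(π k) := by
    refine antitone_nat_of_succ_le fun k => ?_
    have := (xk_succ π hπ y k).2
    have := half_pow π hπ k
    linarith
  have h3 : ∀ i j, xk π y i ≤ xk π y j + 1/2^(π j) := fun i j =>
    h1.forall_le_of_antitone h2 (fun k => le_add_of_nonneg_right (by positivity)) i j
  have hb : BddAbove (Set.range (xk π y)) := ⟨_, by rintro _ ⟨i, rfl⟩; exact h3 i 0⟩
  exact ⟨le_ciSup hb k, ciSup_le fun i => h3 i k⟩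

end PR

namespace PR

lemma hfun_gap (π : ℕ → ℕ) (hπ : StrictMono π) (y y' : ℝ) (hy : 0 ≤ y) (k : ℕ)
    (h : 2 ≤ 2^k * (y' - y)) : 1/2^(π k) ≤ hfun π y' - hfun π y := by
  have h1 := (hfun_bounds π hπ y' k).1
  have h2 := (hfun_bounds π hπ y k).2
  have hfl : ⌊2^k * y⌋₊ + 2 ≤ ⌊2^k * y'⌋₊ := by
    refine Nat.le_floor ?_
    have := Nat.floor_le (a := 2^k * y) (by positivity)
    push_cast; linarith
  have hH : Hk π k ⌊2^k * y⌋₊ + 2 ≤ Hk π k ⌊2^k * y'⌋₊ := by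
    have a1 := Hk_strictMono π hπ k (Nat.lt_succ_self ⌊2^k * y⌋₊)
    have a2 := Hk_strictMono π hπ k (by omega : ⌊2^k * y⌋₊ + 1 < ⌊2^k * y'⌋₊)
    simp only [Nat.succ_eq_add_one] at a1
    omega
  have hx : xk π y k + 2 * (1/2^(π k)) ≤ xk π y' k := by
    simp only [xk]
    have : (Hk π k ⌊2^k * y⌋₊ : ℝ) + 2 ≤ Hk π k ⌊2^k * y'⌋₊ := by exact_mod_cast hH
    calc _ = ((Hk π k ⌊2^k * y⌋₊ : ℝ) + 2) / 2^(π k) := by ring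
      _ ≤ _ := by gcongr
  linarith

lemma hfun_holder_aux (π : ℕ → ℕ) (hπ : StrictMono π) (R C : ℝ) (hR : 0 < R)
    (hC : ∀ k : ℕ, (π k : ℝ) ≤ R * k + C) (y y' : ℝ) (hy : 0 ≤ y) (hyy : y < y') (hy' : y' < 1) :
    (y' - y) ^ R ≤ (4:ℝ)^R * 2^C * (hfun π y' - hfun π y) := by
  have hδ : 0 < y' - y := by linarith
  obtain ⟨n, hn1, hn2⟩ := exists_nat_pow_near (x := 2/(y' - y)) (y := 2)
    (by rw [le_div_iff₀ hδ]; linarith) (by norm_num)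
  rw [le_div_iff₀ hδ] at hn1
  rw [div_lt_iff₀ hδ] at hn2
  have hg := hfun_gap π hπ y y' hy (n+1) hn2.le
  have h4 : y' - y ≤ 4 * ((2:ℝ)^(n+1))⁻¹ := by
    rw [← div_eq_mul_inv, le_div_iff₀ (by positivity), pow_succ]; linarith
  calc (y' - y)^R ≤ (4 * ((2:ℝ)^(n+1))⁻¹)^R := by gcongr
    _ = (4:ℝ)^R * (2:ℝ)^(-(R * (n+1:ℕ))) := by
        rw [Real.mul_rpow (by norm_num) (by positivity), ← Real.rpow_natCast, ← Real.rpow_neg (by norm_num),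
          ← Real.rpow_mul (by norm_num)]
        congr 2; ring
    _ ≤ (4:ℝ)^R * (2:ℝ)^(C - π (n+1)) := by
        gcongr
        · norm_num
        · have := hC (n+1); linarith
    _ = (4:ℝ)^R * 2^C * (1/2^(π (n+1))) := by
        rw [Real.rpow_sub (by norm_num), Real.rpow_natCast]; ring
    _ ≤ _ := by gcongr

lemma exists_K2 (γ : ℝ) (hγ : 0 < γ) (hγ1 : γ ≤ 1) : ∃ (K : Set ℝ) (h : ℝ → ℝ),
    IsCompact K ∧ K ⊆ Set.Icc 0 1 ∧ Set.MapsTo h (Set.Ico 0 1) K ∧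
    (∀ ε > (0:ℝ), ∃ D : ℝ, 0 < D ∧ ∀ y ∈ Set.Ico (0:ℝ) 1, ∀ y' ∈ Set.Ico (0:ℝ) 1,
      |y - y'| ^ (1/γ + ε) ≤ D * |h y - h y'|) ∧
    ∀ ε > (0:ℝ), ∀ B : ℕ, ∃ n m : ℕ, B ≤ n ∧ n + B ≤ m ∧ (n:ℝ) ≤ (γ + ε) * m ∧
      ∀ z ∈ K, ∃ a : ℕ, a < 2^n ∧ (a:ℝ)/2^n ≤ z ∧ z ≤ (a:ℝ)/2^n + 1/2^m := by
  obtain ⟨π, hπ, hπ1, hπ2⟩ := exists_pi γ hγ hγ1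
  set h := hfun π with hh
  set P : ℕ × ℕ → Prop := fun q => ∀ y ∈ Set.Ico (0:ℝ) 1, ∃ a ∈ Finset.range (2^q.1),
    h y ∈ Set.Icc ((a:ℝ)/2^q.1) ((a:ℝ)/2^q.1 + 1/2^q.2) with hP
  set K : Set ℝ := Set.Icc 0 1 ∩ ⋂ q : ℕ × ℕ, ⋂ (_ : P q),
    ⋃ a ∈ Finset.range (2^q.1), Set.Icc ((a:ℝ)/2^q.1) ((a:ℝ)/2^q.1 + 1/2^q.2) with hK
  have hx01 : ∀ y ∈ Set.Ico (0:ℝ) 1, ∀ k, ⌊2^k * y⌋₊ < 2^k := by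
    intro y hy k
    rw [Nat.floor_lt (by have := hy.1; positivity)]
    push_cast
    have := hy.2
    have h2 : (0:ℝ) < 2^k := by positivity
    nlinarith
  refine ⟨K, h, ?_, Set.inter_subset_left, ?_, ?_, ?_⟩
  · refine isCompact_Icc.inter_right (isClosed_iInter fun q => isClosed_iInter fun _ => ?_)
    exact isClosed_biUnion_finset fun a _ => isClosed_Icc
  · intro y hy
    refine ⟨?_, ?_⟩
    · have hb := hfun_bounds π hπ y 0
      have hx0 : 0 ≤ xk π y 0 := by simp only [xk]; positivity
      have hx1 : xk π y 0 + 1/2^(π 0) ≤ 1 := by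
        have := Hk_lt π hπ 0 _ (hx01 y hy 0)
        simp only [xk]
        rw [← add_div, div_le_one (by positivity)]
        exact_mod_cast this
      exact ⟨hx0.trans hb.1, hb.2.trans hx1⟩
    · simp only [Set.mem_iInter, Set.mem_iUnion]
      intro q hq
      obtain ⟨a, ha, h⟩ := hq y hy
      exact ⟨a, ha, h⟩
  · intro ε hε
    obtain ⟨C, hC⟩ := hπ1 ε hε
    have hR : 0 < 1/γ + ε := by positivity
    refine ⟨(4:ℝ)^(1/γ+ε) * 2^C, by positivity, fun y hy y' hy' => ?_⟩
    rcases lt_trichotomy y y' with hlt | heq | hgt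
    · have := hfun_holder_aux π hπ _ C hR hC y y' hy.1 hlt hy'.2
      rw [abs_sub_comm, abs_of_pos (sub_pos.2 hlt), abs_sub_comm]
      refine this.trans ?_
      gcongr
      exact le_abs_self _
    · subst heq; rw [sub_self, sub_self, abs_zero, Real.zero_rpow hR.ne', mul_zero]
    · have := hfun_holder_aux π hπ _ C hR hC y' y hy'.1 hgt hy.2
      rw [abs_of_pos (sub_pos.2 hgt)]
      refine this.trans ?_
      gcongr
      exact le_abs_self _
  · intro ε hε B
    obtain ⟨k, hk, hk1, hk2⟩ := hπ2 ε hε B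
    have hlt : 1 ≤ π (k+1) := by omega
    have hcast : ((π (k+1) - 1 : ℕ) : ℝ) = (π (k+1) : ℝ) - 1 := by push_cast [hlt]; ring
    refine ⟨π k, π (k+1) - 1, hk.trans (hπ.id_le k), by omega, by rw [hcast]; exact hk2, ?_⟩
    have hPq : P (π k, π (k+1) - 1) := by
      intro y hy
      refine ⟨Hk π k ⌊2^k * y⌋₊, Finset.mem_range.2 (Hk_lt π hπ k _ (hx01 y hy k)), ?_⟩
      have b1 := (hfun_bounds π hπ y k).1
      have b2 := (hfun_bounds π hπ y (k+1)).2
      have b3 := (xk_succ π hπ y k).2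
      have b4 : 1/(2:ℝ)^(π (k+1) - 1) = 2 * (1/2^(π (k+1))) := by
        have : (2:ℝ)^(π (k+1)) = 2^(π (k+1) - 1) * 2 := by
          rw [← pow_succ, Nat.sub_add_cancel hlt]
        rw [this]; field_simp
      refine ⟨b1, ?_⟩
      show h y ≤ xk π y k + 1/(2:ℝ)^(π (k+1) - 1)
      rw [b4]; linarith
    intro z hz
    have := hz.2
    simp only [Set.mem_iInter, Set.mem_iUnion] at this
    obtain ⟨a, ha, hz⟩ := this _ hPq
    exact ⟨a, Finset.mem_range.1 ha, hz.1, hz.2⟩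

end PR

namespace PR
variable {d : ℕ}

lemma K2_cover (γ : ℝ) (K : Set ℝ) 
    (hcov : ∀ ε > (0:ℝ), ∀ B : ℕ, ∃ n m : ℕ, B ≤ n ∧ n + B ≤ m ∧ (n:ℝ) ≤ (γ + ε) * m ∧
      ∀ z ∈ K, ∃ a : ℕ, a < 2^n ∧ (a:ℝ)/2^n ≤ z ∧ z ≤ (a:ℝ)/2^n + 1/2^m) (ε : ℝ) (hε : 0 < ε) (B : ℕ) :
    ∃ (N : ℕ) (S : Finset (Fin d → ℤ)), B ≤ N ∧ 1 ≤ N ∧ (S.card : ℝ) ≤ (N : ℝ) ^ (d * (γ + ε)) ∧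
      ∀ ξ ∈ {ξ : Fin d → ℝ | ∀ j, ξ j ∈ K}, ∃ s ∈ S, ∀ j, |N * ξ j - s j| ≤ 1 := by
  obtain ⟨n, m, hBn, hnm, hn, h⟩ := hcov ε hε B
  classical
  refine ⟨2^m, (Finset.univ : Finset (Fin d → Fin (2^n))).image
    (fun a j => ((a j : ℕ) : ℤ) * 2^(m-n)), ?_, Nat.one_le_two_pow, ?_, ?_⟩
  · have : m < 2^m := Nat.lt_two_pow_self
    omega
  · have h1 : ((Finset.univ : Finset (Fin d → Fin (2^n))).image
      (fun a j => ((a j : ℕ) : ℤ) * 2^(m-n))).card ≤ (2^n)^d := by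
      refine Finset.card_image_le.trans ?_
      simp
    calc _ ≤ (((2^n)^d : ℕ) : ℝ) := by exact_mod_cast h1
      _ = (2:ℝ)^((d:ℝ) * n) := by
        push_cast
        rw [← pow_mul, ← Real.rpow_natCast]; congr 1; push_cast; ring
      _ ≤ (2:ℝ)^((d:ℝ) * ((γ + ε) * m)) := by
        gcongr
        norm_num
      _ = _ := by
        push_cast
        rw [← Real.rpow_natCast, ← Real.rpow_mul (by norm_num)]; congr 1; ring
  · intro ξ hξ
    choose a ha h1 h2 using fun j => h _ (hξ j)
    refine ⟨_, Finset.mem_image_of_mem _ (Finset.mem_univ fun j => ⟨a j, ha j⟩), fun j => ?_⟩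
    have e : (2:ℝ)^m = 2^(m-n) * 2^n := by rw [← pow_add, Nat.sub_add_cancel (by omega)]
    have h3 : (2:ℝ)^m * ((a j : ℝ)/2^n) ≤ 2^m * ξ j := by gcongr; exact h1 j
    have h4 : (2:ℝ)^m * ξ j ≤ 2^m * ((a j : ℝ)/2^n + 1/2^m) := by gcongr; exact h2 j
    have h5 : (2:ℝ)^m * ((a j : ℝ)/2^n) = a j * 2^(m-n) := by rw [e]; field_simp
    have h6 : (2:ℝ)^m * (1/2^m) = 1 := by field_simp
    rw [mul_add, h5, h6] at h4
    rw [h5] at h3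
    push_cast
    rw [abs_le]; constructor <;> linarith

lemma K2_dim_le (γ : ℝ) (hγ : 0 ≤ γ) (K : Set ℝ)
    (hcov : ∀ ε > (0:ℝ), ∀ B : ℕ, ∃ n m : ℕ, B ≤ n ∧ n + B ≤ m ∧ (n:ℝ) ≤ (γ + ε) * m ∧
      ∀ z ∈ K, ∃ a : ℕ, a < 2^n ∧ (a:ℝ)/2^n ≤ z ∧ z ≤ (a:ℝ)/2^n + 1/2^m) :
    dimH {ξ : Fin d → ℝ | ∀ j, ξ j ∈ K} ≤ ENNReal.ofReal (d * γ) := by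
  have h1 : ∀ ε > (0:ℝ), dimH {ξ : Fin d → ℝ | ∀ j, ξ j ∈ K} ≤ ENNReal.ofReal (d * (γ + ε)) :=
    fun ε hε => dimH_cover _ _ (by positivity) (K2_cover γ K hcov ε hε)
  have ht : Filter.Tendsto (fun ε : ℝ => ENNReal.ofReal (d * (γ + ε))) (nhdsWithin 0 (Set.Ioi 0))
      (nhds (ENNReal.ofReal (d * (γ + 0)))) := by
    refine ((ENNReal.continuous_ofReal.comp (by fun_prop : Continuous fun ε : ℝ => d * (γ + ε))).tendsto 0).mono_left nhdsWithin_le_nhds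
  rw [add_zero] at ht
  exact ge_of_tendsto ht (by filter_upwards [self_mem_nhdsWithin] with ε hε using h1 ε hε)

lemma K2_dim_ge (γ : ℝ) (hγ : 0 < γ) (K : Set ℝ) (h : ℝ → ℝ) (hmap : Set.MapsTo h (Set.Ico 0 1) K)
    (hhol : ∀ ε > (0:ℝ), ∃ D : ℝ, 0 < D ∧ ∀ y ∈ Set.Ico (0:ℝ) 1, ∀ y' ∈ Set.Ico (0:ℝ) 1,
      |y - y'| ^ (1/γ + ε) ≤ D * |h y - h y'|) :
    ENNReal.ofReal (d * γ) ≤ dimH {ξ : Fin d → ℝ | ∀ j, ξ j ∈ K} := by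
  set Q : Set (Fin d → ℝ) := Set.univ.pi fun _ => Set.Ico 0 1 with hQ
  have hQd : dimH Q = d := by
    have h_int : (interior Q).Nonempty := by
      refine ⟨fun _ => 1/2, ?_⟩
      rw [hQ, interior_pi_set Set.finite_univ]
      intro j _
      rw [interior_Ico]
      constructor <;> norm_num
    rw [Real.dimH_of_nonempty_interior h_int]; simp
  set F : (Fin d → ℝ) → (Fin d → ℝ) := fun y j => h (y j) with hF
  have hsub : F '' Q ⊆ {ξ : Fin d → ℝ | ∀ j, ξ j ∈ K} := by
    rintro _ ⟨y, hy, rfl⟩ j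
    exact hmap (hy j trivial)
  have main : ∀ ε > (0:ℝ), ENNReal.ofReal (d * (1 / (1/γ + ε))) ≤ dimH (F '' Q) := by
    intro ε hε
    obtain ⟨D, hD, hhol⟩ := hhol ε hε
    have hR : 0 < 1/γ + ε := by positivity
    set R := 1/γ + ε with hRdef
    have hdist : ∀ y ∈ Q, ∀ y' ∈ Q, dist y y' ≤ D^(1/R) * dist (F y) (F y') ^ (1/R) := by
      intro y hy y' hy'
      rw [dist_pi_le_iff (by positivity)]
      intro j
      have h1 := hhol (y j) (hy j trivial) (y' j) (hy' j trivial)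
      have h2 : |h (y j) - h (y' j)| ≤ dist (F y) (F y') := by
        rw [← Real.dist_eq]; exact dist_le_pi_dist (F y) (F y') j
      rw [Real.dist_eq, ← Real.mul_rpow hD.le dist_nonneg]
      calc |y j - y' j| = (|y j - y' j| ^ R) ^ (1/R) := by
            rw [← Real.rpow_mul (abs_nonneg _), mul_one_div_cancel hR.ne', Real.rpow_one]
        _ ≤ _ := by
            gcongr
            exact h1.trans (by gcongr)
    have hinj : Set.InjOn F Q := by
      intro y hy y' hy' he
      have := hdist y hy y' hy'
      rw [he, dist_self, Real.zero_rpow (by positivity), mul_zero] at this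
      exact dist_le_zero.1 this
    set G := Function.invFunOn F Q with hG
    have hGF : ∀ y ∈ Q, G (F y) = y := fun y hy => hinj.leftInvOn_invFunOn hy
    have hGh : HolderOnWith (D^(1/R)).toNNReal (1/R).toNNReal G (F '' Q) := by
      rintro _ ⟨y, hy, rfl⟩ _ ⟨y', hy', rfl⟩
      rw [hGF y hy, hGF y' hy', edist_dist, edist_dist, Real.coe_toNNReal _ (by positivity : 0 ≤ 1/R),
        ENNReal.ofReal_rpow_of_nonneg dist_nonneg (by positivity)]
      change _ ≤ ENNReal.ofReal (D^(1/R)) * _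
      rw [← ENNReal.ofReal_mul (by positivity)]
      exact ENNReal.ofReal_le_ofReal (hdist y hy y' hy')
    have hGQ : G '' (F '' Q) = Q := by
      rw [Set.image_image]
      ext y; constructor
      · rintro ⟨z, hz, rfl⟩; beta_reduce; rw [hGF z hz]; exact hz
      · intro hy; exact ⟨y, hy, hGF y hy⟩
    have hr0 : 0 < (1/R).toNNReal := Real.toNNReal_pos.2 (by positivity)
    have := hGh.dimH_image_le hr0
    rw [hGQ, hQd, ENNReal.le_div_iff_mul_le (Or.inl (by exact_mod_cast hr0.ne')) (Or.inl ENNReal.coe_ne_top)] at this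
    rw [ENNReal.ofReal_mul (by positivity), ENNReal.ofReal_natCast]
    exact this
  have ht : Filter.Tendsto (fun ε : ℝ => ENNReal.ofReal (d * (1 / (1/γ + ε)))) (nhdsWithin 0 (Set.Ioi 0))
      (nhds (ENNReal.ofReal (d * (1 / (1/γ + 0))))) := by
    refine (ENNReal.continuous_ofReal.tendsto _).comp ?_
    refine Filter.Tendsto.mono_left ?_ nhdsWithin_le_nhds
    refine Filter.Tendsto.const_mul _ (Filter.Tendsto.div tendsto_const_nhds ?_ (by positivity))
    exact (by fun_prop : Continuous fun ε : ℝ => 1/γ + ε).tendsto 0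
  rw [add_zero, one_div_one_div] at ht
  refine (le_of_tendsto ht ?_).trans (dimH_mono hsub)
  filter_upwards [self_mem_nhdsWithin] with ε hε using main ε hε

end PR

namespace PR
variable {d : ℕ}

lemma exists_gauss_shift (v : EuclideanSpace ℝ (Fin d)) :
    ∃ G : SchwartzMap (EuclideanSpace ℝ (Fin d)) ℂ,
    (∀ x, G x = ((Real.exp (-Real.pi * ‖x - v‖ ^ 2) : ℝ) : ℂ)) ∧
    ∀ ξ, 𝓕 (⇑G) ξ = Complex.exp (((-(2 * Real.pi * inner ℝ v ξ) : ℝ) : ℂ) * Complex.I) *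
      ((Real.exp (-Real.pi * ‖ξ‖ ^ 2) : ℝ) : ℂ) := by
  obtain ⟨G, hG⟩ := exists_gauss_affine 1 one_pos v
  simp only [div_one] at hG
  refine ⟨G, hG, fun ξ => ?_⟩
  have h1 : (⇑G) = (fun x : EuclideanSpace ℝ (Fin d) => Complex.exp (-(Real.pi:ℂ) * ‖x‖^2)) ∘ (fun x => x + (-v)) := by
    funext x
    rw [hG, Function.comp_apply, ← sub_eq_add_neg]
    push_cast; rfl
  have h2 := VectorFourier.fourierIntegral_comp_add_right Real.fourierChar
    (volume : Measure (EuclideanSpace ℝ (Fin d))) (innerₗ (EuclideanSpace ℝ (Fin d)))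
    (fun x : EuclideanSpace ℝ (Fin d) => Complex.exp (-(Real.pi:ℂ) * ‖x‖^2)) (-v)
  have h3 := congrFun h2 ξ
  have hpi : (Real.pi : ℂ) ≠ 0 := by exact_mod_cast Real.pi_ne_zero
  have h4 := fourier_gaussian_innerProductSpace (V := EuclideanSpace ℝ (Fin d)) (b := (Real.pi:ℂ)) (by simpa using Real.pi_pos) ξ
  rw [div_self hpi, Complex.one_cpow, one_mul] at h4
  rw [h1]
  refine h3.trans ?_
  change _ • (𝓕 (fun x : EuclideanSpace ℝ (Fin d) => Complex.exp (-(Real.pi:ℂ) * ‖x‖^2)) ξ) = _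
  rw [h4, Circle.smul_def, Real.fourierChar_apply, smul_eq_mul]
  simp only [innerₗ_apply_apply, inner_neg_left]
  congr 1
  · congr 2; push_cast; ring
  · push_cast
    congr 1
    field_simp

end PR

namespace PR
variable {d : ℕ}

lemma bump_sum (K : ℕ) (q : ℝ) (hq : 1 ≤ q) (hKq : (K:ℝ) ≤ q) (t : ℝ) :
    ∑ k ∈ Finset.range K, Real.exp (-Real.pi * (t - k * q)^2) ≤ 2 := by
  classical
  have h1 : ∀ k ∈ Finset.range K, Real.exp (-Real.pi * (t - k * q)^2) ≤
      1/q + if |t - k * q| < q/2 then 1 else 0 := by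
    intro k _
    have hq0 : 0 < q := by linarith
    split_ifs with h
    · have : Real.exp (-Real.pi * (t - k * q)^2) ≤ 1 := by
        rw [Real.exp_le_one_iff]
        have : 0 ≤ Real.pi * (t - k * q)^2 := by positivity
        linarith
      have : 0 < 1/q := by positivity
      linarith
    · push Not at h
      rw [add_zero]
      have h2 : (q/2)^2 ≤ (t - k * q)^2 := by
        rw [← sq_abs (t - k * q)]; gcongr
      have h3 : q ≤ Real.pi * (t - k * q)^2 + 1 := by
        have := Real.pi_gt_three
        nlinarith [sq_nonneg (q - 2/3), sq_nonneg (t - k * q)]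
      have h4 := Real.add_one_le_exp (Real.pi * (t - k * q)^2)
      rw [neg_mul, Real.exp_neg, one_div]
      exact inv_anti₀ hq0 (h3.trans h4)
  refine (Finset.sum_le_sum h1).trans ?_
  rw [Finset.sum_add_distrib, Finset.sum_const, Finset.card_range, nsmul_eq_mul, ← Finset.sum_filter,
    Finset.sum_const, nsmul_eq_mul, mul_one]
  have hq0 : 0 < q := by linarith
  have hc : ((Finset.range K).filter fun k : ℕ => |t - k * q| < q/2).card ≤ 1 := by
    rw [Finset.card_le_one]
    intro a ha b hb
    simp only [Finset.mem_filter] at ha hb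
    have h3 : |((a:ℝ) - b) * q| < q := by
      have := abs_sub_lt_iff.1 (show |t - b * q - (t - a * q)| < q by
        calc _ ≤ |t - b*q| + |t - a*q| := abs_sub _ _
          _ < q := by linarith [ha.2, hb.2])
      rw [abs_lt]; constructor <;> linarith [this.1, this.2]
    rw [abs_mul, abs_of_pos hq0] at h3
    have h4 : |(a:ℝ) - b| < 1 := by
      by_contra hcon; push Not at hcon; nlinarith
    have h5 : |(a:ℤ) - b| < 1 := by exact_mod_cast h4
    rw [Int.abs_lt_one_iff] at h5
    omega
  have hc' : (((Finset.range K).filter fun k : ℕ => |t - k * q| < q/2).card : ℝ) ≤ 1 := by exact_mod_cast hc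
  have : (K:ℝ) * (1/q) ≤ 1 := by
    rw [mul_one_div, div_le_one hq0]; exact hKq
  linarith

lemma lattice_fun (i0 : Fin d) (p : ℝ) (hp : 1 < p) : ∃ I : ℝ, 0 ≤ I ∧ ∀ (K : ℕ) (q : ℝ), 1 ≤ K → (K:ℝ) ≤ q →
    ∃ f : SchwartzMap (EuclideanSpace ℝ (Fin d)) ℂ,
    (∀ ξ : EuclideanSpace ℝ (Fin d), ∀ (a : ℕ) (θ : ℝ), q * ξ i0 = a + θ → 0 ≤ θ → K * θ ≤ 1/8 →
      Real.exp (-Real.pi * ‖ξ‖^2) / 2 ≤ ‖𝓕 (⇑f) ξ‖) ∧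
    eLpNorm (⇑f) (ENNReal.ofReal p) volume ≤ ENNReal.ofReal (((2/K)^(p-1) * I)^(1/p)) := by
  have h_int := GaussianFourier.integral_rexp_neg_mul_sq_norm (V := EuclideanSpace ℝ (Fin d)) Real.pi_pos
  set I := ∫ x : EuclideanSpace ℝ (Fin d), Real.exp (-Real.pi * ‖x‖^2) with hI
  have hIi : Integrable fun x : EuclideanSpace ℝ (Fin d) => Real.exp (-Real.pi * ‖x‖ ^ 2) := by
    refine not_imp_comm.1 integral_undef ?_
    rw [← hI, h_int]; have := Real.pi_pos; positivity
  have hI0 : 0 ≤ I := integral_nonneg fun x => by positivity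
  refine ⟨I, hI0, fun K q hK hKq => ?_⟩
  have hK0 : (0:ℝ) < K := by positivity
  have hq1 : 1 ≤ q := le_trans (by exact_mod_cast hK) hKq
  set v : ℕ → EuclideanSpace ℝ (Fin d) := fun k => EuclideanSpace.single i0 ((k:ℝ) * q) with hv
  choose G hG1 hG2 using fun k => exists_gauss_shift (v k)
  refine ⟨(K:ℂ)⁻¹ • ∑ k ∈ Finset.range K, G k, ?_, ?_⟩
  · intro ξ a θ hqa hθ hKθ
    have hF : 𝓕 (⇑((K:ℂ)⁻¹ • ∑ k ∈ Finset.range K, G k)) ξ = (K:ℂ)⁻¹ * ∑ k ∈ Finset.range K,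
        (Complex.exp (((-(2 * Real.pi * inner ℝ (v k) ξ) : ℝ) : ℂ) * Complex.I) *
      ((Real.exp (-Real.pi * ‖ξ‖ ^ 2) : ℝ) : ℂ)) := by
      rw [← SchwartzMap.fourier_coe, FourierTransform.fourier_smul, FourierTransform.fourier_sum,
        smul_apply, sum_apply, smul_eq_mul]
      congr 1
      exact Finset.sum_congr rfl fun k _ => hG2 k ξ
    rw [hF]
    refine le_trans ?_ (Complex.re_le_norm _)
    rw [← Finset.sum_mul, ← mul_assoc, Complex.re_mul_ofReal, ← Complex.ofReal_natCast, ← Complex.ofReal_inv,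
      Complex.re_ofReal_mul, Complex.re_sum]
    have h1 : ∀ k ∈ Finset.range K, (1/2 : ℝ) ≤
        (Complex.exp (((-(2 * Real.pi * inner ℝ (v k) ξ) : ℝ) : ℂ) * Complex.I)).re := by
      intro k hk
      rw [Complex.exp_ofReal_mul_I_re, Real.cos_neg]
      have h2 : inner ℝ (v k) ξ = k * (a + θ) := by
        rw [← hqa, hv, EuclideanSpace.inner_single_left]; simp; ring
      have h3 : 2 * Real.pi * inner ℝ (v k) ξ = 2 * Real.pi * (k * θ) + ((k * a : ℕ) : ℝ) * (2 * Real.pi) := by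
        rw [h2]; push_cast; ring
      rw [h3, Real.cos_add_nat_mul_two_pi]
      have h4 := Real.one_sub_sq_div_two_le_cos (x := 2 * Real.pi * (k * θ))
      have hkK : (k:ℝ) ≤ K := by exact_mod_cast (Finset.mem_range.1 hk).le
      have h5 : k * θ ≤ 1/8 := le_trans (by gcongr) hKθ
      have h6 : 0 ≤ k * θ := by positivity
      have h7 : 2 * Real.pi * (k * θ) ≤ 1 := by
        have := Real.pi_lt_four
        nlinarith [Real.pi_pos]
      have h8 : 0 ≤ 2 * Real.pi * (k * θ) := by have := Real.pi_pos; positivity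
      nlinarith
    have h2 := Finset.sum_le_sum h1
    rw [Finset.sum_const, Finset.card_range, nsmul_eq_mul] at h2
    calc Real.exp (-Real.pi * ‖ξ‖^2) / 2 = (K:ℝ)⁻¹ * (K * (1/2)) * Real.exp (-Real.pi * ‖ξ‖^2) := by
          field_simp
      _ ≤ _ := by gcongr
  · set f := (K:ℂ)⁻¹ • ∑ k ∈ Finset.range K, G k with hf
    have hfx : ∀ x, ‖f x‖ = (K:ℝ)⁻¹ * ∑ k ∈ Finset.range K, Real.exp (-Real.pi * ‖x - v k‖ ^ 2) := by
      intro x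
      have : f x = (((K:ℝ)⁻¹ * ∑ k ∈ Finset.range K, Real.exp (-Real.pi * ‖x - v k‖ ^ 2) : ℝ) : ℂ) := by
        rw [hf, smul_apply, sum_apply, smul_eq_mul, Complex.ofReal_mul, Complex.ofReal_sum]
        push_cast
        congr 1
        refine Finset.sum_congr rfl fun k _ => ?_
        rw [hG1]; push_cast; rfl
      rw [this, Complex.norm_real, Real.norm_of_nonneg (by positivity)]
    have hsup : ∀ x, ‖f x‖ ≤ 2/K := by
      intro x
      rw [hfx, div_eq_inv_mul]
      gcongr
      refine le_trans (Finset.sum_le_sum fun k _ => ?_) (bump_sum K q hq1 hKq (x i0))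
      refine Real.exp_le_exp.2 ?_
      have h1 : (x i0 - k * q)^2 ≤ ‖x - v k‖^2 := by
        have := PiLp.norm_apply_le (x - v k) i0
        have e : (x - v k) i0 = x i0 - k * q := by simp [hv]
        rw [e, Real.norm_eq_abs] at this
        rw [← sq_abs]; gcongr
      have := Real.pi_pos
      nlinarith
    have hi : ∀ k, Integrable fun x : EuclideanSpace ℝ (Fin d) => Real.exp (-Real.pi * ‖x - v k‖ ^ 2) :=
      fun k => hIi.comp_sub_right (v k)
    have hnorm1 : ∫ x, ‖f x‖ = I := by
      simp_rw [hfx]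
      rw [integral_const_mul, integral_finsetSum _ fun k _ => hi k]
      have : ∀ k ∈ Finset.range K, ∫ x : EuclideanSpace ℝ (Fin d), Real.exp (-Real.pi * ‖x - v k‖ ^ 2) = I := by
        intro k _
        exact integral_sub_right_eq_self (fun x : EuclideanSpace ℝ (Fin d) => Real.exp (-Real.pi * ‖x‖ ^ 2)) (v k)
      rw [Finset.sum_congr rfl this, Finset.sum_const, Finset.card_range, nsmul_eq_mul, inv_mul_cancel_left₀ hK0.ne']
    have hp0 : 0 < p := by linarith
    rw [eLpNorm_eq_lintegral_rpow_enorm_toReal (by simpa using hp0) ENNReal.ofReal_ne_top,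
      ENNReal.toReal_ofReal hp0.le, ← ENNReal.ofReal_rpow_of_nonneg (by positivity) (by positivity)]
    refine ENNReal.rpow_le_rpow ?_ (by positivity)
    calc ∫⁻ x, ‖f x‖ₑ ^ p ≤ ∫⁻ x, ENNReal.ofReal ((2/K)^(p-1) * ‖f x‖) := by
          refine lintegral_mono fun x => ?_
          rw [← ofReal_norm, ENNReal.ofReal_rpow_of_nonneg (norm_nonneg _) hp0.le]
          refine ENNReal.ofReal_le_ofReal ?_
          calc ‖f x‖^p = ‖f x‖^(p-1) * ‖f x‖ := by
                rcases (norm_nonneg (f x)).eq_or_lt with h | h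
                · rw [← h, Real.zero_rpow hp0.ne', mul_zero]
                · nth_rw 3 [← Real.rpow_one ‖f x‖]
                  rw [← Real.rpow_add h, sub_add_cancel]
            _ ≤ _ := by
                exact mul_le_mul_of_nonneg_right
                  (Real.rpow_le_rpow (norm_nonneg _) (hsup x) (sub_nonneg.2 hp.le)) (norm_nonneg _)
      _ = ENNReal.ofReal (∫ x, (2/K)^(p-1) * ‖f x‖) := by
          rw [ofReal_integral_eq_lintegral_ofReal (f.integrable.norm.const_mul _)
            (Filter.Eventually.of_forall fun x => by positivity)]
      _ = _ := by rw [integral_const_mul, hnorm1]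

lemma not_good_lattice (E : Set (EuclideanSpace ℝ (Fin d))) (hE : MeasurableSet E) (i0 : Fin d)
    (R : ℝ) (hR : ∀ ξ ∈ E, ‖ξ‖ ≤ R) (p : ℝ) (hp : 1 < p)
    (hlat : ∀ B : ℕ, ∃ n m : ℕ, B ≤ n ∧ n + B ≤ m ∧ ∀ ξ ∈ E, ∃ a : ℕ,
      (a:ℝ)/2^n ≤ ξ i0 ∧ ξ i0 ≤ (a:ℝ)/2^n + 1/2^m) : ¬ Good E p := by
  obtain ⟨I, hI, hf⟩ := lattice_fun i0 p hp
  refine not_good_of_seq E hE p (Real.exp (-Real.pi * R^2) / 2) (by positivity) fun ε hε => ?_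
  have hp0 : 0 < p := by linarith
  have ht : Filter.Tendsto (fun K : ℕ => ((2/(K:ℝ))^(p-1) * I)^(1/p)) Filter.atTop (nhds 0) := by
    have h1 : Filter.Tendsto (fun K : ℕ => 2/(K:ℝ)) Filter.atTop (nhds 0) :=
      tendsto_const_div_atTop_nhds_zero_nat 2
    have h2 := (h1.rpow_const (p := p-1) (Or.inr (by linarith))).mul_const I
    have h3 := h2.rpow_const (p := 1/p) (Or.inr (by positivity))
    rwa [Real.zero_rpow (by linarith), zero_mul, Real.zero_rpow (by positivity)] at h3
  obtain ⟨K, hK1, hKε⟩ := ((Filter.eventually_ge_atTop 1).and (ht.eventually (ge_mem_nhds hε))).exists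
  obtain ⟨n, m, hn, hm, hcov⟩ := hlat (K + 3)
  have hKq : (K:ℝ) ≤ 2^n := by
    have : n < 2^n := Nat.lt_two_pow_self
    exact_mod_cast (by omega : K ≤ 2^n)
  obtain ⟨f, hf1, hf2⟩ := hf K (2^n) hK1 hKq
  refine ⟨f, fun ξ hξ => ?_, hf2.trans (ENNReal.ofReal_le_ofReal hKε)⟩
  obtain ⟨a, ha1, ha2⟩ := hcov ξ hξ
  have h2n : (0:ℝ) < 2^n := by positivity
  refine le_trans ?_ (hf1 ξ a (2^n * ξ i0 - a) (by ring) ?_ ?_)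
  · have h1 := hR ξ hξ
    have : ‖ξ‖^2 ≤ R^2 := by gcongr
    gcongr ?_ / 2
    refine Real.exp_le_exp.2 ?_
    have := Real.pi_pos
    nlinarith
  · rw [div_le_iff₀ h2n] at ha1; linarith
  · have e1 : (2:ℝ)^n * ξ i0 - a ≤ 2^n/2^m := by
      have : (2:ℝ)^n * ξ i0 ≤ 2^n * ((a:ℝ)/2^n + 1/2^m) := by gcongr
      have e : (2:ℝ)^n * ((a:ℝ)/2^n + 1/2^m) = a + 2^n/2^m := by field_simp
      linarith
    have e2 : (8 * K : ℝ) * 2^n ≤ 2^m := by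
      have h1 : (2:ℝ)^(n + (K+3)) ≤ 2^m := pow_le_pow_right₀ (by norm_num) hm
      have h2 : (K:ℝ) ≤ 2^K := by exact_mod_cast (Nat.lt_two_pow_self (n := K)).le
      rw [pow_add, pow_add] at h1
      nlinarith
    have e3 : K * ((2:ℝ)^n/2^m) ≤ 1/8 := by
      rw [← mul_div_assoc, div_le_iff₀ (by positivity)]; linarith
    exact le_trans (by gcongr) e3

end PR

namespace PR
variable {d : ℕ}

lemma isCompact_ofLp (K : Set (Fin d → ℝ)) (hK : IsCompact K) :
    IsCompact ((WithLp.ofLp : EuclideanSpace ℝ (Fin d) → _) ⁻¹' K) :=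
  (EuclideanSpace.equiv (Fin d) ℝ).toHomeomorph.isCompact_preimage.2 hK

lemma exists_E2 (hd : 0 < d) (α : ℝ) (hα0 : 0 ≤ α) (hαd : α ≤ d) :
    ∃ E : Set (EuclideanSpace ℝ (Fin d)), IsCompact E ∧ E.Nonempty ∧ dimH E = ENNReal.ofReal α ∧
      ∀ p, 1 < p → p ≤ 2 → ¬ Good E p := by
  have hd0 : (0:ℝ) < d := by exact_mod_cast hd
  rcases hα0.eq_or_lt with rfl | hα
  · refine ⟨{0}, isCompact_singleton, Set.singleton_nonempty _, by simp, fun p hp hp2 => ?_⟩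
    refine not_good_cover _ (measurableSet_singleton _) 0 p hp.le hp2 ?_ fun B => ?_
    · have : p⁻¹ < 1 := inv_lt_one_of_one_lt₀ hp
      have : 0 < 1 - p⁻¹ := by linarith
      positivity
    · refine ⟨B + 1, {0}, by omega, by omega, by simp, ?_⟩
      intro ξ hξ
      rw [Set.mem_singleton_iff] at hξ
      subst hξ
      exact ⟨0, by simp, fun j => by simp⟩
  · obtain ⟨K, h, hKc, hK01, hmap, hhol, hcov⟩ := exists_K2 (α/d) (by positivity) (by rw [div_le_one hd0]; exact hαd)
    have hdα : (d:ℝ) * (α/d) = α := by field_simp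
    have hKeq : {ξ : Fin d → ℝ | ∀ j, ξ j ∈ K} = Set.univ.pi fun _ => K := by
      ext ξ; simp
    have hc : IsCompact {ξ : Fin d → ℝ | ∀ j, ξ j ∈ K} := by
      rw [hKeq]; exact isCompact_univ_pi fun _ => hKc
    have hcE := isCompact_ofLp _ hc
    refine ⟨_, hcE, ?_, ?_, fun p hp hp2 => ?_⟩
    · exact ⟨WithLp.toLp 2 fun _ => h 0, fun j => hmap ⟨le_rfl, one_pos⟩⟩
    · rw [dimH_ofLp]
      refine le_antisymm ?_ ?_
      · have := K2_dim_le (d := d) (α/d) (by positivity) K hcov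
        rwa [hdα] at this
      · have := K2_dim_ge (d := d) (α/d) (by positivity) K h hmap hhol
        rwa [hdα] at this
    · obtain ⟨R, hR⟩ := hcE.isBounded.exists_norm_le
      refine not_good_lattice _ hcE.measurableSet ⟨0, hd⟩ R hR p hp fun B => ?_
      obtain ⟨n, m, hn, hm, -, h⟩ := hcov 1 one_pos B
      refine ⟨n, m, hn, hm, fun ξ hξ => ?_⟩
      obtain ⟨a, -, ha⟩ := h _ (hξ ⟨0, hd⟩)
      exact ⟨a, ha⟩

lemma exists_E1 (hd : 0 < d) (β : ℝ) (hβ : 0 < β) (hβd : β ≤ d) :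
    ∃ E : Set (EuclideanSpace ℝ (Fin d)), IsCompact E ∧ dimH E ≤ ENNReal.ofReal β ∧
      (∀ p, 1 ≤ p → p * (2 - β/d) < 2 → Good E p) ∧
      ∀ p, 1 ≤ p → p ≤ 2 → β < 2 * d * (1 - p⁻¹) → ¬ Good E p := by
  have hd0 : (0:ℝ) < d := by exact_mod_cast hd
  obtain ⟨K, μ, hKc, hμ, hμK, -, hcov, hsq⟩ := core hd β hβ hβd
  have hcov' : ∀ B : ℕ, ∃ (N : ℕ) (S : Finset (Fin d → ℤ)), B ≤ N ∧ 1 ≤ N ∧ (S.card : ℝ) ≤ (N : ℝ) ^ β ∧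
      ∀ ξ ∈ K, ∃ s ∈ S, ∀ j, |N * ξ j - s j| ≤ 1 := by
    intro B
    classical
    obtain ⟨N, M, s, hB, hN, hM, hs⟩ := hcov B
    refine ⟨N, Finset.univ.image fun i j => ((s i j : ℕ) : ℤ), hB, hN, ?_, fun ξ hξ => ?_⟩
    · refine le_trans ?_ hM
      exact_mod_cast Finset.card_image_le.trans (by simp)
    · obtain ⟨i, hi⟩ := hs ξ hξ
      refine ⟨_, Finset.mem_image_of_mem _ (Finset.mem_univ i), fun j => ?_⟩
      obtain ⟨h1, h2⟩ := hi j
      push_cast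
      rw [abs_le]; constructor <;> linarith
  have hcE := isCompact_ofLp _ hKc
  refine ⟨_, hcE, ?_, fun p hp hpβ => ?_, fun p hp hp2 hβp => ?_⟩
  · rw [dimH_ofLp]; exact dimH_cover K β hβ.le hcov'
  · have hp0 : 0 < p := by linarith
    set ε := (2 - p * (2 - β/d)) / (2 * p) with hε
    have hε0 : 0 < ε := by
      have : 0 < 2 - p * (2 - β/d) := by linarith
      positivity
    obtain ⟨C, hC, hsq⟩ := hsq ε hε0
    have hb1 : β/d ≤ 1 := by rw [div_le_one hd0]; exact hβd
    refine good_of_sq K hKc.measurableSet μ hμK C (1 - β/d + ε) p hC (by linarith) hp ?_ hsq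
    have : p * ε = (2 - p * (2 - β/d)) / 2 := by rw [hε]; field_simp
    nlinarith
  · exact not_good_cover _ hcE.measurableSet β p hp hp2 hβp fun B => by
      obtain ⟨N, S, h1, h2, h3, h4⟩ := hcov' B
      exact ⟨N, S, h1, h2, h3, fun ξ hξ => h4 _ hξ⟩

lemma good_or (hd : 0 < d) (β : ℝ) (hβ : 0 ≤ β) (hβd : β ≤ d) :
    ∃ E : Set (EuclideanSpace ℝ (Fin d)), IsCompact E ∧ dimH E ≤ ENNReal.ofReal β ∧
      (∀ p, 1 ≤ p → p * (2 - β/d) < 2 → Good E p) ∧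
      ∀ p, 1 ≤ p → p ≤ 2 → β < 2 * d * (1 - p⁻¹) → ¬ Good E p := by
  rcases hβ.eq_or_lt with rfl | h
  · obtain ⟨E, h1, h2, h3, h4⟩ := exists_E2 hd 0 le_rfl (by positivity)
    refine ⟨E, h1, h3.le, fun p hp hp2 => ?_, fun p hp hp2 hb => ?_⟩
    · rw [zero_div, sub_zero] at hp2; linarith
    · rcases hp.eq_or_lt with rfl | hp
      · simp at hb
      · exact h4 p hp hp2
  · exact exists_E1 hd β h hβd

lemma final (d : ℕ) (hd : 0 < d)
    (α : ℝ) (hα : α ∈ Set.Icc (0 : ℝ) d)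
    (p : ℝ) (hp : p ∈ Set.Icc (1 : ℝ) (2 * d / (2 * d - α))) :
    ∃ E : Set (EuclideanSpace ℝ (Fin d)),
      IsCompact E ∧ dimH E = ENNReal.ofReal α ∧ sSup {p : ℝ | p ∈ Set.Icc (1:ℝ) 2 ∧ Good E p} = p := by
  obtain ⟨hα0, hαd⟩ := hα
  obtain ⟨hp1, hpα⟩ := hp
  have hd0 : (0:ℝ) < d := by exact_mod_cast hd
  have hp0 : 0 < p := by linarith
  have hpa : p * (2 * d - α) ≤ 2 * d := by rwa [le_div_iff₀ (by linarith)] at hpα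
  have hp2 : p ≤ 2 := by nlinarith
  set β : ℝ := 2 * d * (1 - p⁻¹) with hβ
  have hpi : p⁻¹ ≤ 1 := inv_le_one_of_one_le₀ hp1
  have hβ0 : 0 ≤ β := by have : 0 ≤ 1 - p⁻¹ := by linarith
                         positivity
  have hβα : β ≤ α := by
    have h1 : (2 * d - α) ≤ 2 * d * p⁻¹ := by
      rw [← div_eq_mul_inv, le_div_iff₀ hp0]; linarith
    rw [hβ]; linarith
  have hβp : 2 - β/d = 2 * p⁻¹ := by rw [hβ]; field_simp; ring
  obtain ⟨E1, hc1, hdim1, hg1, hn1⟩ := good_or hd β hβ0 (hβα.trans hαd)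
  obtain ⟨E2, hc2, hne2, hdim2, hn2⟩ := exists_E2 hd α hα0 hαd
  refine ⟨E1 ∪ E2, hc1.union hc2, ?_, ?_⟩
  · rw [dimH_union, hdim2]
    exact max_eq_right (hdim1.trans (ENNReal.ofReal_le_ofReal hβα))
  · set X := {p : ℝ | p ∈ Set.Icc (1:ℝ) 2 ∧ Good (E1 ∪ E2) p} with hX
    have hbdd : BddAbove X := ⟨2, fun x hx => hx.1.2⟩
    have h1X : (1:ℝ) ∈ X := ⟨⟨le_rfl, by norm_num⟩, good_one (hne2.mono Set.subset_union_right)⟩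
    refine le_antisymm (csSup_le ⟨1, h1X⟩ ?_) ?_
    · rintro x ⟨⟨hx1, hx2⟩, hx⟩
      by_contra hcon
      push Not at hcon
      rcases good_union hx with h | h
      · refine hn1 x hx1 hx2 ?_ h
        rw [hβ]
        have : x⁻¹ < p⁻¹ := inv_strictAnti₀ hp0 hcon
        gcongr
      · exact hn2 x (by linarith) hx2 h
    · have h1 := le_csSup hbdd h1X
      by_contra hcon
      push Not at hcon
      set y := (sSup X + p) / 2 with hy
      have hyX : y ∈ X := by
        refine ⟨⟨by linarith, by linarith⟩, good_mono Set.subset_union_left (hg1 y (by linarith) ?_)⟩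
        rw [hβp]
        have : y < p := by linarith
        calc y * (2 * p⁻¹) < p * (2 * p⁻¹) := by gcongr
          _ = 2 := by field_simp
      have := le_csSup hbdd hyX
      linarith

end PR

/-- For every `α ∈ [0,d]` and `p ∈ [1, 2d/(2d-α)]` there is a compact set `E ⊆ ℝ^d` of
Hausdorff dimension `α` with `p_res(E) = p`. -/
theorem exists_compact_dimH_eq_pres_eq (d : ℕ) (hd : 0 < d)
    (α : ℝ) (hα : α ∈ Set.Icc (0 : ℝ) d)
    (p : ℝ) (hp : p ∈ Set.Icc (1 : ℝ) (2 * d / (2 * d - α))) :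
    ∃ E : Set (EuclideanSpace ℝ (Fin d)),
      IsCompact E ∧ dimH E = ENNReal.ofReal α ∧ pres E = p := by
  obtain ⟨E, h1, h2, h3⟩ := PR.final d hd α hα p hp
  exact ⟨E, h1, h2, h3⟩
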